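/- arXiv:2509.07247 — 3 statements merged into one kernel-verified Lean document; each statement's English description precedes it below -/
import Mathlib

section
/- If closed sets A₁, ..., A_m ⊂ S^d satisfy A_i ∩ (-A_i) = ∅ for all i and ⋃_{i=1}^m A_i = S^d (the A_i alone cover the sphere), then at least ⌈(d+3)/2⌉ of the A_i have a common point, i.e., there is a subset S ⊆ [m] with |S| = ⌈(d+3)/2⌉ and ⋂_{i∈S} A_i ≠ ∅. -/
open Pointwise

/-!
Choose for each point `x` an index `f x` with `x ∈ A (f x)`. By a Lebesgue number argument, if no
`(d + 4) / 2` of the sets meet, then each small simplex of the sphere carries at most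
`t = ⌊(d + 2) / 2⌋` labels, and nearby points `x`, `y` satisfy `f x ≠ f (-y)`. So each `x` has two
consistent signed labels, `+ f x` and `- f (-x)`. Fan's argument, for mod 2 chains of small
simplices, shows that a symmetric choice between the two gives an odd number of alternating
simplices on the sphere; since a simplex carries at most `2 t < d + 3` signed labels, the number of
alternating simplices in the prism from the labelling `- f (-x)` to the labelling `+ f x` is then
odd as well.

That number is a sum over pairs `N`, `Q` of sets of labels of the cup product, evaluated on the
sphere, of the cochains dual to `N` and `Q` pulled back along `x ↦ f (-x)` and `f`. A nonzero term
needs `|N| + |Q| = d + 2` and `|N|, |Q| ≤ t`, hence `d = 2 p` and `|N| = |Q| = p + 1`. But then both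
factors are `p`-cocycles at small scales, as no simplex has more than `p + 1` labels, and their cup
product vanishes because the sphere of dimension `2 p` has no cohomology in degree `p`.
-/

namespace LusternikSchnirelman

open Finsupp (single)

section Chains

variable {X Y Z : Type*}

/-- The augmented complex of ordered chains mod 2 on a vertex set `X`: a list of vertices of length
`n + 1` is an `n`-simplex (possibly degenerate), and the empty list is the simplex of dimension
`-1`. -/
abbrev Chain (X : Type*) := List X →₀ ZMod 2

theorem linearMap_congr {M : Type*} [AddCommMonoid M] [Module (ZMod 2) M]
    {F G : Chain X →ₗ[ZMod 2] M} (h : ∀ l, F (single l 1) = G (single l 1)) (c : Chain X) :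
    F c = G c :=
  DFunLike.congr_fun (Finsupp.lhom_ext' fun l => LinearMap.ext_ring (h l)) c

/-- The cone with apex `x`, prepending `x` to every simplex. -/
noncomputable def cone (x : X) : Chain X →ₗ[ZMod 2] Chain X :=
  Finsupp.lmapDomain _ _ (List.cons x)

/-- The chain map induced by a map of vertices. -/
noncomputable def map (f : X → Y) : Chain X →ₗ[ZMod 2] Chain Y :=
  Finsupp.lmapDomain _ _ (List.map f)

/-- The sum of the codimension one faces of a simplex. -/
noncomputable def faces : List X → Chain X
  | [] => 0
  | x :: l => single l 1 + cone x (faces l)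

/-- The augmented simplicial boundary operator. -/
noncomputable def boundary : Chain X →ₗ[ZMod 2] Chain X :=
  Finsupp.linearCombination (ZMod 2) faces

@[simp]
theorem cone_single (x : X) (l : List X) (a : ZMod 2) :
    cone x (single l a) = single (x :: l) a := by
  simp [cone]

@[simp]
theorem map_single (f : X → Y) (l : List X) (a : ZMod 2) :
    map f (single l a) = single (l.map f) a := by
  simp [map]

@[simp]
theorem boundary_single (l : List X) : boundary (single l 1) = faces l := by
  simp [boundary]

theorem boundary_cone (x : X) (c : Chain X) : boundary (cone x c) = c + cone x (boundary c) :=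
  linearMap_congr (F := boundary ∘ₗ cone x) (G := .id + cone x ∘ₗ boundary)
    (fun l => by simp [faces]) c

theorem map_cone (f : X → Y) (x : X) (c : Chain X) : map f (cone x c) = cone (f x) (map f c) :=
  linearMap_congr (F := map f ∘ₗ cone x) (G := cone (f x) ∘ₗ map f) (fun l => by simp) c

theorem map_faces (f : X → Y) (l : List X) : map f (faces l) = faces (l.map f) := by
  induction l with
  | nil => simp [faces]
  | cons x l ih => simp [faces, map_cone, ih]

theorem boundary_map (f : X → Y) (c : Chain X) : boundary (map f c) = map f (boundary c) :=
  linearMap_congr (F := boundary ∘ₗ map f) (G := map f ∘ₗ boundary)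
    (fun l => by simp [map_faces]) c

theorem map_map (g : Y → Z) (f : X → Y) (c : Chain X) : map g (map f c) = map (g ∘ f) c :=
  linearMap_congr (F := map g ∘ₗ map f) (G := map (g ∘ f)) (fun l => by simp) c

theorem map_map_of_involutive {T : X → X} (hT : T.Involutive) (c : Chain X) :
    map T (map T c) = c :=
  linearMap_congr (F := map T ∘ₗ map T) (G := .id) (fun l => by simp [hT.comp_self]) c

section Join

variable (f g h : X → Y) (A B : Chain X →ₗ[ZMod 2] Chain Y)

/-- The value of `join f A` on a simplex `[x₀, …, xₙ]`, that is, the sum over `i` of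
`f x₀ * … * f xᵢ * A [xᵢ, …, xₙ]`. -/
noncomputable def joinSimplex : List X → Chain Y
  | [] => 0
  | x :: l => cone (f x) (A (single (x :: l) 1) + joinSimplex l)

/-- The join of a vertex map `f` with a linear map `A` of chains. It turns a chain map `A` into a
chain homotopy between `f` and `A`, and thereby provides all prism operators. -/
noncomputable def join : Chain X →ₗ[ZMod 2] Chain Y :=
  Finsupp.linearCombination (ZMod 2) (joinSimplex f A)

/-- The prism operator, the standard chain homotopy between the maps induced by `f` and `g`. -/
noncomputable def prism : Chain X →ₗ[ZMod 2] Chain Y := join f (map g)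

/-- The prism operator on triangles of maps, a homotopy between the prism operators of the three
edges. -/
noncomputable def doublePrism : Chain X →ₗ[ZMod 2] Chain Y := join f (prism g h)

@[simp]
theorem join_single_nil : join f A (single [] 1) = 0 := by
  simp [join, joinSimplex]

@[simp]
theorem join_single_cons (x : X) (l : List X) :
    join f A (single (x :: l) 1) = cone (f x) (A (single (x :: l) 1) + join f A (single l 1)) := by
  simp [join, joinSimplex]

theorem join_cone (x : X) (c : Chain X) :
    join f A (cone x c) = cone (f x) (A (cone x c) + join f A c) :=
  linearMap_congr (F := join f A ∘ₗ cone x) (G := cone (f x) ∘ₗ (A ∘ₗ cone x + join f A))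
    (fun l => by simp) c

theorem join_zero (c : Chain X) : join f 0 c = 0 :=
  linearMap_congr (G := 0) (fun l => by induction l <;> simp_all) c

theorem join_add (c : Chain X) : join f (A + B) c = join f A c + join f B c :=
  linearMap_congr (G := join f A + join f B)
    (fun l => by
      induction l with
      | nil => simp
      | cons x l ih =>
        simp only [join_single_cons, ih, LinearMap.add_apply, map_add]
        abel) c

variable {A B}

theorem boundary_join {a : ZMod 2} (hA : ∀ c, boundary (A c) = A (boundary c) + B c)
    (hnil : A (single [] 1) = a • single [] 1) (c : Chain X) :
    boundary (join f A c) = join f A (boundary c) + join f B c + A c + a • map f c :=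
  linearMap_congr (F := boundary ∘ₗ join f A)
    (G := join f A ∘ₗ boundary + join f B + A + a • map f) (fun l => by
      simp only [LinearMap.comp_apply, LinearMap.add_apply, LinearMap.smul_apply, boundary_single,
        map_single]
      induction l with
      | nil => simp [faces, hnil, ZModModule.add_self]
      | cons x l ih =>
        have cancel (c : Chain Y) : (2 : ℤ) • c = 0 := by rw [two_zsmul, ZModModule.add_self]
        simp only [join_single_cons, boundary_cone, map_add, ih, hA, boundary_single, faces,
          join_cone, List.map_cons, map_smul, cone_single]
        rw [← sub_eq_zero]
        abel_nf
        simp only [cancel]) c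

theorem boundary_prism (c : Chain X) :
    boundary (prism f g c) = prism f g (boundary c) + map f c + map g c := by
  rw [prism, boundary_join f (A := map g) (B := 0) (a := 1)
    (fun c => by simp [boundary_map]) (by simp), join_zero, one_smul]
  abel

theorem boundary_doublePrism (c : Chain X) :
    boundary (doublePrism f g h c) =
      doublePrism f g h (boundary c) + prism f g c + prism g h c + prism f h c := by
  rw [doublePrism, boundary_join f (A := prism g h) (B := map g + map h) (a := 0)
    (fun c => by simp [boundary_prism, add_assoc]) (by simp [prism]), join_add, zero_smul, add_zero]
  simp only [prism]
  abel

theorem map_prism (u : Y → Z) (c : Chain X) :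
    map u (prism f g c) = prism (u ∘ f) (u ∘ g) c :=
  linearMap_congr (F := map u ∘ₗ prism f g)
    (fun l => by induction l <;> simp_all [prism, map_cone]) c

theorem prism_map (u : Z → X) (c : Chain Z) :
    prism f g (map u c) = prism (f ∘ u) (g ∘ u) c :=
  linearMap_congr (F := prism f g ∘ₗ map u)
    (fun l => by induction l <;> simp_all [prism]) c

end Join

end Chains

section Supports

variable {X Y : Type*} {G G' : Set (List X)} {c : Chain X}

/-- The chains all of whose simplices belong to `G`. -/
def chainsOn (G : Set (List X)) : Submodule (ZMod 2) (Chain X) :=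
  Finsupp.supported (ZMod 2) (ZMod 2) G

theorem single_mem_chainsOn {l : List X} (hl : l ∈ G) : single l 1 ∈ chainsOn G :=
  Finsupp.single_mem_supported _ _ hl

theorem chainsOn_mono (h : G ⊆ G') : chainsOn G ≤ chainsOn G' :=
  Finsupp.supported_mono h

theorem mem_chainsOn_inter (h : c ∈ chainsOn G) (h' : c ∈ chainsOn G') :
    c ∈ chainsOn (G ∩ G') := by
  rw [chainsOn, Finsupp.supported_inter]
  exact ⟨h, h'⟩

theorem chainsOn_le {N : Submodule (ZMod 2) (Chain X)} (h : ∀ l ∈ G, single l 1 ∈ N) :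
    chainsOn G ≤ N := by
  rw [chainsOn, Finsupp.supported_eq_span_single, Submodule.span_le]
  rintro _ ⟨l, hl, rfl⟩
  exact h l hl

theorem apply_mem_chainsOn {G' : Set (List Y)} {F : Chain X →ₗ[ZMod 2] Chain Y}
    (h : ∀ l ∈ G, F (single l 1) ∈ chainsOn G') (hc : c ∈ chainsOn G) : F c ∈ chainsOn G' :=
  chainsOn_le (N := (chainsOn G').comap F) h hc

theorem linearMap_congr_chainsOn {M : Type*} [AddCommMonoid M] [Module (ZMod 2) M]
    {F F' : Chain X →ₗ[ZMod 2] M} (h : ∀ l ∈ G, F (single l 1) = F' (single l 1))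
    (hc : c ∈ chainsOn G) : F c = F' c :=
  chainsOn_le (N := LinearMap.eqLocus F F') h hc

theorem cone_mem_chainsOn (x : X) (h : ∀ l ∈ G, x :: l ∈ G') (hc : c ∈ chainsOn G) :
    cone x c ∈ chainsOn G' :=
  apply_mem_chainsOn (fun l hl => by simpa using single_mem_chainsOn (h l hl)) hc

theorem map_mem_chainsOn {G' : Set (List Y)} (f : X → Y) (h : ∀ l ∈ G, l.map f ∈ G')
    (hc : c ∈ chainsOn G) : map f c ∈ chainsOn G' :=
  apply_mem_chainsOn (fun l hl => by simpa using single_mem_chainsOn (h l hl)) hc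

theorem faces_mem_chainsOn (l : List X) :
    faces l ∈ chainsOn {L | L.Sublist l ∧ L.length + 1 = l.length} := by
  induction l with
  | nil => simp [faces]
  | cons x l ih =>
    refine Submodule.add_mem _ (single_mem_chainsOn (by simp)) (cone_mem_chainsOn x ?_ ih)
    rintro L ⟨hLl, hlen⟩
    exact ⟨hLl.cons_cons x, by simp [hlen]⟩

/-- The simplices with `k` more vertices than `l`, each of which lies in the carrier `S x` of some
vertex `x` of `l`. -/
def carrier (S : X → Set Y) (k : ℕ) (l : List X) : Set (List Y) :=
  {L | L.length = l.length + k ∧ ∀ v ∈ L, ∃ x ∈ l, v ∈ S x}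

theorem map_single_mem_carrier {f : X → Y} {S : X → Set Y} (hf : ∀ x, f x ∈ S x) (l : List X) :
    map f (single l 1) ∈ chainsOn (carrier S 0 l) := by
  rw [map_single]
  refine single_mem_chainsOn ⟨by simp, fun v hv => ?_⟩
  obtain ⟨x, hx, rfl⟩ := List.mem_map.1 hv
  exact ⟨x, hx, hf x⟩

theorem join_single_mem_carrier {f : X → Y} {S : X → Set Y} {A : Chain X →ₗ[ZMod 2] Chain Y}
    {k : ℕ} (hf : ∀ x, f x ∈ S x) (hA : ∀ l, A (single l 1) ∈ chainsOn (carrier S k l))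
    (l : List X) : join f A (single l 1) ∈ chainsOn (carrier S (k + 1) l) := by
  induction l with
  | nil => simp
  | cons x l ih =>
    rw [join_single_cons, map_add]
    refine Submodule.add_mem _ (cone_mem_chainsOn _ ?_ (hA _)) (cone_mem_chainsOn _ ?_ ih)
    · rintro L ⟨hlen, hL⟩
      exact ⟨by simp [hlen, add_assoc], List.forall_mem_cons.2 ⟨⟨x, by simp, hf x⟩, hL⟩⟩
    · rintro L ⟨hlen, hL⟩
      refine ⟨by simp [hlen]; omega, List.forall_mem_cons.2 ⟨⟨x, by simp, hf x⟩, fun v hv => ?_⟩⟩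
      obtain ⟨y, hy, hvy⟩ := hL v hv
      exact ⟨y, List.mem_cons_of_mem x hy, hvy⟩

theorem prism_single_mem_carrier {f g : X → Y} {S : X → Set Y} (hf : ∀ x, f x ∈ S x)
    (hg : ∀ x, g x ∈ S x) (l : List X) :
    prism f g (single l 1) ∈ chainsOn (carrier S 1 l) :=
  join_single_mem_carrier hf (map_single_mem_carrier hg) l

theorem doublePrism_single_mem_carrier {f g h : X → Y} {S : X → Set Y} (hf : ∀ x, f x ∈ S x)
    (hg : ∀ x, g x ∈ S x) (hh : ∀ x, h x ∈ S x) (l : List X) :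
    doublePrism f g h (single l 1) ∈ chainsOn (carrier S 2 l) :=
  join_single_mem_carrier hf (prism_single_mem_carrier hg hh) l

end Supports

section Pairing

variable {X Y : Type*}

/-- Cochains mod 2 on ordered simplices. -/
abbrev Cochain (X : Type*) := List X → ZMod 2

/-- The evaluation of cochains on chains. -/
noncomputable def pairing : Cochain X →ₗ[ZMod 2] Chain X →ₗ[ZMod 2] ZMod 2 :=
  Finsupp.bilinearCombination (ZMod 2) (ZMod 2)

@[simp]
theorem pairing_single (φ : Cochain X) (l : List X) : pairing φ (single l 1) = φ l := by
  simp [pairing, Finsupp.bilinearCombination_apply]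

theorem pairing_map (φ : Cochain Y) (u : X → Y) (c : Chain X) :
    pairing φ (map u c) = pairing (fun l => φ (l.map u)) c :=
  linearMap_congr (F := pairing φ ∘ₗ map u) (fun l => by simp) c

theorem pairing_cone (φ : Cochain X) (x : X) (c : Chain X) :
    pairing φ (cone x c) = pairing (fun l => φ (x :: l)) c :=
  linearMap_congr (F := pairing φ ∘ₗ cone x) (fun l => by simp) c

theorem pairing_congr {φ ψ : Cochain X} {G : Set (List X)} {c : Chain X} (hc : c ∈ chainsOn G)
    (h : ∀ l ∈ G, φ l = ψ l) : pairing φ c = pairing ψ c :=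
  linearMap_congr_chainsOn (fun l hl => by simpa using h l hl) hc

theorem pairing_eq_zero {φ : Cochain X} {G : Set (List X)} {c : Chain X} (hc : c ∈ chainsOn G)
    (h : ∀ l ∈ G, φ l = 0) : pairing φ c = 0 := by
  rw [pairing_congr (ψ := 0) hc h, map_zero, LinearMap.zero_apply]

/-- The simplicial coboundary operator. -/
noncomputable def coboundary : Cochain X →ₗ[ZMod 2] Cochain X :=
  LinearMap.pi fun l => pairing.flip (faces l)

theorem coboundary_apply (φ : Cochain X) (l : List X) : coboundary φ l = pairing φ (faces l) := rfl

theorem pairing_boundary (φ : Cochain X) (c : Chain X) :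
    pairing φ (boundary c) = pairing (coboundary φ) c :=
  linearMap_congr (F := pairing φ ∘ₗ boundary) (fun l => by simp [coboundary_apply]) c

@[simp]
theorem coboundary_nil (φ : Cochain X) : coboundary φ [] = 0 := by
  simp [coboundary_apply, faces]

theorem coboundary_cons (φ : Cochain X) (x : X) (l : List X) :
    coboundary φ (x :: l) = φ l + coboundary (fun L => φ (x :: L)) l := by
  simp [coboundary_apply, faces, pairing_cone]

theorem coboundary_map (φ : Cochain Y) (u : X → Y) (l : List X) :
    coboundary φ (l.map u) = coboundary (fun L => φ (L.map u)) l := by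
  rw [coboundary_apply, ← map_faces, pairing_map, coboundary_apply]

theorem coboundary_eq_zero {φ : Cochain X} {l : List X}
    (h : ∀ L, L.Sublist l → L.length + 1 = l.length → φ L = 0) : coboundary φ l = 0 :=
  pairing_eq_zero (faces_mem_chainsOn l) fun L hL => h L hL.1 hL.2

end Pairing

section Alternating

variable {ι : Type*} {φ : Cochain ι}

/-- A cochain is alternating if it is invariant under permutations of the vertices (there are no
signs mod 2) and vanishes on degenerate simplices. -/
structure IsAlternatingCochain (φ : Cochain ι) : Prop where
  perm {l l' : List ι} : l.Perm l' → φ l = φ l'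
  not_nodup {l : List ι} : ¬ l.Nodup → φ l = 0

theorem coboundary_perm {l l' : List ι} (h : l.Perm l') :
    ∀ {φ : Cochain ι}, (∀ {a b : List ι}, a.Perm b → φ a = φ b) →
      coboundary φ l = coboundary φ l' := by
  induction h with
  | nil => exact fun _ => rfl
  | cons x h ih =>
    intro φ hφ
    rw [coboundary_cons, coboundary_cons, hφ h, ih fun hab => hφ (hab.cons x)]
  | swap x y l =>
    intro φ hφ
    have hxy : (fun L => φ (y :: x :: L)) = fun L => φ (x :: y :: L) :=
      funext fun L => hφ (List.Perm.swap x y L)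
    simp only [coboundary_cons, hxy]
    ring
  | trans _ _ ih ih' => exact fun hφ => (ih hφ).trans (ih' hφ)

theorem IsAlternatingCochain.coboundary (hφ : IsAlternatingCochain φ) :
    IsAlternatingCochain (coboundary φ) where
  perm h := coboundary_perm h hφ.perm
  not_nodup {l} hl := by
    obtain ⟨x, hx⟩ := List.exists_duplicate_iff_not_nodup.2 hl
    obtain ⟨l', hl'⟩ := (List.duplicate_iff_sublist.1 hx).exists_perm_append
    have hxx : (fun L => φ (x :: x :: L)) = 0 := funext fun L => hφ.not_nodup (by simp)
    rw [coboundary_perm hl' hφ.perm, List.cons_append, List.cons_append, List.nil_append,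
      coboundary_cons, coboundary_cons, hxx, map_zero, Pi.zero_apply, add_zero,
      ZModModule.add_self]

/-- The alternating cochain dual to the simplex with vertex set `Q`. -/
noncomputable def dualCochain (Q : Finset ι) : Cochain ι := Set.indicator {l | l.Perm Q.toList} 1

theorem dualCochain_of_perm {Q : Finset ι} {l : List ι} (h : l.Perm Q.toList) :
    dualCochain Q l = 1 := by
  simp [dualCochain, h]

theorem dualCochain_of_not_perm {Q : Finset ι} {l : List ι} (h : ¬ l.Perm Q.toList) :
    dualCochain Q l = 0 := by
  simp [dualCochain, h]

theorem isAlternatingCochain_dualCochain (Q : Finset ι) :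
    IsAlternatingCochain (dualCochain Q) where
  perm {l l'} h := by
    by_cases hl : l.Perm Q.toList
    · rw [dualCochain_of_perm hl, dualCochain_of_perm (h.symm.trans hl)]
    · rw [dualCochain_of_not_perm hl, dualCochain_of_not_perm fun hl' => hl (h.trans hl')]
  not_nodup hl := dualCochain_of_not_perm fun h => hl (h.nodup_iff.2 Q.nodup_toList)

theorem dualCochain_of_length_ne {Q : Finset ι} {l : List ι} (h : l.length ≠ Q.card) :
    dualCochain Q l = 0 :=
  dualCochain_of_not_perm fun hl => h (by simpa using hl.length_eq)

theorem coboundary_dualCochain {Q : Finset ι} {l : List ι} (h : l.Nodup → l.length ≤ Q.card) :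
    coboundary (dualCochain Q) l = 0 := by
  by_cases hl : l.Nodup
  · exact coboundary_eq_zero fun L _ hL => dualCochain_of_length_ne (by have := h hl; omega)
  · exact (isAlternatingCochain_dualCochain Q).coboundary.not_nodup hl

theorem IsAlternatingCochain.eq_sum [Fintype ι] (hφ : IsAlternatingCochain φ) (l : List ι) :
    φ l = ∑ Q : Finset ι, φ Q.toList * dualCochain Q l := by
  classical
  by_cases hl : l.Nodup
  · have hperm : l.Perm l.toFinset.toList := (List.toFinset_toList hl).symm
    rw [Finset.sum_eq_single l.toFinset, dualCochain_of_perm hperm, mul_one, hφ.perm hperm]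
    · intro Q _ hQ
      rw [dualCochain_of_not_perm, mul_zero]
      rintro h
      exact hQ (by ext x; rw [List.mem_toFinset, h.mem_iff, Finset.mem_toList])
    · simp
  · simp [hφ.not_nodup hl, (isAlternatingCochain_dualCochain _).not_nodup hl]

end Alternating

section SignPart

variable {X : Type*}

/-- The vertices of a signed simplex carrying the sign `s`. -/
def signPart (s : Bool) (M : List (X × Bool)) : List X := (M.filter (·.2 == s)).map Prod.fst

theorem signPart_cons (s : Bool) (v : X × Bool) (M : List (X × Bool)) :
    signPart s (v :: M) = if v.2 = s then v.1 :: signPart s M else signPart s M := by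
  unfold signPart
  by_cases h : v.2 = s <;> simp [h]

theorem signPart_map {Y : Type*} (s t : Bool) (w : Y → X) (l : List Y) :
    signPart s (l.map fun y => (w y, t)) = if t = s then l.map w else [] := by
  induction l with
  | nil => simp [signPart]
  | cons y l ih =>
    rw [List.map_cons, signPart_cons, ih]
    split_ifs <;> rfl

theorem mem_signPart {s : Bool} {M : List (X × Bool)} {x : X} :
    x ∈ signPart s M ↔ (x, s) ∈ M := by
  simp [signPart]

theorem perm_signPart (M : List (X × Bool)) :
    M.Perm ((signPart true M).map (·, true) ++ (signPart false M).map (·, false)) := by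
  induction M with
  | nil => simp [signPart]
  | cons v M ih =>
    obtain ⟨i, _ | _⟩ := v
    · simpa [signPart_cons] using (ih.cons _).trans List.perm_middle.symm
    · simpa [signPart_cons] using ih

theorem length_signPart (M : List (X × Bool)) :
    (signPart true M).length + (signPart false M).length = M.length := by
  simpa using (perm_signPart M).length_eq.symm

theorem nodup_signPart {M : List (X × Bool)} (h : M.Nodup) (s : Bool) :
    (signPart s M).Nodup := by
  refine List.Nodup.map_on ?_ (h.filter _)
  rintro ⟨x, a⟩ hx ⟨y, b⟩ hy rfl
  simp_all

end SignPart

section Fan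

variable {ι : Type*} [LinearOrder ι]

/-- A signed simplex is alternating from `s` if its labels increase strictly and its signs
alternate, starting with `s`. -/
def AlternatesFrom : Bool → List (ι × Bool) → Prop
  | _, [] => True
  | s, v :: M => v.2 = s ∧ (∀ w ∈ M, v.1 < w.1) ∧ AlternatesFrom (!s) M

/-- Fan's cochain: it counts the signed simplices that are alternating from `s` after a reordering
of their vertices. -/
noncomputable def fanCochain (s : Bool) : Cochain (ι × Bool) :=
  Set.indicator {M | ∃ M', M'.Perm M ∧ AlternatesFrom s M'} 1

/-- The antipodal map on signed labels. -/
def flipSign (v : ι × Bool) : ι × Bool := (v.1, !v.2)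

theorem AlternatesFrom.pairwise {s : Bool} {M : List (ι × Bool)} (h : AlternatesFrom s M) :
    M.Pairwise (·.1 < ·.1) := by
  induction M generalizing s with
  | nil => simp
  | cons v M ih => exact List.pairwise_cons.2 ⟨h.2.1, ih h.2.2⟩

theorem alternatesFrom_map_flipSign {s : Bool} {M : List (ι × Bool)} :
    AlternatesFrom s (M.map flipSign) ↔ AlternatesFrom (!s) M := by
  induction M generalizing s with
  | nil => simp [AlternatesFrom]
  | cons v M ih =>
    simp only [List.map_cons, AlternatesFrom, ih, List.forall_mem_map, flipSign]
    rw [Bool.not_eq_eq_eq_not]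

theorem isAlternatingCochain_fanCochain (s : Bool) :
    IsAlternatingCochain (fanCochain s : Cochain (ι × Bool)) where
  perm {M N} h := by
    refine Set.indicator_eq_indicator ?_ rfl
    simp only [Set.mem_ofPred_eq]
    exact exists_congr fun M' => and_congr_left' ⟨(·.trans h), (·.trans h.symm)⟩
  not_nodup {M} hM := by
    refine Set.indicator_of_notMem ?_ _
    rintro ⟨M', hperm, hM'⟩
    exact hM (hperm.nodup_iff.1 (hM'.pairwise.imp fun hab => by rintro rfl; exact hab.false))

theorem fanCochain_map_flipSign (s : Bool) (M : List (ι × Bool)) :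
    fanCochain s (M.map flipSign) = fanCochain (!s) M := by
  refine Set.indicator_eq_indicator ?_ rfl
  constructor
  · rintro ⟨M', hperm, hM'⟩
    refine ⟨M'.map flipSign, ?_, by simpa [alternatesFrom_map_flipSign] using hM'⟩
    simpa [List.map_map, Function.comp_def, flipSign] using hperm.map flipSign
  · rintro ⟨M', hperm, hM'⟩
    exact ⟨M'.map flipSign, hperm.map _, alternatesFrom_map_flipSign.2 hM'⟩

theorem fanCochain_of_pairwise {s : Bool} {M : List (ι × Bool)} (h : M.Pairwise (·.1 < ·.1)) :
    fanCochain s M = Set.indicator {M | AlternatesFrom s M} 1 M := by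
  refine Set.indicator_eq_indicator ?_ rfl
  constructor
  · rintro ⟨M', hperm, hM'⟩
    rwa [hperm.eq_of_pairwise (fun a b _ _ hab hba => absurd hab hba.asymm) hM'.pairwise h] at hM'
  · exact fun hM => ⟨M, .refl _, hM⟩

theorem fanCochain_cons {s : Bool} {v : ι × Bool} {M : List (ι × Bool)}
    (h : (v :: M).Pairwise (·.1 < ·.1)) :
    fanCochain s (v :: M) = if v.2 = s then fanCochain (!s) M else 0 := by
  rw [fanCochain_of_pairwise h, fanCochain_of_pairwise (List.pairwise_cons.1 h).2]
  split_ifs with hv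
  · exact Set.indicator_eq_indicator (by simp_all [AlternatesFrom]) rfl
  · exact Set.indicator_of_notMem (fun hM => hv hM.1) _

theorem fanCochain_nil (s : Bool) : fanCochain s ([] : List (ι × Bool)) = 1 := by
  simp [fanCochain, AlternatesFrom]

theorem coboundary_fanCochain_of_pairwise {M : List (ι × Bool)}
    (h : M.Pairwise (·.1 < ·.1)) (s : Bool) :
    coboundary (fanCochain s) M = fanCochain s M + fanCochain (!s) M := by
  induction M generalizing s with
  | nil => simp [fanCochain_nil, ZModModule.add_self]
  | cons v M ih =>
    have hM := (List.pairwise_cons.1 h).2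
    have hfaces : coboundary (fun L => fanCochain s (v :: L)) M =
        if v.2 = s then coboundary (fanCochain (!s)) M else 0 := by
      split_ifs with hv
      · refine pairing_congr (faces_mem_chainsOn M) fun L hL => ?_
        rw [fanCochain_cons (h.sublist (hL.1.cons_cons v)), if_pos hv]
      · refine pairing_eq_zero (faces_mem_chainsOn M) fun L hL => ?_
        rw [fanCochain_cons (h.sublist (hL.1.cons_cons v)), if_neg hv]
    rw [coboundary_cons, hfaces, fanCochain_cons h, fanCochain_cons h, ih hM, Bool.not_not]
    by_cases hv : v.2 = s
    · rw [if_pos hv, if_pos hv, if_neg (by simp [hv])]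
      linear_combination ZModModule.add_self (fanCochain s M)
    · rw [if_neg hv, if_neg hv, if_pos (by rwa [Bool.eq_not])]
      ring

/-- Fan's identity: dropping a vertex of an alternating simplex leaves an alternating simplex only
at its two ends, while a simplex with exactly one sign change missing has two alternating faces. -/
theorem coboundary_fanCochain {M : List (ι × Bool)}
    (hM : ∀ a ∈ M, ∀ b ∈ M, a.1 = b.1 → a.2 = b.2) :
    coboundary (fanCochain true) M = fanCochain true M + fanCochain true (M.map flipSign) := by
  have hfan := isAlternatingCochain_fanCochain (ι := ι)
  rw [fanCochain_map_flipSign]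
  by_cases hn : M.Nodup
  · let r (a b : ι × Bool) : Prop := a.1 ≤ b.1
    have : Std.Total r := ⟨fun a b => le_total _ _⟩
    have : IsTrans _ r := ⟨fun a b c hab hbc => hab.trans hbc⟩
    have hperm := List.perm_insertionSort r M
    have hle := List.pairwise_insertionSort r M
    generalize M.insertionSort r = M' at hperm hle
    have hlt : M'.Pairwise (·.1 < ·.1) := by
      refine List.Pairwise.imp_of_mem ?_ (hle.and (hperm.nodup_iff.2 hn))
      rintro a b ha hb ⟨hab, hne⟩
      exact lt_of_le_of_ne hab fun h =>
        hne (Prod.ext h (hM a (hperm.mem_iff.1 ha) b (hperm.mem_iff.1 hb) h))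
    rw [(hfan _).coboundary.perm hperm.symm, (hfan _).perm hperm.symm, (hfan _).perm hperm.symm,
      coboundary_fanCochain_of_pairwise hlt]
  · rw [(hfan _).coboundary.not_nodup hn, (hfan _).not_nodup hn, (hfan _).not_nodup hn, add_zero]

theorem fanCochain_eq_zero_of_forall_true {M : List (ι × Bool)} (h : ∀ v ∈ M, v.2 = true)
    (hlen : 2 ≤ M.length) : fanCochain true M = 0 := by
  refine Set.indicator_of_notMem ?_ _
  rintro ⟨M', hperm, hM'⟩
  rw [← hperm.length_eq] at hlen
  match M', hperm, hM', hlen with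
  | _ :: b :: _, hperm, hM', _ =>
    have hb := h b (hperm.mem_iff.1 (by simp))
    simp [hM'.2.2.1] at hb

theorem fanCochain_eq_sum [Fintype ι] (M : List (ι × Bool)) :
    fanCochain true M = ∑ Q : Finset ι, ∑ N : Finset ι,
      fanCochain true (Q.toList.map (·, true) ++ N.toList.map (·, false)) *
        (dualCochain N (signPart false M) * dualCochain Q (signPart true M)) := by
  have hfan := isAlternatingCochain_fanCochain (ι := ι) true
  have hpos (b : List (ι × Bool)) :
      IsAlternatingCochain fun a : List ι => fanCochain true (a.map (·, true) ++ b) :=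
    ⟨fun h => hfan.perm ((h.map _).append_right _),
      fun h => hfan.not_nodup fun h' => h (h'.of_append_left.of_map _)⟩
  have hneg (a : List (ι × Bool)) :
      IsAlternatingCochain fun b : List ι => fanCochain true (a ++ b.map (·, false)) :=
    ⟨fun h => hfan.perm ((h.map _).append_left _),
      fun h => hfan.not_nodup fun h' => h (h'.of_append_right.of_map _)⟩
  rw [hfan.perm (perm_signPart M), (hpos _).eq_sum (signPart true M)]
  refine Finset.sum_congr rfl fun Q _ => ?_
  rw [(hneg _).eq_sum (signPart false M), Finset.sum_mul]
  simp only [mul_assoc]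

end Fan

section Cup

variable {X Y : Type*}

/-- The cup product: the front face and the back face share the vertex number `i`. In an augmented
complex the sum has to run over all `i`, since `α` and `β` need not be homogeneous. -/
def cup (β α : Cochain X) : Cochain X :=
  fun l => ∑ i ∈ Finset.range l.length, β (l.take (i + 1)) * α (l.drop i)

@[simp]
theorem cup_nil (β α : Cochain X) : cup β α [] = 0 := by
  simp [cup]

theorem cup_cons (β α : Cochain X) (x : X) (l : List X) :
    cup β α (x :: l) = β [x] * α (x :: l) + cup (fun L => β (x :: L)) α l := by
  rw [cup, List.length_cons, Finset.sum_range_succ', add_comm]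
  simp [cup]

theorem cup_add_left (β β' α : Cochain X) : cup (β + β') α = cup β α + cup β' α := by
  ext l
  simp [cup, add_mul, Finset.sum_add_distrib]

theorem cup_add_right (β α α' : Cochain X) : cup β (α + α') = cup β α + cup β α' := by
  ext l
  simp [cup, mul_add, Finset.sum_add_distrib]

theorem cup_zero_left (α : Cochain X) : cup 0 α = 0 := by
  ext l
  simp [cup]

theorem cup_zero_right (β : Cochain X) : cup β 0 = 0 := by
  ext l
  simp [cup]

theorem cup_congr {β β' α α' : Cochain X} {l : List X} (hβ : ∀ L, L.Sublist l → β L = β' L)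
    (hα : ∀ L, L.Sublist l → α L = α' L) : cup β α l = cup β' α' l :=
  Finset.sum_congr rfl fun i _ => by
    rw [hβ _ (List.take_sublist _ _), hα _ (List.drop_sublist _ _)]

theorem cup_eq_zero_of_length {β α : Cochain X} {a b : ℕ} (hβ : ∀ l, l.length ≠ a → β l = 0)
    (hα : ∀ l, l.length ≠ b → α l = 0) {l : List X} (hl : l.length + 1 ≠ a + b) :
    cup β α l = 0 :=
  Finset.sum_eq_zero fun i hi => by
    rw [Finset.mem_range] at hi
    by_cases ha : i + 1 = a
    · rw [hα (l.drop i) (by rw [List.length_drop]; omega), mul_zero]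
    · rw [hβ (l.take (i + 1)) (by rw [List.length_take]; omega), zero_mul]

theorem coboundary_cup (β α : Cochain X) (l : List X) :
    coboundary (cup β α) l =
      cup (coboundary β) α l + cup β (coboundary α) l + β [] * α l + β l * α [] := by
  induction l generalizing β with
  | nil => simp [ZModModule.add_self, mul_comm]
  | cons x l ih =>
    have hcup : (fun L => cup β α (x :: L)) =
        β [x] • (fun L => α (x :: L)) + cup (fun L => β (x :: L)) α :=
      funext fun L => cup_cons β α x L
    have hδ : (fun L => coboundary β (x :: L)) = β + coboundary fun L => β (x :: L) :=
      funext fun L => coboundary_cons β x L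
    rw [coboundary_cons, hcup, map_add, map_smul, Pi.add_apply, Pi.smul_apply, smul_eq_mul, ih,
      cup_cons, cup_cons, hδ, cup_add_left, Pi.add_apply, coboundary_cons, coboundary_cons,
      coboundary_nil]
    linear_combination -ZModModule.add_self (β [] * α (x :: l))

/-- The external product of two cochains, on simplices whose vertices are coloured by the two
factors. -/
def externalProduct (β α : Cochain X) : Cochain (X × Bool) :=
  fun M => β (signPart false M) * α (signPart true M)

/-- The prism operator between the two inclusions of `X` in `X × Bool` subdivides simplices into the
products of their front and back faces. -/
theorem pairing_externalProduct_prism (β α : Cochain Y) (u w : X → Y) (c : Chain X) :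
    pairing (externalProduct β α) (prism (fun x => (u x, false)) (fun x => (w x, true)) c) =
      pairing (cup (fun l => β (l.map u)) fun l => α (l.map w)) c :=
  linearMap_congr (F := pairing (externalProduct β α) ∘ₗ
      prism (fun x => (u x, false)) fun x => (w x, true)) (fun l => by
    simp only [LinearMap.comp_apply, pairing_single]
    induction l generalizing β with
    | nil => simp [prism]
    | cons x l ih =>
      rw [prism, join_single_cons, ← prism, map_single, map_add, map_add, cone_single,
        pairing_single, pairing_cone, cup_cons]
      have ih' := ih fun L => β (u x :: L)
      unfold externalProduct at ih' ⊢
      simpa [signPart_cons, signPart_map] using ih') c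

end Cup

section Small

variable {X Y : Type*} [PseudoMetricSpace X] {U V : Set X} {δ ε : ℝ} {l l' : List X}

/-- The simplices with vertices in `U` and diameter less than `ε`. -/
def Small (U : Set X) (ε : ℝ) : Set (List X) := {l | ∀ x ∈ l, x ∈ U ∧ ∀ y ∈ l, dist x y < ε}

theorem small_mono (hUV : U ⊆ V) (hδε : δ ≤ ε) : Small U δ ⊆ Small V ε :=
  fun _ hl x hx => ⟨hUV (hl x hx).1, fun y hy => ((hl x hx).2 y hy).trans_le hδε⟩

theorem small_of_subset (h : l' ⊆ l) (hl : l ∈ Small U ε) : l' ∈ Small U ε :=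
  fun x hx => ⟨(hl x (h hx)).1, fun y hy => (hl x (h hx)).2 y (h hy)⟩

theorem map_mem_small {T : X → X} (hT : Isometry T) (hUV : Set.MapsTo T U V)
    (hl : l ∈ Small U ε) : l.map T ∈ Small V ε := by
  refine List.forall_mem_map.2 fun x hx => ⟨hUV (hl x hx).1, List.forall_mem_map.2 fun y hy => ?_⟩
  rw [hT.dist_eq]
  exact (hl x hx).2 y hy

theorem small_of_forall_eq {p : X} (hp : p ∈ U) (hε : 0 < ε) (hl : ∀ x ∈ l, x = p) :
    l ∈ Small U ε :=
  fun x hx => by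
    rw [hl x hx]
    exact ⟨hp, fun y hy => by rwa [hl y hy, dist_self]⟩

theorem prism_single_mem_chainsOn_small {f g : Y → X} {l : List Y}
    (h : l.map f ++ l.map g ∈ Small U ε) :
    prism f g (single l 1) ∈ chainsOn (Small U ε) := by
  refine chainsOn_mono (fun L hL => small_of_subset (fun v hv => ?_) h)
    (prism_single_mem_carrier (S := fun x => {f x, g x}) (by simp) (by simp) l)
  obtain ⟨x, hx, rfl | rfl⟩ := hL.2 v hv
  · exact List.mem_append_left _ (List.mem_map_of_mem hx)
  · exact List.mem_append_right _ (List.mem_map_of_mem hx)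

end Small

section Contractible

variable {X : Type*}

/-- The chain homotopy obtained by composing the prisms of the successive stages `r 0, …, r N` of a
discrete homotopy. -/
noncomputable def prismSum (r : ℕ → X → X) (N : ℕ) : Chain X →ₗ[ZMod 2] Chain X :=
  ∑ j ∈ Finset.range N, prism (r j) (r (j + 1))

theorem boundary_prismSum (r : ℕ → X → X) (N : ℕ) (c : Chain X) :
    boundary (prismSum r N c) = prismSum r N (boundary c) + map (r 0) c + map (r N) c := by
  induction N with
  | zero => simp [prismSum, ZModModule.add_self]
  | succ N ih =>
    have hsucc (c : Chain X) :
        prismSum r (N + 1) c = prismSum r N c + prism (r N) (r (N + 1)) c := by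
      simp [prismSum, Finset.sum_range_succ]
    rw [hsucc, hsucc, map_add, ih, boundary_prism]
    linear_combination (norm := module) ZModModule.add_self (map (r N) c)

variable [PseudoMetricSpace X] {H : Set X}

/-- A quantitative form of acyclicity: at every scale `ε` there is a chain contraction `K` of the
simplices of `H` of a sufficiently small diameter by simplices of `H` of diameter less than `ε`. -/
def ChainContractible (H : Set X) : Prop :=
  ∀ ε > 0, ∃ δ > 0, δ ≤ ε ∧ ∃ K : Chain X →ₗ[ZMod 2] Chain X,
    (∀ l, K (single l 1) ∈ chainsOn {L | L.length = l.length + 1}) ∧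
    ∀ l ∈ Small H δ, K (single l 1) ∈ chainsOn (Small H ε) ∧
      boundary (K (single l 1)) + K (faces l) = single l 1

theorem chainContractible_of_discrete_homotopy {p : X} (hp : p ∈ H)
    (h : ∀ ε > 0, ∃ δ > 0, ∃ (N : ℕ) (r : ℕ → X → X), (∀ x ∈ H, r 0 x = x) ∧
      (∀ x ∈ H, r N x = p) ∧
      ∀ j < N, ∀ l ∈ Small H δ, l.map (r j) ++ l.map (r (j + 1)) ∈ Small H ε) :
    ChainContractible H := by
  intro ε hε
  obtain ⟨δ, hδ, N, r, hr0, hrN, hr⟩ := h ε hε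
  refine ⟨min δ ε, lt_min hδ hε, min_le_right _ _, prismSum r N + cone p ∘ₗ map (r N),
    fun l => ?_, fun l hl => ⟨?_, ?_⟩⟩
  · rw [LinearMap.add_apply, prismSum, LinearMap.sum_apply]
    refine Submodule.add_mem _ (Submodule.sum_mem _ fun j _ => ?_) ?_
    · exact chainsOn_mono (fun L hL => hL.1)
        (prism_single_mem_carrier (S := fun _ => Set.univ) (by simp) (by simp) l)
    · simpa using single_mem_chainsOn (by simp)
  · rw [LinearMap.add_apply, prismSum, LinearMap.sum_apply]
    refine Submodule.add_mem _ (Submodule.sum_mem _ fun j hj => ?_) ?_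
    · exact prism_single_mem_chainsOn_small
        (hr j (Finset.mem_range.1 hj) l (small_mono subset_rfl (min_le_left _ _) hl))
    · rw [LinearMap.comp_apply, map_single, cone_single]
      refine single_mem_chainsOn (small_of_forall_eq hp hε ?_)
      simpa using fun x hx => hrN x (hl x hx).1
  · have hmap : map (r 0) (single l 1) = single l 1 := by
      rw [map_single, List.map_congr_left fun x hx => hr0 x (hl x hx).1, List.map_id']
    simp only [LinearMap.add_apply, LinearMap.comp_apply, map_add, boundary_prismSum,
      boundary_cone, boundary_map, boundary_single, hmap]
    linear_combination (norm := module) ZModModule.add_self (prismSum r N (faces l)) +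
      ZModModule.add_self (map (r N) (single l 1)) +
      ZModModule.add_self (cone p (map (r N) (faces l)))

theorem chainContractible_of_isCompact (hH : IsCompact H) [ContractibleSpace H] :
    ChainContractible H := by
  classical
  have := isCompact_iff_compactSpace.1 hH
  obtain ⟨p, ⟨F⟩⟩ := id_nullhomotopic H
  have hF : UniformContinuous F := CompactSpace.uniformContinuous_of_continuous F.continuous
  refine chainContractible_of_discrete_homotopy p.2 fun ε hε => ?_
  obtain ⟨δ, hδ, hFδ⟩ := Metric.uniformContinuous_iff.1 hF ε hε
  obtain ⟨N, hN⟩ := exists_nat_one_div_lt hδ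
  let time (j : ℕ) : unitInterval := Set.projIcc 0 1 zero_le_one (j / (N + 1 : ℝ))
  let r (j : ℕ) (x : X) : X := if hx : x ∈ H then F (time j, ⟨x, hx⟩) else x
  have htime (i j : ℕ) (hij : i ≤ j + 1) (hji : j ≤ i + 1) : dist (time i) (time j) < δ := by
    have habs : |(i : ℝ) - j| ≤ 1 := by
      rw [abs_le]
      constructor <;> linarith [(by exact_mod_cast hij : (i : ℝ) ≤ j + 1),
        (by exact_mod_cast hji : (j : ℝ) ≤ i + 1)]
    calc dist (time i) (time j) ≤ |(i : ℝ) / (N + 1) - j / (N + 1)| :=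
          Set.abs_projIcc_sub_projIcc _
      _ = |(i : ℝ) - j| / (N + 1) := by
          rw [← sub_div, abs_div, abs_of_pos (by positivity : (0 : ℝ) < N + 1)]
      _ ≤ 1 / (N + 1) := by gcongr
      _ < δ := hN
  have hr (i : ℕ) {x : X} (hx : x ∈ H) : r i x = F (time i, ⟨x, hx⟩) := dif_pos hx
  refine ⟨δ, hδ, N + 1, r, fun x hx => ?_, fun x hx => ?_, fun j _ l hl v hv => ?_⟩
  · simp [hr 0 hx, time]
  · have hone : time (N + 1) = 1 := by
      simp [time, div_self (Nat.cast_add_one_ne_zero N : (N + 1 : ℝ) ≠ 0)]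
    simp [hr (N + 1) hx, hone]
  · have hstage : ∀ v ∈ l.map (r j) ++ l.map (r (j + 1)),
        ∃ i, j ≤ i ∧ i ≤ j + 1 ∧ ∃ x ∈ l, r i x = v := by
      intro v hv
      rcases List.mem_append.1 hv with hv | hv
      · exact ⟨j, le_rfl, Nat.le_succ j, List.mem_map.1 hv⟩
      · exact ⟨j + 1, Nat.le_succ j, le_rfl, List.mem_map.1 hv⟩
    obtain ⟨i, hi, hi', x, hx, rfl⟩ := hstage v hv
    refine ⟨by simp [hr i (hl x hx).1], fun w hw => ?_⟩
    obtain ⟨k, hk, hk', y, hy, rfl⟩ := hstage w hw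
    rw [hr i (hl x hx).1, hr k (hl y hy).1]
    exact hFδ (max_lt (htime i k (by omega) (by omega)) ((hl x hx).2 y hy))

theorem ChainContractible.nonempty (h : ChainContractible H) : H.Nonempty := by
  obtain ⟨δ, _, _, K, hlen, hK⟩ := h 1 one_pos
  obtain ⟨hsmall, hbd⟩ := hK [] (by simp [Small])
  by_contra hH
  have hzero : pairing 1 (boundary (K (single [] 1))) = 0 := by
    rw [pairing_boundary]
    refine pairing_eq_zero (mem_chainsOn_inter hsmall (hlen [])) ?_
    rintro L ⟨hL, hL'⟩
    obtain ⟨x, rfl⟩ := List.length_eq_one_iff.1 hL'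
    exact absurd ⟨x, (hL x (by simp)).1⟩ hH
  rw [faces, map_zero, add_zero] at hbd
  simp [hbd] at hzero

theorem ChainContractible.preimage {T : X → X} (hinv : T.Involutive) (hT : Isometry T)
    (h : ChainContractible H) : ChainContractible (T ⁻¹' H) := by
  intro ε hε
  obtain ⟨δ, hδ, hle, K, hlen, hK⟩ := h ε hε
  have hmaps : Set.MapsTo T H (T ⁻¹' H) := fun x hx => by rwa [Set.mem_preimage, hinv x]
  refine ⟨δ, hδ, hle, map T ∘ₗ K ∘ₗ map T, fun l => ?_, fun l hl => ?_⟩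
  · rw [LinearMap.comp_apply, LinearMap.comp_apply, map_single]
    exact map_mem_chainsOn T (by simp) (hlen _)
  · obtain ⟨hsmall, hbd⟩ := hK _ (map_mem_small hT (Set.mapsTo_preimage T H) hl)
    simp only [LinearMap.comp_apply, map_single]
    refine ⟨map_mem_chainsOn T (fun L hL => map_mem_small hT hmaps hL) hsmall, ?_⟩
    rw [boundary_map, map_faces, ← map_add, hbd, map_single, List.map_map, hinv.comp_self,
      List.map_id]

end Contractible

section AntipodalSum

variable {X : Type*} {T : X → X}

/-- The symmetrization `c + T c` of a chain under the antipodal map `T`. -/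
noncomputable def antipodalSum (T : X → X) : Chain X →ₗ[ZMod 2] Chain X := .id + map T

theorem map_antipodalSum (hT : T.Involutive) (c : Chain X) :
    map T (antipodalSum T c) = antipodalSum T c := by
  simp [antipodalSum, map_map_of_involutive hT, add_comm]

theorem antipodalSum_antipodalSum (hT : T.Involutive) (c : Chain X) :
    antipodalSum T (antipodalSum T c) = 0 := by
  rw [antipodalSum, LinearMap.add_apply, ← antipodalSum, map_antipodalSum hT, LinearMap.id_apply,
    ZModModule.add_self]

theorem boundary_antipodalSum (c : Chain X) :
    boundary (antipodalSum T c) = antipodalSum T (boundary c) := by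
  simp [antipodalSum, boundary_map]

end AntipodalSum

section Tower

variable {X : Type*} [PseudoMetricSpace X] {T : X → X} {H : ℕ → Set X} {n : ℕ}

/-- A filtration with the properties of the hemispheres `H 0, …, H n` of increasing dimension in a
sphere with antipodal map `T`. -/
structure HemisphereFiltration (T : X → X) (H : ℕ → Set X) (n : ℕ) : Prop where
  involutive : T.Involutive
  isometry : Isometry T
  subset_succ : ∀ j < n, H j ⊆ H (j + 1)
  mapsTo_succ : ∀ j < n, Set.MapsTo T (H j) (H (j + 1))
  chainContractible : ∀ j ≤ n, ChainContractible (H j)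

/-- Chains `h j` on the hemispheres with the boundary relations of a simplicial decomposition of
mesh less than `δ`: the boundary of `h (j + 1)` is the equatorial sphere made up of `h j` and its
antipode. -/
structure HemisphereTower (T : X → X) (H : ℕ → Set X) (n : ℕ) (δ : ℝ) (h : ℕ → Chain X) :
    Prop where
  zero : ∃ x, h 0 = single [x] 1
  mem_small : ∀ j ≤ n, h j ∈ chainsOn (Small (H j) δ)
  mem_length : ∀ j ≤ n, h j ∈ chainsOn {l | l.length = j + 1}
  boundary_succ : ∀ j < n, boundary (h (j + 1)) = antipodalSum T (h j)

variable {δ : ℝ} {h : ℕ → Chain X}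

theorem HemisphereTower.boundary_antipodalSum (W : HemisphereTower T H n δ h) (hT : T.Involutive)
    {j : ℕ} (hj : j ≤ n) : boundary (antipodalSum T (h j)) = 0 := by
  rw [LusternikSchnirelman.boundary_antipodalSum]
  cases j with
  | zero =>
    obtain ⟨x, hx⟩ := W.zero
    simp [hx, faces, antipodalSum, ZModModule.add_self]
  | succ j => rw [W.boundary_succ j hj, antipodalSum_antipodalSum hT]

theorem HemisphereTower.antipodalSum_mem_small (W : HemisphereTower T H n δ h)
    (hT : Isometry T) {V : Set X} {j : ℕ} (hj : j ≤ n) (hV : H j ⊆ V)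
    (hTV : Set.MapsTo T (H j) V) : antipodalSum T (h j) ∈ chainsOn (Small V δ) :=
  Submodule.add_mem _ (chainsOn_mono (small_mono hV le_rfl) (W.mem_small j hj))
    (map_mem_chainsOn T (fun _ hl => map_mem_small hT hTV hl) (W.mem_small j hj))

theorem HemisphereTower.antipodalSum_mem_length (W : HemisphereTower T H n δ h) {j : ℕ}
    (hj : j ≤ n) : antipodalSum T (h j) ∈ chainsOn {l | l.length = j + 1} :=
  Submodule.add_mem _ (W.mem_length j hj)
    (map_mem_chainsOn T (fun l hl => by simpa using hl) (W.mem_length j hj))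

theorem HemisphereTower.exists_succ (W : HemisphereTower T H n δ h)
    (F : HemisphereFiltration T H (n + 1)) {ε : ℝ} (hle : δ ≤ ε) {K : Chain X →ₗ[ZMod 2] Chain X}
    (hlen : ∀ l, K (single l 1) ∈ chainsOn {L | L.length = l.length + 1})
    (hK : ∀ l ∈ Small (H (n + 1)) δ, K (single l 1) ∈ chainsOn (Small (H (n + 1)) ε) ∧
      boundary (K (single l 1)) + K (faces l) = single l 1) :
    HemisphereTower T H (n + 1) ε (Function.update h (n + 1) (K (antipodalSum T (h n)))) := by
  have hsmall := W.antipodalSum_mem_small F.isometry le_rfl (F.subset_succ n n.lt_succ_self)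
    (F.mapsTo_succ n n.lt_succ_self)
  have hne {j : ℕ} (hj : j ≤ n) : j ≠ n + 1 := by omega
  refine ⟨?_, fun j hj => ?_, fun j hj => ?_, fun j hj => ?_⟩
  · rw [Function.update_of_ne (hne n.zero_le)]
    exact W.zero
  · rcases hj.lt_or_eq with hj | rfl
    · rw [Function.update_of_ne hj.ne]
      exact chainsOn_mono (small_mono subset_rfl hle) (W.mem_small j (by omega))
    · rw [Function.update_self]
      exact apply_mem_chainsOn (fun l hl => (hK l hl).1) hsmall
  · rcases hj.lt_or_eq with hj | rfl
    · rw [Function.update_of_ne hj.ne]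
      exact W.mem_length j (by omega)
    · rw [Function.update_self]
      refine apply_mem_chainsOn (fun l hl => ?_) (W.antipodalSum_mem_length le_rfl)
      exact chainsOn_mono (fun L hL => hL.trans (congrArg _ hl)) (hlen l)
  · rw [Function.update_of_ne hj.ne]
    rcases (Nat.lt_succ_iff.1 hj).lt_or_eq with hj | rfl
    · rw [Function.update_of_ne (by omega)]
      exact W.boundary_succ j hj
    · have hcontract := linearMap_congr_chainsOn (F := boundary ∘ₗ K + K ∘ₗ boundary) (F' := .id)
        (fun l hl => by simpa using (hK l hl).2) hsmall
      rw [Function.update_self]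
      simpa [W.boundary_antipodalSum F.involutive le_rfl] using hcontract

theorem HemisphereFiltration.of_succ (F : HemisphereFiltration T H (n + 1)) :
    HemisphereFiltration T H n where
  involutive := F.involutive
  isometry := F.isometry
  subset_succ j hj := F.subset_succ j (by omega)
  mapsTo_succ j hj := F.mapsTo_succ j (by omega)
  chainContractible j hj := F.chainContractible j (by omega)

theorem HemisphereFiltration.exists_tower (F : HemisphereFiltration T H n) {ε : ℝ} (hε : 0 < ε) :
    ∃ h, HemisphereTower T H n ε h := by
  induction n generalizing ε with
  | zero =>
    obtain ⟨x, hx⟩ := (F.chainContractible 0 le_rfl).nonempty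
    refine ⟨fun _ => single [x] 1, ⟨x, rfl⟩, fun j hj => ?_, fun j hj => ?_, by simp⟩
    · obtain rfl := Nat.le_zero.1 hj
      exact single_mem_chainsOn (small_of_forall_eq hx hε (by simp))
    · obtain rfl := Nat.le_zero.1 hj
      exact single_mem_chainsOn rfl
  | succ n ih =>
    obtain ⟨δ, hδ, hle, K, hlen, hK⟩ := F.chainContractible (n + 1) le_rfl ε hε
    obtain ⟨h, W⟩ := ih F.of_succ hδ
    exact ⟨_, W.exists_succ F hle hlen hK⟩

end Tower

section CupVanishing

variable {X : Type*}

theorem pairing_cup_of_coboundary_eq {α β γ : Cochain X} {G : Set (List X)} {c : Chain X}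
    (hc : c ∈ chainsOn G) (hG : ∀ l ∈ G, ∀ L, L.Sublist l → L ∈ G)
    (hβ : ∀ l ∈ G, coboundary β l = 0) (hγ : ∀ l ∈ G, coboundary γ l = α l) (hβnil : β [] = 0) :
    pairing (cup β α) c = pairing (cup β γ) (boundary c) + γ [] * pairing β c := by
  have hleibniz : ∀ l ∈ G, (cup β α + γ [] • β) l = coboundary (cup β γ) l := by
    intro l hl
    rw [coboundary_cup, cup_congr (β' := 0) (fun L hL => hβ L (hG l hl L hL)) fun _ _ => rfl,
      cup_zero_left, cup_congr (fun _ _ => rfl) fun L hL => hγ L (hG l hl L hL), hβnil]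
    simp [mul_comm]
  rw [pairing_boundary, ← pairing_congr hc hleibniz, map_add, map_smul, LinearMap.add_apply,
    LinearMap.smul_apply, smul_eq_mul, add_assoc, ZModModule.add_self, add_zero]

variable [PseudoMetricSpace X]

theorem ChainContractible.exists_primitive {H : Set X} (hH : ChainContractible H) {ε : ℝ}
    (hε : 0 < ε) : ∃ δ > 0, δ ≤ ε ∧ ∀ (p : ℕ) (α : Cochain X), (∀ l, l.length ≠ p + 1 → α l = 0) →
      (∀ l ∈ Small H ε, coboundary α l = 0) →
      ∃ γ : Cochain X, (∀ l, l.length ≠ p → γ l = 0) ∧ ∀ l ∈ Small H δ, coboundary γ l = α l := by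
  obtain ⟨δ, hδ, hle, K, hlen, hK⟩ := hH ε hε
  refine ⟨δ, hδ, hle, fun p α hα hcocycle => ⟨fun l => pairing α (K (single l 1)), fun l hl => ?_,
    fun l hl => ?_⟩⟩
  · refine pairing_eq_zero (hlen l) fun L hL => hα L ?_
    rw [hL]
    exact fun h => hl (Nat.succ_injective h)
  · obtain ⟨hsmall, hbd⟩ := hK l hl
    calc coboundary (fun l => pairing α (K (single l 1))) l = pairing α (K (faces l)) :=
          linearMap_congr (F := pairing _) (G := pairing α ∘ₗ K) (fun l => by simp) (faces l)
      _ = pairing α (boundary (K (single l 1)) + K (faces l)) := by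
          rw [map_add, pairing_boundary, pairing_eq_zero hsmall hcocycle, zero_add]
      _ = α l := by rw [hbd, pairing_single]

variable {T : X → X} {H : ℕ → Set X} {n : ℕ}

theorem HemisphereFiltration.exists_primitives (F : HemisphereFiltration T H n) {j : ℕ}
    (hj : j ≤ n) {ε : ℝ} (hε : 0 < ε) :
    ∃ δ > 0, δ ≤ ε ∧ ∀ (p : ℕ) (α : Cochain X), (∀ l, l.length ≠ p + 1 → α l = 0) →
      (∀ l ∈ Small (H j) ε, coboundary α l = 0) →
      (∀ l ∈ Small (T ⁻¹' H j) ε, coboundary α l = 0) →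
      ∃ γ γ' : Cochain X, (∀ l, l.length ≠ p → γ l = 0) ∧ (∀ l, l.length ≠ p → γ' l = 0) ∧
        (∀ l ∈ Small (H j) δ, coboundary γ l = α l) ∧
        ∀ l ∈ Small (T ⁻¹' H j) δ, coboundary γ' l = α l := by
  have hH := F.chainContractible j hj
  obtain ⟨δ, hδ, hle, hprim⟩ := hH.exists_primitive hε
  obtain ⟨δ', hδ', -, hprim'⟩ := (hH.preimage F.involutive F.isometry).exists_primitive hε
  refine ⟨min δ δ', lt_min hδ hδ', (min_le_left _ _).trans hle, fun p α hα hαε hαε' => ?_⟩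
  obtain ⟨γ, hγ, hγα⟩ := hprim p α hα hαε
  obtain ⟨γ', hγ', hγα'⟩ := hprim' p α hα hαε'
  exact ⟨γ, γ', hγ, hγ', fun l hl => hγα l (small_mono subset_rfl (min_le_left _ _) hl),
    fun l hl => hγα' l (small_mono subset_rfl (min_le_right _ _) hl)⟩

theorem pairing_cup_antipodalSum_of_coboundary_eq {U : Set X} {δ : ℝ} {α β γ γ' : Cochain X}
    {b c : Chain X} (hinv : T.Involutive) (hT : Isometry T) (hc : c ∈ chainsOn (Small U δ))
    (hbd : boundary c = antipodalSum T b) (hβ : ∀ l ∈ Small Set.univ δ, coboundary β l = 0)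
    (hγ : ∀ l ∈ Small U δ, coboundary γ l = α l)
    (hγ' : ∀ l ∈ Small (T ⁻¹' U) δ, coboundary γ' l = α l) (hβnil : β [] = 0) :
    pairing (cup β α) (antipodalSum T c) = pairing (cup β (γ + γ')) (antipodalSum T b) +
      γ [] * pairing β c + γ' [] * pairing β (map T c) := by
  have hsub {V : Set X} : ∀ l ∈ Small V δ, ∀ L, L.Sublist l → L ∈ Small V δ :=
    fun l hl L hL => small_of_subset hL.subset hl
  have hβ' {V : Set X} : ∀ l ∈ Small V δ, coboundary β l = 0 :=
    fun l hl => hβ l (small_mono (Set.subset_univ V) le_rfl hl)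
  have hTc : map T c ∈ chainsOn (Small (T ⁻¹' U) δ) :=
    map_mem_chainsOn T (fun l hl => map_mem_small hT (fun x hx => by
      rwa [Set.mem_preimage, hinv x]) hl) hc
  rw [antipodalSum, LinearMap.add_apply, LinearMap.id_apply, map_add, ← antipodalSum,
    pairing_cup_of_coboundary_eq hc hsub hβ' hγ hβnil,
    pairing_cup_of_coboundary_eq hTc hsub hβ' hγ' hβnil, boundary_map, hbd,
    map_antipodalSum hinv, cup_add_right, map_add, LinearMap.add_apply]
  ring

/-- The assertion that, at small scales, the cup product of a `p`-cochain `α` with a `q`-cocycle `β`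
vanishes on the antipodally symmetric `(p + q)`-sphere of a tower as soon as `α` is closed on each
of the two hemispheres of that sphere. -/
def CupVanishing (T : X → X) (H : ℕ → Set X) (n p q : ℕ) : Prop :=
  ∀ ε > 0, ∃ δ > 0, δ ≤ ε ∧ ∀ h, HemisphereTower T H n δ h → ∀ α β : Cochain X,
    (∀ l, l.length ≠ p + 1 → α l = 0) → (∀ l, l.length ≠ q + 1 → β l = 0) →
    (∀ l ∈ Small Set.univ ε, coboundary β l = 0) →
    (∀ l ∈ Small (H (p + q)) ε, coboundary α l = 0) →
    (∀ l ∈ Small (T ⁻¹' H (p + q)) ε, coboundary α l = 0) →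
    pairing (cup β α) (antipodalSum T (h (p + q))) = 0

theorem HemisphereFiltration.cupVanishing_zero (F : HemisphereFiltration T H n) {q : ℕ}
    (hq : 0 < q) (hqn : q < n) : CupVanishing T H n 0 q := by
  obtain ⟨k, rfl⟩ := Nat.exists_eq_add_of_lt hq
  intro ε hε
  simp only [zero_add] at hqn ⊢
  obtain ⟨δ, hδ, hle, hprim⟩ := F.exists_primitives hqn.le hε
  refine ⟨δ, hδ, hle, fun h W α β hα hβ hβδ hαδ hαδ' => ?_⟩
  obtain ⟨γ, γ', hγ, hγ', hγδ, hγδ'⟩ := hprim 0 α hα hαδ hαδ'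
  have hγγ' : γ = γ' := by
    obtain ⟨x, hx⟩ := (F.chainContractible k (by omega)).nonempty
    have hx' {V : Set X} (hV : x ∈ V) : [x] ∈ Small V δ := small_of_forall_eq hV hδ (by simp)
    have hα' : coboundary γ [x] = coboundary γ' [x] :=
      (hγδ _ (hx' (F.subset_succ k (by omega) hx))).trans
        (hγδ' _ (hx' (F.mapsTo_succ k (by omega) hx))).symm
    ext l
    rcases l with _ | ⟨y, l⟩
    · simpa [coboundary_apply, faces] using hα'
    · rw [hγ _ (by simp), hγ' _ (by simp)]
  have hβsphere : pairing β (antipodalSum T (h (k + 1))) = 0 := by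
    rw [← W.boundary_succ _ hqn, pairing_boundary]
    exact pairing_eq_zero (W.mem_small _ hqn) fun l hl =>
      hβδ l (small_mono (Set.subset_univ _) hle hl)
  rw [pairing_cup_antipodalSum_of_coboundary_eq F.involutive F.isometry (W.mem_small _ hqn.le)
    (W.boundary_succ k (by omega)) (fun l hl => hβδ l (small_mono subset_rfl hle hl)) hγδ hγδ'
    (hβ _ (by simp)), ← hγγ', ZModModule.add_self, cup_zero_right, map_zero, LinearMap.zero_apply,
    zero_add, ← mul_add, ← map_add]
  exact mul_eq_zero_of_right _ hβsphere

/-- The difference of two primitives of `α`, on a hemisphere and on its antipode, is closed on the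
intersection of the two, and takes the place of `α` one dimension lower. -/
theorem HemisphereFiltration.cupVanishing_succ (F : HemisphereFiltration T H n) {p q : ℕ}
    (hpq : p + 1 + q ≤ n) (ih : CupVanishing T H n p q) : CupVanishing T H n (p + 1) q := by
  intro ε hε
  obtain ⟨ε', hε', hle', hprim⟩ := F.exists_primitives hpq hε
  obtain ⟨δ, hδ, hle, hvanish⟩ := ih ε' hε'
  refine ⟨δ, hδ, hle.trans hle', fun h W α β hα hβ hβδ hαδ hαδ' => ?_⟩
  obtain ⟨γ, γ', hγ, hγ', hγδ, hγδ'⟩ := hprim (p + 1) α hα hαδ hαδ'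
  have hlt : p + q < n := by omega
  simp only [Nat.succ_add_eq_add_succ] at hγδ hγδ' hpq
  have hdiff {U : Set X} (hU : U ⊆ H (p + q + 1)) (hTU : U ⊆ T ⁻¹' H (p + q + 1)) :
      ∀ l ∈ Small U ε', coboundary (γ + γ') l = 0 := fun l hl => by
    rw [map_add, Pi.add_apply, hγδ l (small_mono hU le_rfl hl),
      hγδ' l (small_mono hTU le_rfl hl), ZModModule.add_self]
  simp only [Nat.succ_add_eq_add_succ]
  rw [pairing_cup_antipodalSum_of_coboundary_eq F.involutive F.isometry (W.mem_small _ hpq)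
    (W.boundary_succ _ hlt)
    (fun l hl => hβδ l (small_mono subset_rfl (hle.trans hle') hl))
    (fun l hl => hγδ l (small_mono subset_rfl hle hl))
    (fun l hl => hγδ' l (small_mono subset_rfl hle hl)) (hβ _ (by simp)),
    hγ [] (by simp), hγ' [] (by simp), zero_mul, zero_mul, add_zero, add_zero]
  refine hvanish h W _ β (fun l hl => ?_) hβ
    (fun l hl => hβδ l (small_mono subset_rfl hle' hl))
    (hdiff (F.subset_succ _ hlt) (F.mapsTo_succ _ hlt))
    (hdiff (fun x hx => ?_) fun x hx => F.subset_succ _ hlt hx)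
  · rw [Pi.add_apply, hγ l hl, hγ' l hl, add_zero]
  · simpa [F.involutive x] using F.mapsTo_succ _ hlt hx

theorem HemisphereFiltration.cupVanishing (F : HemisphereFiltration T H n) {p q : ℕ}
    (hq : 0 < q) (hqn : q < n) (hpq : p + q ≤ n) : CupVanishing T H n p q := by
  induction p with
  | zero => exact F.cupVanishing_zero hq hqn
  | succ p ih => exact F.cupVanishing_succ hpq (ih (by omega))

end CupVanishing

section Labels

variable {X ι : Type*} {T : X → X} {f : X → ι}

/-- The two signed labels of a vertex `x`: the label of `x` itself with a positive sign, and the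
label of its antipode with a negative sign. -/
def signedLabels (T : X → X) (f : X → ι) (x : X) : Set (ι × Bool) := {(f x, true), (f (T x), false)}

theorem flipSign_mem_signedLabels (hinv : T.Involutive) {x : X} {v : ι × Bool}
    (hv : v ∈ signedLabels T f x) : flipSign v ∈ signedLabels T f (T x) := by
  rcases hv with rfl | rfl <;> simp [signedLabels, flipSign, hinv x]

section FanLabel

variable [LinearOrder ι]

/-- Fan's labelling, which selects the smaller one of the two signed labels. -/
def fanLabel (T : X → X) (f : X → ι) (x : X) : ι × Bool :=
  if f x < f (T x) then (f x, true) else (f (T x), false)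

theorem fanLabel_mem_signedLabels (T : X → X) (f : X → ι) (x : X) :
    fanLabel T f x ∈ signedLabels T f x := by
  unfold fanLabel
  split_ifs
  · exact Or.inl rfl
  · exact Or.inr rfl

theorem flipSign_comp_fanLabel (hinv : T.Involutive) (hf : ∀ x, f x ≠ f (T x)) :
    flipSign ∘ fanLabel T f = fanLabel T f ∘ T := by
  ext1 x
  rcases (hf x).lt_or_gt with h | h <;> simp [fanLabel, flipSign, hinv x, h, h.not_gt]

theorem antipodalSum_flipSign_map_fanLabel (hinv : T.Involutive) (hf : ∀ x, f x ≠ f (T x))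
    (c : Chain X) :
    antipodalSum flipSign (map (fanLabel T f) c) = map (fanLabel T f) (antipodalSum T c) := by
  simp [antipodalSum, map_map, flipSign_comp_fanLabel hinv hf]

end FanLabel

variable [PseudoMetricSpace X] {ε : ℝ} {t : ℕ}

/-- The signed simplices whose vertices are signed labels of the vertices of a small simplex. -/
def labelled (T : X → X) (f : X → ι) (ε : ℝ) : Set (List (ι × Bool)) :=
  {L | ∃ l ∈ Small Set.univ ε, ∀ v ∈ L, ∃ x ∈ l, v ∈ signedLabels T f x}

theorem apply_mem_chainsOn_labelled {k n : ℕ} {F : Chain X →ₗ[ZMod 2] Chain (ι × Bool)}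
    (hF : ∀ l, F (single l 1) ∈ chainsOn (carrier (signedLabels T f) k l)) {c : Chain X}
    (hc : c ∈ chainsOn (Small Set.univ ε)) (hlen : c ∈ chainsOn {l | l.length = n}) :
    F c ∈ chainsOn (labelled T f ε ∩ {L | L.length = n + k}) := by
  refine apply_mem_chainsOn (fun l hl => chainsOn_mono ?_ (hF l)) (mem_chainsOn_inter hc hlen)
  exact fun L hL => ⟨⟨l, hl.1, hL.2⟩, hL.1.trans (congrArg (· + k) hl.2)⟩

theorem map_flipSign_mem_labelled (hinv : T.Involutive) (hT : Isometry T) {L : List (ι × Bool)}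
    (hL : L ∈ labelled T f ε) : L.map flipSign ∈ labelled T f ε := by
  obtain ⟨l, hl, hLl⟩ := hL
  refine ⟨l.map T, map_mem_small hT (Set.mapsTo_univ _ _) hl, List.forall_mem_map.2 fun v hv => ?_⟩
  obtain ⟨x, hx, hvx⟩ := hLl v hv
  exact ⟨T x, List.mem_map_of_mem hx, flipSign_mem_signedLabels hinv hvx⟩

theorem sign_eq_of_mem_labelled (hf : ∀ x y, dist x y < ε → f x ≠ f (T y))
    {L : List (ι × Bool)} (hL : L ∈ labelled T f ε) {a b : ι × Bool} (ha : a ∈ L) (hb : b ∈ L)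
    (hab : a.1 = b.1) : a.2 = b.2 := by
  obtain ⟨l, hl, hLl⟩ := hL
  obtain ⟨x, hx, hax⟩ := hLl a ha
  obtain ⟨y, hy, hby⟩ := hLl b hb
  rcases hax with rfl | rfl <;> rcases hby with rfl | rfl
  · rfl
  · exact absurd hab (hf x y ((hl x hx).2 y hy))
  · exact absurd hab.symm (hf y x ((hl y hy).2 x hx))
  · rfl

section Card

variable [DecidableEq ι]

theorem card_toFinset_map_comp_le (hT : Isometry T)
    (ht : ∀ l ∈ Small Set.univ ε, (l.map f).toFinset.card ≤ t) :
    ∀ l ∈ Small Set.univ ε, (l.map (f ∘ T)).toFinset.card ≤ t := fun l hl => by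
  simpa using ht (l.map T) (map_mem_small hT (Set.mapsTo_univ _ _) hl)

theorem length_signPart_le (hT : Isometry T)
    (ht : ∀ l ∈ Small Set.univ ε, (l.map f).toFinset.card ≤ t) {L : List (ι × Bool)}
    (hL : L ∈ labelled T f ε) (hnodup : L.Nodup) (s : Bool) : (signPart s L).length ≤ t := by
  obtain ⟨l, hl, hLl⟩ := hL
  have hle {u : X → ι} (hu : (l.map u).toFinset.card ≤ t) (hsub : signPart s L ⊆ l.map u) :
      (signPart s L).length ≤ t := by
    rw [← List.toFinset_card_of_nodup (nodup_signPart hnodup s)]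
    exact (Finset.card_le_card fun i => by simpa only [List.mem_toFinset] using @hsub i).trans hu
  cases s with
  | false =>
    refine hle (card_toFinset_map_comp_le hT ht l hl) fun i hi => ?_
    obtain ⟨x, hx, hix⟩ := hLl _ (mem_signPart.1 hi)
    exact List.mem_map.2 ⟨x, hx, by simpa [signedLabels, eq_comm] using hix⟩
  | true =>
    refine hle (ht l hl) fun i hi => ?_
    obtain ⟨x, hx, hix⟩ := hLl _ (mem_signPart.1 hi)
    exact List.mem_map.2 ⟨x, hx, by simpa [signedLabels, eq_comm] using hix⟩

end Card

variable [LinearOrder ι]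

theorem pairing_fanCochain_boundary (hf : ∀ x y, dist x y < ε → f x ≠ f (T y))
    {c : Chain (ι × Bool)} (hc : c ∈ chainsOn (labelled T f ε)) :
    pairing (fanCochain true) (boundary c) =
      pairing (fanCochain true) (antipodalSum flipSign c) := by
  have hfan : ∀ L ∈ labelled T f ε, coboundary (fanCochain true) L =
      (fanCochain true + fun L => fanCochain true (L.map flipSign) : Cochain (ι × Bool)) L :=
    fun L hL => coboundary_fanCochain fun a ha b hb => sign_eq_of_mem_labelled hf hL ha hb
  rw [pairing_boundary, pairing_congr hc hfan, map_add, LinearMap.add_apply, ← pairing_map,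
    antipodalSum, LinearMap.add_apply, LinearMap.id_apply, map_add]

theorem fanCochain_eq_zero_of_mem_labelled (hT : Isometry T)
    (ht : ∀ l ∈ Small Set.univ ε, (l.map f).toFinset.card ≤ t) {L : List (ι × Bool)}
    (hL : L ∈ labelled T f ε) (hlen : 2 * t < L.length) : fanCochain true L = 0 := by
  refine (isAlternatingCochain_fanCochain true).not_nodup fun hnodup => ?_
  have hpos := length_signPart_le hT ht hL hnodup true
  have hneg := length_signPart_le hT ht hL hnodup false
  have hsum := length_signPart L
  omega

end Labels

section LabelledSphere

variable {X ι : Type*} [PseudoMetricSpace X] [LinearOrder ι] {T : X → X} {f : X → ι} {ε : ℝ}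
  {c : Chain X} {d t : ℕ}

theorem pairing_fanCochain_map_fanLabel {H : ℕ → Set X} (F : HemisphereFiltration T H d)
    {h : ℕ → Chain X} (hε : 0 < ε) (W : HemisphereTower T H d ε h)
    (hf : ∀ x y, dist x y < ε → f x ≠ f (T y)) {j : ℕ} (hj : j ≤ d) :
    pairing (fanCochain true) (map (fanLabel T f) (antipodalSum T (h j))) = 1 := by
  have hbd : pairing (fanCochain true) (map (fanLabel T f) (antipodalSum T (h j))) =
      pairing (fanCochain true) (map (fanLabel T f) (boundary (h j))) := by
    have hlab := chainsOn_mono Set.inter_subset_left (apply_mem_chainsOn_labelled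
      (map_single_mem_carrier (fanLabel_mem_signedLabels T f))
      (chainsOn_mono (small_mono (Set.subset_univ _) le_rfl) (W.mem_small j hj))
      (W.mem_length j hj))
    rw [← antipodalSum_flipSign_map_fanLabel F.involutive fun x => hf x x (by simpa using hε),
      ← pairing_fanCochain_boundary hf hlab, boundary_map]
  rw [hbd]
  cases j with
  | zero =>
    obtain ⟨x, hx⟩ := W.zero
    simp [hx, faces, fanCochain_nil]
  | succ j =>
    rw [W.boundary_succ j hj]
    exact pairing_fanCochain_map_fanLabel F hε W hf (by omega)

theorem pairing_fanCochain_prism_add_prism (hinv : T.Involutive)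
    (hε : 0 < ε) (hf : ∀ x y, dist x y < ε → f x ≠ f (T y)) (hd : 1 ≤ d)
    (hc : c ∈ chainsOn (Small Set.univ ε)) (hlen : c ∈ chainsOn {l | l.length = d + 1})
    (hbd : boundary c = 0) (hTc : map T c = c)
    (hone : pairing (fanCochain true) (map (fanLabel T f) c) = 1) :
    pairing (fanCochain true) (prism (fanLabel T f) (fun x => (f x, true)) c) +
      pairing (fanCochain true) (prism (fanLabel T f) (fun x => (f (T x), false)) c) = 1 := by
  have hallpos : pairing (fanCochain true) (map (fun x => (f x, true)) c) = 0 := by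
    rw [pairing_map]
    refine pairing_eq_zero hlen fun l hl => fanCochain_eq_zero_of_forall_true (by simp) ?_
    rw [List.length_map, hl]
    omega
  have hflip : map flipSign (prism (fanLabel T f) (fun x => (f x, true)) c) =
      prism (fanLabel T f) (fun x => (f (T x), false)) c := by
    conv_rhs => rw [← hTc, prism_map]
    rw [map_prism, flipSign_comp_fanLabel hinv fun x => hf x x (by simpa using hε)]
    congr 2
    ext1 x
    simp [flipSign, hinv x]
  have hedge := pairing_fanCochain_boundary hf (chainsOn_mono Set.inter_subset_left
    (apply_mem_chainsOn_labelled (prism_single_mem_carrier (fanLabel_mem_signedLabels T f)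
      fun x => Or.inl rfl) hc hlen))
  rw [boundary_prism, hbd, map_zero, zero_add, map_add, hone, hallpos, antipodalSum,
    LinearMap.add_apply, LinearMap.id_apply, hflip, map_add, add_zero] at hedge
  exact hedge.symm

theorem pairing_fanCochain_prism_eq_one (hinv : T.Involutive) (hT : Isometry T)
    (hε : 0 < ε) (hf : ∀ x y, dist x y < ε → f x ≠ f (T y)) (hd : 1 ≤ d)
    (ht : ∀ l ∈ Small Set.univ ε, (l.map f).toFinset.card ≤ t) (htd : 2 * t < d + 3)
    (hc : c ∈ chainsOn (Small Set.univ ε)) (hlen : c ∈ chainsOn {l | l.length = d + 1})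
    (hbd : boundary c = 0) (hTc : map T c = c)
    (hone : pairing (fanCochain true) (map (fanLabel T f) c) = 1) :
    pairing (fanCochain true) (prism (fun x => (f (T x), false)) (fun x => (f x, true)) c) = 1 := by
  have hedge := pairing_fanCochain_prism_add_prism hinv hε hf hd hc hlen hbd hTc hone
  have htri := apply_mem_chainsOn_labelled (doublePrism_single_mem_carrier
    (fanLabel_mem_signedLabels T f) (fun x => Or.inr rfl) fun x => Or.inl rfl) hc hlen
  have hvanish : ∀ L ∈ labelled T f ε ∩ {L | L.length = d + 1 + 2}, fanCochain true L = 0 :=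
    fun L hL => fanCochain_eq_zero_of_mem_labelled hT ht hL.1 (by rw [hL.2]; omega)
  have htriangle := pairing_fanCochain_boundary hf (chainsOn_mono Set.inter_subset_left htri)
  rw [boundary_doublePrism, hbd, map_zero, zero_add, antipodalSum, LinearMap.add_apply,
    LinearMap.id_apply, map_add, map_add, map_add, pairing_eq_zero htri hvanish,
    pairing_map, pairing_eq_zero htri fun L hL => hvanish _
      ⟨map_flipSign_mem_labelled hinv hT hL.1, by simpa using hL.2⟩] at htriangle
  linear_combination htriangle - hedge - ZModModule.add_self (1 : ZMod 2)

end LabelledSphere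

section DualCochains

variable {X ι : Type*} {f : X → ι} {Q N : Finset ι}

theorem pairing_fanCochain_prism [LinearOrder ι] [Fintype ι] (u w : X → ι) (c : Chain X) :
    pairing (fanCochain true) (prism (fun x => (u x, false)) (fun x => (w x, true)) c) =
      ∑ Q : Finset ι, ∑ N : Finset ι,
        fanCochain true (Q.toList.map (·, true) ++ N.toList.map (·, false)) *
          pairing (cup (fun l => dualCochain N (l.map u)) fun l => dualCochain Q (l.map w)) c := by
  have hexpand : fanCochain true = ∑ Q : Finset ι, ∑ N : Finset ι,
      fanCochain true (Q.toList.map (·, true) ++ N.toList.map (·, false)) •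
        externalProduct (dualCochain N) (dualCochain Q) := by
    ext M
    simpa [externalProduct] using fanCochain_eq_sum M
  conv_lhs => rw [hexpand]
  simp only [map_sum, map_smul, LinearMap.sum_apply, LinearMap.smul_apply, smul_eq_mul,
    pairing_externalProduct_prism]

theorem dualCochain_map_of_length_ne {l : List X} (hl : l.length ≠ Q.card) :
    dualCochain Q (l.map f) = 0 :=
  dualCochain_of_length_ne (by rwa [List.length_map])

variable [DecidableEq ι]

theorem dualCochain_map_eq_zero {l : List X} (hl : (l.map f).toFinset.card < Q.card) :
    dualCochain Q (l.map f) = 0 :=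
  dualCochain_of_not_perm fun h => by
    rw [List.toFinset_eq_of_perm _ _ h, Finset.toList_toFinset] at hl
    exact hl.false

theorem coboundary_dualCochain_map {l : List X} (hl : (l.map f).toFinset.card ≤ Q.card) :
    coboundary (fun l => dualCochain Q (l.map f)) l = 0 :=
  (coboundary_map _ f l).symm.trans <|
    coboundary_dualCochain fun h => (List.toFinset_card_of_nodup h).ge.trans hl

variable {u w : X → ι} {c : Chain X} {G : Set (List X)} {d t : ℕ}

theorem card_of_pairing_cup_dualCochain_ne_zero
    (hG : ∀ l ∈ G, ∀ L, L.Sublist l → L ∈ G)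
    (hu : ∀ l ∈ G, (l.map u).toFinset.card ≤ t) (hw : ∀ l ∈ G, (l.map w).toFinset.card ≤ t)
    (hc : c ∈ chainsOn G) (hlen : c ∈ chainsOn {l | l.length = d + 1})
    (h : pairing (cup (fun l => dualCochain N (l.map u)) fun l => dualCochain Q (l.map w)) c ≠ 0) :
    N.card + Q.card = d + 2 ∧ N.card ≤ t ∧ Q.card ≤ t := by
  refine ⟨?_, ?_, ?_⟩
  · contrapose! h
    refine pairing_eq_zero hlen fun l hl => cup_eq_zero_of_length
      (fun L => dualCochain_map_of_length_ne) (fun L => dualCochain_map_of_length_ne) ?_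
    rw [hl]
    exact h.symm
  · contrapose! h
    refine pairing_eq_zero hc fun l hl => ?_
    rw [cup_congr (β' := 0) (fun L hL => dualCochain_map_eq_zero ((hu L (hG l hl L hL)).trans_lt h))
      fun _ _ => rfl, cup_zero_left, Pi.zero_apply]
  · contrapose! h
    refine pairing_eq_zero hc fun l hl => ?_
    rw [cup_congr (α' := 0) (fun _ _ => rfl)
      fun L hL => dualCochain_map_eq_zero ((hw L (hG l hl L hL)).trans_lt h),
      cup_zero_right, Pi.zero_apply]

end DualCochains

section Sphere

variable {X ι : Type*} [PseudoMetricSpace X] {T : X → X} {H : ℕ → Set X} {f : X → ι} {ε : ℝ} {d : ℕ}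

theorem HemisphereFiltration.cupVanishing_dualCochain [DecidableEq ι]
    (F : HemisphereFiltration T H d) (hd : 1 ≤ d) (hε : 0 < ε)
    (ht : ∀ l ∈ Small Set.univ ε, (l.map f).toFinset.card ≤ (d + 2) / 2) :
    ∃ δ > 0, δ ≤ ε ∧ ∀ h, HemisphereTower T H d δ h → ∀ Q N : Finset ι,
      pairing (cup (fun l => dualCochain N (l.map (f ∘ T))) fun l => dualCochain Q (l.map f))
        (antipodalSum T (h d)) = 0 := by
  have htT := card_toFinset_map_comp_le F.isometry ht
  have hsphere {δ : ℝ} {h : ℕ → Chain X} (W : HemisphereTower T H d δ h) :=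
    W.antipodalSum_mem_small F.isometry le_rfl (Set.subset_univ _) (Set.mapsTo_univ _ _)
  have hcard {δ : ℝ} (hδ : δ ≤ ε) {h : ℕ → Chain X} (W : HemisphereTower T H d δ h)
      {Q N : Finset ι} := card_of_pairing_cup_dualCochain_ne_zero (Q := Q) (N := N)
    (fun l hl L hL => small_of_subset hL.subset hl) htT ht
    (chainsOn_mono (small_mono subset_rfl hδ) (hsphere W)) (W.antipodalSum_mem_length le_rfl)
  rcases d.even_or_odd' with ⟨p, rfl | rfl⟩
  · obtain ⟨δ, hδ, hle, hvanish⟩ := F.cupVanishing (p := p) (q := p) (by omega) (by omega)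
      (by omega) ε hε
    refine ⟨δ, hδ, hle, fun h W Q N => ?_⟩
    by_contra hne
    obtain ⟨hsum, hN, hQ⟩ := hcard hle W hne
    have hcocycle {U : Set X} : ∀ l ∈ Small U ε,
        coboundary (fun l => dualCochain Q (l.map f)) l = 0 := fun l hl =>
      coboundary_dualCochain_map <| (ht l (small_mono (Set.subset_univ _) le_rfl hl)).trans
        (by omega)
    rw [two_mul] at hne
    refine hne (hvanish h W _ _ (fun l hl => dualCochain_map_of_length_ne (by omega))
      (fun l hl => dualCochain_map_of_length_ne (by omega))
      (fun l hl => coboundary_dualCochain_map <| (htT l hl).trans (by omega)) hcocycle hcocycle)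
  · refine ⟨ε, hε, le_rfl, fun h W Q N => ?_⟩
    by_contra hne
    obtain ⟨hsum, hN, hQ⟩ := hcard le_rfl W hne
    omega

theorem HemisphereFiltration.exists_small_card_gt [Finite ι] [LinearOrder ι]
    (F : HemisphereFiltration T H d) (hd : 1 ≤ d) (hε : 0 < ε)
    (hf : ∀ x y, dist x y < ε → f x ≠ f (T y)) :
    ∃ l ∈ Small Set.univ ε, (d + 2) / 2 < (l.map f).toFinset.card := by
  by_contra! ht
  have := Fintype.ofFinite ι
  obtain ⟨δ, hδ, hle, hvanish⟩ := F.cupVanishing_dualCochain hd hε ht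
  obtain ⟨h, W⟩ := F.exists_tower hδ
  have hfδ : ∀ x y, dist x y < δ → f x ≠ f (T y) := fun x y hxy => hf x y (hxy.trans_le hle)
  have hone := pairing_fanCochain_prism_eq_one (c := antipodalSum T (h d)) F.involutive F.isometry
    hδ hfδ hd (fun l hl => ht l (small_mono subset_rfl hle hl)) (by omega)
    (W.antipodalSum_mem_small F.isometry le_rfl (Set.subset_univ _) (Set.mapsTo_univ _ _))
    (W.antipodalSum_mem_length le_rfl) (W.boundary_antipodalSum F.involutive le_rfl)
    (map_antipodalSum F.involutive _) (pairing_fanCochain_map_fanLabel F hδ W hfδ le_rfl)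
  have hzero := pairing_fanCochain_prism (f ∘ T) f (antipodalSum T (h d))
  simp only [hvanish h W, mul_zero, Finset.sum_const_zero] at hzero
  exact zero_ne_one (hzero.symm.trans hone)

end Sphere

section Lebesgue

variable {X ι : Type*} [PseudoMetricSpace X] [CompactSpace X] [Finite ι] {A : ι → Set X}

theorem exists_forall_mem_of_dist_lt (hA : ∀ i, IsClosed (A i)) :
    ∃ ε > 0, ∀ y, ∃ w, ∀ z, dist z y < ε → ∀ i, z ∈ A i → w ∈ A i := by
  obtain ⟨ε, hε, hball⟩ := lebesgue_number_lemma_of_metric (s := Set.univ)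
    (c := fun w => ⋂ i : {i // w ∉ A i}, (A i)ᶜ) isCompact_univ
    (fun w => isOpen_iInter_of_finite fun i => (hA i).isOpen_compl)
    fun w _ => Set.mem_iUnion.2 ⟨w, Set.mem_iInter.2 fun i => i.2⟩
  refine ⟨ε, hε, fun y => ?_⟩
  obtain ⟨w, hw⟩ := hball y (Set.mem_univ y)
  exact ⟨w, fun z hz i hzi => by_contra fun hwi => Set.mem_iInter.1 (hw hz) ⟨i, hwi⟩ hzi⟩

end Lebesgue

section Hemisphere

/-- The hemisphere of dimension `k` in the unit sphere: the points whose coordinates with index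
larger than `k` vanish and whose coordinate with index `k` is nonnegative. -/
def hemisphere (d k : ℕ) : Set (Metric.sphere (0 : EuclideanSpace ℝ (Fin (d + 1))) 1) :=
  {x | ∀ i : Fin (d + 1), (k < i → x.1 i = 0) ∧ (i = k → 0 ≤ x.1 i)}

theorem isClosed_hemisphere (d k : ℕ) : IsClosed (hemisphere d k) := by
  have hcont (i : Fin (d + 1)) :
      Continuous fun x : Metric.sphere (0 : EuclideanSpace ℝ (Fin (d + 1))) 1 => x.1 i := by
    fun_prop
  simp only [hemisphere, Set.ofPred_forall, Set.ofPred_and]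
  exact isClosed_iInter fun i =>
    (isClosed_iInter fun _ => isClosed_eq (hcont i) continuous_const).inter
      (isClosed_iInter fun _ => isClosed_le continuous_const (hcont i))

theorem contractibleSpace_of_leftInverse {Y Z : Type*} [TopologicalSpace Y] [TopologicalSpace Z]
    [ContractibleSpace Z] (r : C(Z, Y)) (s : C(Y, Z)) (h : Function.LeftInverse r s) :
    ContractibleSpace Y := by
  rw [contractible_iff_id_nullhomotopic]
  have hid : (r.comp (.id Z)).comp s = .id Y := ContinuousMap.ext h
  exact hid ▸ ((id_nullhomotopic Z).comp_right r).comp_left s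

/-- The union of the open rays from the origin through the points of `hemisphere d k`, which unlike
the hemisphere itself is star-convex. -/
def puncturedHalfspace (d k : ℕ) : Set (EuclideanSpace ℝ (Fin (d + 1))) :=
  {v | v ≠ 0 ∧ ∀ i : Fin (d + 1), (k < i → v i = 0) ∧ (i = k → 0 ≤ v i)}

theorem starConvex_puncturedHalfspace (d : ℕ) (k : Fin (d + 1)) :
    StarConvex ℝ (EuclideanSpace.single k 1) (puncturedHalfspace d k) := by
  rintro v ⟨hv, hvk⟩ a b ha hb hab
  refine ⟨fun hzero => ?_, fun i => ⟨fun hi => ?_, fun hi => ?_⟩⟩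
  · have hk : a + b * v k = 0 := by simpa using congrArg (fun w => w k) hzero
    have ha0 : a = 0 := by linarith [mul_nonneg hb ((hvk k).2 rfl)]
    refine hv ?_
    simpa [ha0, show b = 1 by linarith] using hzero
  · simp [(hvk i).1 hi, Fin.ne_of_gt hi]
  · obtain rfl := Fin.ext hi
    simpa using add_nonneg ha (mul_nonneg hb ((hvk i).2 rfl))

theorem contractibleSpace_hemisphere (d : ℕ) (k : Fin (d + 1)) :
    ContractibleSpace (hemisphere d k) := by
  have hpole : EuclideanSpace.single k (1 : ℝ) ∈ puncturedHalfspace d k :=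
    ⟨by simp, fun i => ⟨fun hi => by simp [Fin.ne_of_gt hi], fun hi => by simp [Fin.ext hi]⟩⟩
  have := (starConvex_puncturedHalfspace d k).contractibleSpace ⟨_, hpole⟩
  let normalize : C(puncturedHalfspace d k, hemisphere d k) :=
    { toFun v := ⟨⟨‖v.1‖⁻¹ • v.1, by simp [norm_smul, v.2.1]⟩, fun i =>
        ⟨fun hi => by simp [(v.2.2 i).1 hi], fun hi =>
          mul_nonneg (inv_nonneg.2 (norm_nonneg _)) ((v.2.2 i).2 hi)⟩⟩
      continuous_toFun := by
        have hnorm : Continuous fun v : puncturedHalfspace d k => ‖v.1‖⁻¹ :=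
          continuous_subtype_val.norm.inv₀ fun v => norm_ne_zero_iff.2 v.2.1
        fun_prop }
  let incl : C(hemisphere d k, puncturedHalfspace d k) :=
    ⟨fun x => ⟨x.1.1, ne_zero_of_mem_unit_sphere x.1, x.2⟩, by fun_prop⟩
  exact contractibleSpace_of_leftInverse normalize incl fun x => by
    simp [normalize, incl]

theorem hemisphereFiltration_sphere (d : ℕ) :
    HemisphereFiltration (fun x => -x) (hemisphere d) d where
  involutive := neg_neg
  isometry := Isometry.of_dist_eq fun x y => dist_neg_neg x.1 y.1
  subset_succ j _ x hx i :=
    ⟨fun hi => (hx i).1 (by omega), fun hi => ((hx i).1 (by omega)).ge⟩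
  mapsTo_succ j _ x hx i :=
    ⟨fun hi => by simpa using (hx i).1 (by omega),
      fun hi => by simpa using ((hx i).1 (by omega)).le⟩
  chainContractible j hj :=
    have := contractibleSpace_hemisphere d ⟨j, Nat.lt_succ_of_le hj⟩
    chainContractible_of_isCompact (isClosed_hemisphere d j).isCompact

end Hemisphere

end LusternikSchnirelman

theorem stmt5_general {X ι : Type*} [PseudoMetricSpace X] [CompactSpace X] [Finite ι] {T : X → X}
    {H : ℕ → Set X} {d : ℕ} (F : LusternikSchnirelman.HemisphereFiltration T H d) (hd : 1 ≤ d)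
    {A : ι → Set X} (hclosed : ∀ i, IsClosed (A i)) (hdisj : ∀ i, Disjoint (A i) (T ⁻¹' A i))
    (hcover : ⋃ i, A i = Set.univ) :
    ∃ S : Finset ι, S.card = (d + 4) / 2 ∧ (⋂ i ∈ S, A i).Nonempty := by
  let : LinearOrder ι := WellOrderingRel.isWellOrder.linearOrder
  obtain ⟨ε, hε, hsep⟩ := LusternikSchnirelman.exists_forall_mem_of_dist_lt
    (A := Sum.elim A fun i => T ⁻¹' A i) <|
      Sum.forall.2 ⟨hclosed, fun i => (hclosed i).preimage F.isometry.continuous⟩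
  have hmem (x : X) : ∃ i, x ∈ A i := Set.mem_iUnion.1 (hcover ▸ Set.mem_univ x)
  choose f hf using hmem
  have hfT (x y : X) (hxy : dist x y < ε) : f x ≠ f (T y) := by
    intro heq
    obtain ⟨w, hw⟩ := hsep y
    exact Set.disjoint_left.1 (hdisj (f x)) (hw x hxy (.inl (f x)) (hf x))
      (hw y (by simpa using hε) (.inr (f x)) (heq ▸ hf (T y)))
  obtain ⟨l, hl, hcard⟩ := F.exists_small_card_gt hd hε hfT
  obtain ⟨S, hSl, hS⟩ := Finset.exists_subset_card_eq (s := (l.map f).toFinset)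
    (n := (d + 4) / 2) (by omega)
  obtain ⟨y, hy⟩ : ∃ y, y ∈ l := List.exists_mem_of_ne_nil l (by rintro rfl; simp at hcard)
  obtain ⟨w, hw⟩ := hsep y
  refine ⟨S, hS, w, Set.mem_iInter₂.2 fun i hi => ?_⟩
  obtain ⟨x, hx, rfl⟩ := List.mem_map.1 (List.mem_toFinset.1 (hSl hi))
  exact hw x ((hl x hx).2 y hy) (.inl (f x)) (hf x)

/-- Local Lusternik–Schnirelman theorem: if closed sets `A₁,…,A_m ⊆ S^d` (`d ≥ 1`) satisfy
`A_i ∩ (-A_i) = ∅` and cover `S^d` by themselves, then some `⌈(d+3)/2⌉` of them have a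
common point. -/
theorem stmt5 (d m : ℕ) (hd : 1 ≤ d)
    (A : Fin m → Set (EuclideanSpace ℝ (Fin (d + 1))))
    (hclosed : ∀ i, IsClosed (A i))
    (hsub : ∀ i, A i ⊆ Metric.sphere (0 : EuclideanSpace ℝ (Fin (d + 1))) 1)
    (hdisj : ∀ i, A i ∩ (-A i) = ∅)
    (hcover : Metric.sphere (0 : EuclideanSpace ℝ (Fin (d + 1))) 1 ⊆ ⋃ i, A i) :
    ∃ S : Finset (Fin m), S.card = (d + 4) / 2 ∧ (⋂ i ∈ S, A i).Nonempty := by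
  obtain ⟨S, hS, x, hx⟩ := stmt5_general (LusternikSchnirelman.hemisphereFiltration_sphere d) hd
    (A := fun i => Subtype.val ⁻¹' A i) (fun i => (hclosed i).preimage continuous_subtype_val)
    (fun i => Set.disjoint_left.2 fun x hx hx' => (hdisj i).subset ⟨hx, hx'⟩)
    (by rw [← Set.preimage_iUnion]; exact Set.eq_univ_of_forall fun x => hcover x.2)
  exact ⟨S, hS, x, by simpa using hx⟩
end

section
/- Let f₁, ..., f_m : S^d → ℝ be continuous odd maps without a common zero. Then there exist a point x₀ ∈ S^d and indices i₁ < i₂ < ... < i_{d+1} such that each f_{i_j}(x₀) has maximal absolute value among |f₁(x₀)|, ..., |f_m(x₀)|, and the signs of f_{i_1}(x₀), ..., f_{i_{d+1}}(x₀) alternate. -/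
/-!
Mod 2 chains whose simplices have close vertices play the role of triangulations of `S^d`. A fine
`(n + 1)`-dimensional hemisphere is found by induction: an `n`-dimensional hemisphere in the equator
and its antipode add up to a fine cycle, which bounds a fine chain because the equator can be
contracted to a pole.

Label each point equivariantly by an index and a sign, and count modulo 2 the simplices whose
labels, sorted by index, alternate in sign with a prescribed first sign: let `F_b` be the number of
those whose first sign is `-b`. Then `F_b (∂ c) = F_b c + F_{-b} c`, while the antipode exchanges
`F_b` and `F_{-b}`. Hence `F_b + F_{-b}` takes the same value on all hemispheres, namely its value
`1` on a point, and every fine hemisphere contains an alternating simplex (Ky Fan's lemma).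

Apply this to the closed sets `C_{i,s}` where `f_i` has sign `s` and maximal absolute value. If the
chain is finer than a Lebesgue number of their complements, the sets met by a simplex have a common
point.
-/

open Topology Uniformity

/-- Mod 2 chains of ordered simplices, a simplex being the list of its vertices. Repeated vertices
are allowed and degenerate simplices are not divided out; the empty list is the simplex of
dimension `-1`, so that the chain complex is augmented. -/
abbrev ListChain (X : Type*) := List X →₀ ZMod 2

namespace ListChain

variable {X Y Z M : Type*} [AddCommGroup M] [Module (ZMod 2) M]

/-- The chain consisting of a single simplex. -/
noncomputable def simplex (l : List X) : ListChain X := Finsupp.single l 1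

theorem linearMap_ext {f g : ListChain X →ₗ[ZMod 2] M}
    (h : ∀ l, f (simplex l) = g (simplex l)) : f = g :=
  Finsupp.lhom_ext' fun l => LinearMap.ext_ring (h l)

/-- The linear extension of a function of simplices. -/
noncomputable def lift (f : List X → M) : ListChain X →ₗ[ZMod 2] M :=
  Finsupp.linearCombination (ZMod 2) f

@[simp] theorem lift_simplex (f : List X → M) (l : List X) : lift f (simplex l) = f l := by
  simp [lift, simplex]

/-- The chains all of whose simplices lie in a given set. -/
noncomputable abbrev supported (A : Set (List X)) : Submodule (ZMod 2) (ListChain X) :=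
  Finsupp.supported (ZMod 2) (ZMod 2) A

theorem simplex_mem_supported {A : Set (List X)} {l : List X} (hl : l ∈ A) :
    simplex l ∈ supported A :=
  Finsupp.single_mem_supported _ _ hl

theorem supported_le {A : Set (List X)} {S : Submodule (ZMod 2) (ListChain X)}
    (h : ∀ l ∈ A, simplex l ∈ S) : supported A ≤ S := by
  rw [supported, Finsupp.supported_eq_span_single, Submodule.span_le]
  rintro _ ⟨l, hl, rfl⟩
  exact h l hl

theorem map_mem_of_mem_supported {A : Set (List X)} {S : Submodule (ZMod 2) M}
    {T : ListChain X →ₗ[ZMod 2] M} (h : ∀ l ∈ A, T (simplex l) ∈ S) {c : ListChain X}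
    (hc : c ∈ supported A) : T c ∈ S :=
  supported_le (S := S.comap T) h hc

theorem map_eq_of_mem_supported {A : Set (List X)} {T T' : ListChain X →ₗ[ZMod 2] M}
    (h : ∀ l ∈ A, T (simplex l) = T' (simplex l)) {c : ListChain X} (hc : c ∈ supported A) :
    T c = T' c :=
  supported_le (S := LinearMap.eqLocus T T') h hc

section Boundary

/-- The cone with apex `v`, which prepends `v` to every simplex. -/
noncomputable def cone (v : X) : ListChain X →ₗ[ZMod 2] ListChain X :=
  lift fun l => simplex (v :: l)

@[simp] theorem cone_simplex (v : X) (l : List X) : cone v (simplex l) = simplex (v :: l) :=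
  lift_simplex _ l

/-- The sum of the facets of a simplex. -/
noncomputable def facets : List X → ListChain X
  | [] => 0
  | v :: l => simplex l + cone v (facets l)

/-- The boundary operator. -/
noncomputable def boundary : ListChain X →ₗ[ZMod 2] ListChain X := lift facets

@[simp] theorem boundary_simplex_nil : boundary (simplex ([] : List X)) = 0 := lift_simplex _ _

theorem boundary_simplex_cons (v : X) (l : List X) :
    boundary (simplex (v :: l)) = simplex l + cone v (boundary (simplex l)) := by
  simp [boundary, facets]

theorem boundary_cone (v : X) (c : ListChain X) :
    boundary (cone v c) = c + cone v (boundary c) := by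
  have : boundary ∘ₗ cone v = LinearMap.id + cone v ∘ₗ boundary :=
    linearMap_ext fun l => by simp [boundary_simplex_cons]
  exact LinearMap.congr_fun this c

theorem boundary_simplex_mem_supported_sublist (l : List X) :
    boundary (simplex l) ∈ supported {l' : List X | l'.Sublist l} := by
  induction l with
  | nil => simp
  | cons v l ih =>
    rw [boundary_simplex_cons]
    refine add_mem (simplex_mem_supported (List.sublist_cons_self v l)) ?_
    refine map_mem_of_mem_supported (fun l' hl' => ?_) ih
    rw [cone_simplex]
    exact simplex_mem_supported (List.Sublist.cons_cons v hl')

theorem map_boundary_eq_of_perm {T : ListChain X →ₗ[ZMod 2] M}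
    (hT : ∀ l l' : List X, l.Perm l' → T (simplex l) = T (simplex l')) {l l' : List X}
    (h : l.Perm l') : T (boundary (simplex l)) = T (boundary (simplex l')) := by
  induction h generalizing T with
  | nil => rfl
  | @cons v l l' h ih =>
    have ih' : T (cone v (boundary (simplex l))) = T (cone v (boundary (simplex l'))) :=
      ih (T := T ∘ₗ cone v) fun l l' h => by simpa using hT _ _ (h.cons v)
    simp only [boundary_simplex_cons, map_add, hT _ _ h, ih']
  | swap v w l =>
    have hswap : T ∘ₗ cone w ∘ₗ cone v = T ∘ₗ cone v ∘ₗ cone w :=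
      linearMap_ext fun l => by simpa using hT _ _ (List.Perm.swap v w l)
    have hlast : T (cone w (cone v (boundary (simplex l)))) =
        T (cone v (cone w (boundary (simplex l)))) := LinearMap.congr_fun hswap _
    simp only [boundary_simplex_cons, map_add, cone_simplex, hlast]
    abel
  | trans _ _ ih₁ ih₂ => exact (ih₁ hT).trans (ih₂ hT)

end Boundary

section Map

/-- The chain map induced by a map of vertices. -/
noncomputable def map (φ : X → Y) : ListChain X →ₗ[ZMod 2] ListChain Y :=
  lift fun l => simplex (l.map φ)

@[simp] theorem map_simplex (φ : X → Y) (l : List X) : map φ (simplex l) = simplex (l.map φ) :=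
  lift_simplex _ l

theorem map_cone (φ : X → Y) (v : X) (c : ListChain X) :
    map φ (cone v c) = cone (φ v) (map φ c) := by
  have : map φ ∘ₗ cone v = cone (φ v) ∘ₗ map φ := linearMap_ext fun l => by simp
  exact LinearMap.congr_fun this c

theorem boundary_map (φ : X → Y) (c : ListChain X) : boundary (map φ c) = map φ (boundary c) := by
  have : boundary ∘ₗ map φ = map φ ∘ₗ boundary := linearMap_ext fun l => by
    induction l with
    | nil => simp
    | cons v l ih =>
      simp only [LinearMap.comp_apply, map_simplex, List.map_cons, boundary_simplex_cons, map_add,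
        map_cone] at ih ⊢
      rw [ih]
  exact LinearMap.congr_fun this c

theorem map_map (ψ : Y → Z) (φ : X → Y) (c : ListChain X) : map ψ (map φ c) = map (ψ ∘ φ) c := by
  have : map ψ ∘ₗ map φ = map (ψ ∘ φ) := linearMap_ext fun l => by simp
  exact LinearMap.congr_fun this c

theorem map_neg_map_neg [InvolutiveNeg X] (c : ListChain X) :
    map Neg.neg (map Neg.neg c) = c := by
  have : map Neg.neg ∘ₗ map Neg.neg = (LinearMap.id : ListChain X →ₗ[ZMod 2] _) :=
    linearMap_ext fun l => by simp
  exact LinearMap.congr_fun this c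

end Map

section Prism

/-- The prism over a simplex whose bottom is mapped by `φ` and whose top is mapped by `ψ`. -/
noncomputable def prismSimplices (φ ψ : X → Y) : List X → ListChain Y
  | [] => 0
  | v :: l => simplex (φ v :: ψ v :: l.map ψ) + cone (φ v) (prismSimplices φ ψ l)

/-- The prism operator, a chain homotopy between `map φ` and `map ψ`. -/
noncomputable def prism (φ ψ : X → Y) : ListChain X →ₗ[ZMod 2] ListChain Y :=
  lift (prismSimplices φ ψ)

@[simp] theorem prism_simplex_nil (φ ψ : X → Y) : prism φ ψ (simplex []) = 0 := lift_simplex _ _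

theorem prism_simplex_cons (φ ψ : X → Y) (v : X) (l : List X) :
    prism φ ψ (simplex (v :: l)) =
      simplex (φ v :: ψ v :: l.map ψ) + cone (φ v) (prism φ ψ (simplex l)) := by
  simp [prism, prismSimplices]

theorem prism_cone (φ ψ : X → Y) (v : X) (c : ListChain X) :
    prism φ ψ (cone v c) = cone (φ v) (cone (ψ v) (map ψ c)) + cone (φ v) (prism φ ψ c) := by
  have : prism φ ψ ∘ₗ cone v = cone (φ v) ∘ₗ cone (ψ v) ∘ₗ map ψ + cone (φ v) ∘ₗ prism φ ψ :=
    linearMap_ext fun l => by simp [prism_simplex_cons]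
  exact LinearMap.congr_fun this c

theorem boundary_prism (φ ψ : X → Y) (c : ListChain X) :
    boundary (prism φ ψ c) = prism φ ψ (boundary c) + map φ c + map ψ c := by
  have : boundary ∘ₗ prism φ ψ = prism φ ψ ∘ₗ boundary + map φ + map ψ := linearMap_ext fun l => by
    induction l with
    | nil => simp [ZModModule.add_self]
    | cons v l ih =>
      simp only [LinearMap.comp_apply, LinearMap.add_apply, map_simplex] at ih
      have hcancel := ZModModule.add_self (cone (φ v) (simplex (l.map ψ)))
      simp only [LinearMap.comp_apply, LinearMap.add_apply, prism_simplex_cons,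
        boundary_simplex_cons, map_add, boundary_cone, prism_cone, ih, map_simplex, List.map_cons,
        cone_simplex, ← boundary_map] at hcancel ⊢
      linear_combination (norm := module) hcancel
  exact LinearMap.congr_fun this c

theorem prism_simplex_mem_supported (φ ψ : X → Y) (l : List X) :
    prism φ ψ (simplex l) ∈ supported {l' : List Y |
      l'.length = l.length + 1 ∧ ∀ y ∈ l', ∃ x ∈ l, y = φ x ∨ y = ψ x} := by
  induction l with
  | nil => simp
  | cons v l ih =>
    rw [prism_simplex_cons]
    refine add_mem (simplex_mem_supported ⟨by simp, by grind⟩) ?_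
    refine map_mem_of_mem_supported (fun l' hl' => ?_) ih
    obtain ⟨hlength, hvertex⟩ := hl'
    rw [cone_simplex]
    exact simplex_mem_supported ⟨by simp [hlength], by grind⟩

end Prism

section Small

variable {U : SetRel X X} {V : SetRel Y Y} {n : ℕ}

/-- The chains of simplices with `n` vertices, any two of which are `V`-close; they have
dimension `n - 1`. -/
noncomputable abbrev small (V : SetRel X X) (n : ℕ) : Submodule (ZMod 2) (ListChain X) :=
  supported {l | l.length = n ∧ ∀ x ∈ l, ∀ y ∈ l, (x, y) ∈ V}

theorem small_mono {U V : SetRel X X} (h : U ⊆ V) : small U n ≤ small V n :=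
  Finsupp.supported_mono fun _ hl => ⟨hl.1, fun x hx y hy => h (hl.2 x hx y hy)⟩

theorem map_mem_small {φ : X → Y} (h : ∀ x y, (x, y) ∈ U → (φ x, φ y) ∈ V) {c : ListChain X}
    (hc : c ∈ small U n) : map φ c ∈ small V n := by
  refine map_mem_of_mem_supported (fun l hl => ?_) hc
  obtain ⟨hlength, hclose⟩ := hl
  rw [map_simplex]
  refine simplex_mem_supported ⟨by simpa using hlength, ?_⟩
  simp only [List.mem_map]
  rintro _ ⟨x, hx, rfl⟩ _ ⟨y, hy, rfl⟩
  exact h x y (hclose x hx y hy)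

theorem prism_mem_small {φ ψ : X → Y}
    (hφφ : ∀ x y, (x, y) ∈ U → (φ x, φ y) ∈ V) (hφψ : ∀ x y, (x, y) ∈ U → (φ x, ψ y) ∈ V)
    (hψφ : ∀ x y, (x, y) ∈ U → (ψ x, φ y) ∈ V) (hψψ : ∀ x y, (x, y) ∈ U → (ψ x, ψ y) ∈ V)
    {c : ListChain X} (hc : c ∈ small U n) : prism φ ψ c ∈ small V (n + 1) := by
  refine map_mem_of_mem_supported (fun l hl => ?_) hc
  obtain ⟨hlength, hclose⟩ := hl
  refine Finsupp.supported_mono ?_ (prism_simplex_mem_supported φ ψ l)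
  rintro l' ⟨hlength', hvertex⟩
  refine ⟨by rw [hlength', hlength], fun x' hx' y' hy' => ?_⟩
  obtain ⟨x, hx, hxx'⟩ := hvertex x' hx'
  obtain ⟨y, hy, hyy'⟩ := hvertex y' hy'
  have hxy := hclose x hx y hy
  rcases hxx' with rfl | rfl <;> rcases hyy' with rfl | rfl
  exacts [hφφ x y hxy, hφψ x y hxy, hψφ x y hxy, hψψ x y hxy]

theorem cone_map_const_mem_small {p : Y} (hp : (p, p) ∈ V) {c : ListChain X}
    (hc : c ∈ small U n) : cone p (map (fun _ => p) c) ∈ small V (n + 1) := by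
  refine map_mem_of_mem_supported (T := cone p ∘ₗ map fun _ => p) (fun l hl => ?_) hc
  rw [LinearMap.comp_apply, map_simplex, cone_simplex]
  have hvertex : ∀ y ∈ p :: l.map fun _ => p, y = p := by simp
  refine simplex_mem_supported ⟨by simp [hl.1], fun x hx y hy => ?_⟩
  rwa [hvertex x hx, hvertex y hy]

end Small

section Filling

variable [UniformSpace X] [CompactSpace X] [UniformSpace Y]

/-- Homotopic maps, evaluated on a sufficiently fine cycle, are joined by a chain of fine prisms,
one for each step of a path through the connected unit interval. -/
theorem exists_small_boundary_eq_map_add_map {f g : C(X, Y)} (H : f.Homotopy g)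
    {V : SetRel Y Y} (hV : V ∈ 𝓤 Y) :
    ∃ U ∈ 𝓤 X, ∀ n, ∀ c ∈ small U n, boundary c = 0 →
      ∃ e ∈ small V (n + 1), boundary e = map f c + map g c := by
  obtain ⟨W, hW, U, hU, hWU⟩ := entourageProd_subset
    (CompactSpace.uniformContinuous_of_continuous H.continuous hV)
  have hclose {s t : unitInterval} (hst : (s, t) ∈ W) (x y : X) (hxy : (x, y) ∈ U) :
      (H (s, x), H (t, y)) ∈ V := @hWU ((s, x), (t, y)) ⟨hst, hxy⟩
  refine ⟨U, hU, fun n c hc hcycle => ?_⟩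
  let P (s t : unitInterval) : Prop :=
    ∃ e ∈ small V (n + 1), boundary e = map (fun x => H (s, x)) c + map (fun x => H (t, x)) c
  have : Std.Symm P := ⟨fun s t ⟨e, he, hbe⟩ => ⟨e, he, hbe.trans (add_comm _ _)⟩⟩
  have hP_trans : IsTrans _ P := ⟨fun r s t ⟨e, he, hbe⟩ ⟨e', he', hbe'⟩ =>
    ⟨e + e', add_mem he he', by
      have hcancel := ZModModule.add_self (map (fun x => H (s, x)) c)
      rw [map_add, hbe, hbe']
      linear_combination (norm := module) hcancel⟩⟩
  have hP_local (s : unitInterval) : ∀ᶠ t in 𝓝 s, P s t := by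
    filter_upwards [mem_nhds_left s hW, mem_nhds_right s hW] with t hst hts
    have hss : (s, s) ∈ W := refl_mem_uniformity hW
    have htt : (t, t) ∈ W := refl_mem_uniformity hW
    refine ⟨prism (fun x => H (s, x)) (fun x => H (t, x)) c, prism_mem_small (hclose hss)
      (hclose hst) (hclose hts) (hclose htt) hc, ?_⟩
    rw [boundary_prism, hcycle, map_zero, zero_add]
  simpa [P] using PreconnectedSpace.induction₂ P hP_local hP_trans 0 1

theorem exists_small_boundary_eq_map {f : C(X, Y)} (hf : f.Nullhomotopic)
    {V : SetRel Y Y} (hV : V ∈ 𝓤 Y) :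
    ∃ U ∈ 𝓤 X, ∀ n, ∀ c ∈ small U n, boundary c = 0 →
      ∃ e ∈ small V (n + 1), boundary e = map f c := by
  obtain ⟨p, ⟨H⟩⟩ := hf
  obtain ⟨U, hU, hfill⟩ := exists_small_boundary_eq_map_add_map H hV
  refine ⟨U, hU, fun n c hc hcycle => ?_⟩
  obtain ⟨e, he, hbe⟩ := hfill n c hc hcycle
  refine ⟨e + cone p (map (fun _ => p) c),
    add_mem he (cone_map_const_mem_small (refl_mem_uniformity hV) hc), ?_⟩
  have hconst : (ContinuousMap.const X p : X → Y) = fun _ => p := rfl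
  rw [map_add, hbe, hconst, boundary_cone, boundary_map, hcycle, map_zero, map_zero, add_zero,
    add_assoc, ZModModule.add_self, add_zero]

end Filling

section Hemisphere

/-- `IsHemisphere V n c` says that `c` is an `n`-dimensional `V`-small chain which, together with
its antipode, plays the role of the fundamental cycle of an `n`-sphere: a point if `n = 0`, and
otherwise a chain bounded by a hemisphere of dimension `n - 1` and its antipode. -/
inductive IsHemisphere [Neg X] (V : SetRel X X) : ℕ → ListChain X → Prop
  | point {x : X} (hx : (x, x) ∈ V) : IsHemisphere V 0 (simplex [x])
  | succ {n : ℕ} {c e : ListChain X} (hc : IsHemisphere V n c) (he : e ∈ small V (n + 2))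
      (hboundary : boundary e = c + map Neg.neg c) : IsHemisphere V (n + 1) e

namespace IsHemisphere

variable {n : ℕ}

theorem mem_small [Neg X] {V : SetRel X X} {c : ListChain X} (hc : IsHemisphere V n c) :
    c ∈ small V (n + 1) := by
  cases hc with
  | point hx => exact simplex_mem_supported ⟨rfl, by simpa using hx⟩
  | succ _ he _ => exact he

theorem boundary_add_map_neg [InvolutiveNeg X] {V : SetRel X X} {c : ListChain X}
    (hc : IsHemisphere V n c) : boundary (c + map Neg.neg c) = 0 := by
  rw [map_add, boundary_map]
  cases hc with
  | point hx => simp [boundary_simplex_cons, ZModModule.add_self]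
  | succ _ _ hboundary =>
    rw [hboundary, map_add, map_neg_map_neg, add_comm (map Neg.neg _), ZModModule.add_self]

theorem map [Neg X] [Neg Y] {U : SetRel X X} {V : SetRel Y Y} {φ : X → Y}
    (hneg : ∀ x, φ (-x) = -φ x) (hUV : ∀ x y, (x, y) ∈ U → (φ x, φ y) ∈ V) {c : ListChain X}
    (hc : IsHemisphere U n c) : IsHemisphere V n (ListChain.map φ c) := by
  induction hc with
  | point hx =>
    rw [map_simplex]
    exact point (hUV _ _ hx)
  | succ _ he hboundary ih =>
    refine ih.succ (map_mem_small hUV he) ?_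
    have hcomm : φ ∘ Neg.neg = Neg.neg ∘ φ := funext hneg
    rw [boundary_map, hboundary, map_add, map_map, map_map, hcomm]

end IsHemisphere

theorem exists_isHemisphere_succ [UniformSpace X] [CompactSpace X] [InvolutiveNeg X]
    [ContinuousNeg X] [UniformSpace Y] [Neg Y] {f : C(X, Y)} (hf : f.Nullhomotopic)
    (hneg : ∀ x, f (-x) = -f x) {n : ℕ} (hX : ∀ U ∈ 𝓤 X, ∃ c, IsHemisphere U n c)
    {V : SetRel Y Y} (hV : V ∈ 𝓤 Y) : ∃ c, IsHemisphere V (n + 1) c := by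
  obtain ⟨U, hU, hfill⟩ := exists_small_boundary_eq_map hf hV
  have hUneg := CompactSpace.uniformContinuous_of_continuous (continuous_neg (G := X)) hU
  have hUf := CompactSpace.uniformContinuous_of_continuous f.continuous hV
  obtain ⟨c, hc⟩ := hX _ (Filter.inter_mem hU (Filter.inter_mem hUneg hUf))
  have hcycle : c + map Neg.neg c ∈ small U (n + 1) :=
    add_mem (small_mono (fun _ h => h.1) hc.mem_small)
      (map_mem_small (fun _ _ h => h.2.1) hc.mem_small)
  obtain ⟨e, he, hboundary⟩ := hfill _ _ hcycle hc.boundary_add_map_neg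
  have hcomm : f ∘ Neg.neg = Neg.neg ∘ f := funext hneg
  exact ⟨e, (hc.map hneg fun _ _ h => h.2.2).succ he
    (by rw [hboundary, map_add, map_map, map_map, hcomm])⟩

end Hemisphere

section Sphere

open Metric

theorem nullhomotopic_of_inner_eq_zero {E : Type*} [NormedAddCommGroup E] [InnerProductSpace ℝ E]
    [TopologicalSpace X] (f : C(X, sphere (0 : E) 1)) {p : E} (hp : ‖p‖ = 1)
    (hf : ∀ x, inner ℝ (f x : E) p = 0) : f.Nullhomotopic := by
  let rotation (t : ℝ) (x : X) : E := Real.cos t • (f x : E) + Real.sin t • p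
  have hrotation (t : ℝ) (x : X) : rotation t x ∈ sphere (0 : E) 1 := by
    have horth : inner ℝ (Real.cos t • (f x : E)) (Real.sin t • p) = 0 := by
      rw [inner_smul_left, inner_smul_right, hf, mul_zero, mul_zero]
    rw [mem_sphere_zero_iff_norm, ← sq_eq_sq₀ (norm_nonneg _) zero_le_one, sq,
      norm_add_sq_eq_norm_sq_add_norm_sq_real horth, norm_smul, norm_smul, hp,
      norm_eq_of_mem_sphere, mul_one, mul_one, Real.norm_eq_abs, Real.norm_eq_abs,
      abs_mul_abs_self, abs_mul_abs_self, ← sq, ← sq, Real.cos_sq_add_sin_sq, one_pow]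
  refine ⟨⟨p, mem_sphere_zero_iff_norm.2 hp⟩, ⟨{
    toFun := fun z => ⟨rotation (Real.pi / 2 * z.1) z.2, hrotation _ _⟩
    continuous_toFun := by fun_prop
    map_zero_left := fun x => by simp [rotation]
    map_one_left := fun x => by simp [rotation] }⟩⟩

theorem exists_isHemisphere_sphere {E : Type*} [NormedAddCommGroup E] [InnerProductSpace ℝ E]
    {n : ℕ} (hE : Module.finrank ℝ E = n + 1) :
    ∀ V ∈ 𝓤 (sphere (0 : E) 1), ∃ c, IsHemisphere V n c := by
  intro V hV
  induction n generalizing E with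
  | zero =>
    have : Nontrivial E := Module.nontrivial_of_finrank_eq_succ hE
    obtain ⟨p, hp⟩ := (NormedSpace.sphere_nonempty (x := (0 : E))).2 zero_le_one
    exact ⟨_, .point (x := ⟨p, hp⟩) (refl_mem_uniformity hV)⟩
  | succ n ih =>
    have : Nontrivial E := Module.nontrivial_of_finrank_eq_succ hE
    have : FiniteDimensional ℝ E := Module.finite_of_finrank_eq_succ hE
    have : Fact (Module.finrank ℝ E = (n + 1) + 1) := ⟨hE⟩
    obtain ⟨p, hp⟩ := exists_norm_eq E zero_le_one
    have hp_ne : p ≠ 0 := norm_ne_zero_iff.1 (hp ▸ one_ne_zero)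
    let equator : Submodule ℝ E := (ℝ ∙ p)ᗮ
    let f : C(sphere (0 : equator) 1, sphere (0 : E) 1) :=
      { toFun := fun x => ⟨(x : equator), mem_sphere_zero_iff_norm.2 (norm_eq_of_mem_sphere x)⟩ }
    have hf : f.Nullhomotopic := nullhomotopic_of_inner_eq_zero f hp fun x =>
      Submodule.mem_orthogonal_singleton_iff_inner_left.1 x.1.2
    exact exists_isHemisphere_succ hf (fun x => rfl)
      (ih (Submodule.finrank_orthogonal_span_singleton hp_ne)) hV

end Sphere

section Fan

/-- The functional that counts the sign lists `l` for which `b :: l` alternates. -/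
noncomputable def alternation (b : ℤˣ) : ListChain ℤˣ →ₗ[ZMod 2] ZMod 2 :=
  lift fun l => if (b :: l).IsChain (· ≠ ·) then 1 else 0

theorem alternation_simplex_cons (b s : ℤˣ) (l : List ℤˣ) :
    alternation b (simplex (s :: l)) = if s = -b then alternation (-b) (simplex l) else 0 := by
  rcases eq_or_ne s (-b) with rfl | hs
  · simp [alternation, Int.units_ne_iff_eq_neg]
  · have hbs : b = s := by rw [Int.units_ne_iff_eq_neg.1 hs, neg_neg]
    simp [alternation, hbs]

theorem alternation_cone (b s : ℤˣ) (c : ListChain ℤˣ) :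
    alternation b (cone s c) = if s = -b then alternation (-b) c else 0 := by
  have : alternation b ∘ₗ cone s = if s = -b then alternation (-b) else 0 :=
    linearMap_ext fun l => by
      rw [LinearMap.comp_apply, cone_simplex, alternation_simplex_cons]
      split_ifs <;> rfl
  rw [← LinearMap.comp_apply, this]
  split_ifs <;> rfl

theorem alternation_boundary (b : ℤˣ) (c : ListChain ℤˣ) :
    alternation b (boundary c) = alternation b c + alternation (-b) c := by
  suffices ∀ b, alternation b ∘ₗ boundary = alternation b + alternation (-b) from
    LinearMap.congr_fun (this b) c
  refine fun b => linearMap_ext fun l => ?_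
  induction l generalizing b with
  | nil => simp [alternation, ZModModule.add_self]
  | cons s l ih =>
    simp only [LinearMap.comp_apply, LinearMap.add_apply] at ih ⊢
    rw [boundary_simplex_cons, map_add, alternation_cone, alternation_simplex_cons,
      alternation_simplex_cons, ih, neg_neg]
    rcases eq_or_ne s (-b) with rfl | hs
    · have hcancel := ZModModule.add_self (alternation b (simplex l))
      rw [if_pos rfl, if_pos rfl, if_neg (neg_units_ne_self b)]
      linear_combination hcancel
    · rw [if_neg hs, if_neg hs, if_pos (Int.units_ne_iff_eq_neg.1 hs |>.trans (neg_neg b)),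
        zero_add, add_zero]

theorem alternation_map_neg (b : ℤˣ) (l : List ℤˣ) :
    alternation b (simplex (l.map Neg.neg)) = alternation (-b) (simplex l) := by
  have hmap : b :: l.map Neg.neg = (-b :: l).map Neg.neg := by simp
  simp only [alternation, lift_simplex, hmap, List.isChain_map, ne_eq, neg_inj]

variable {L : Type*} [LinearOrder L] (sgn : L → ℤˣ)

/-- The functional that counts the lists of labels which alternate in sign, starting with `-b`,
after being sorted. -/
noncomputable def fan (b : ℤˣ) : ListChain L →ₗ[ZMod 2] ZMod 2 :=
  lift fun l => alternation b (simplex ((l.insertionSort (· ≤ ·)).map sgn))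

theorem fan_simplex_eq_of_perm (b : ℤˣ) {l l' : List L} (h : l.Perm l') :
    fan sgn b (simplex l) = fan sgn b (simplex l') := by
  have hsort : l.insertionSort (· ≤ ·) = l'.insertionSort (· ≤ ·) :=
    List.Perm.eq_of_pairwise (fun _ _ _ _ => le_antisymm) (List.pairwise_insertionSort _ _)
      (List.pairwise_insertionSort _ _)
      ((List.perm_insertionSort _ l).trans (h.trans (List.perm_insertionSort _ l').symm))
  rw [fan, lift_simplex, lift_simplex, hsort]

theorem fan_simplex_of_pairwise (b : ℤˣ) {l : List L} (h : l.Pairwise (· ≤ ·)) :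
    fan sgn b (simplex l) = alternation b (map sgn (simplex l)) := by
  rw [fan, lift_simplex, h.insertionSort_eq, map_simplex]

theorem fan_boundary (b : ℤˣ) (c : ListChain L) :
    fan sgn b (boundary c) = fan sgn b c + fan sgn (-b) c := by
  suffices fan sgn b ∘ₗ boundary = fan sgn b + fan sgn (-b) from LinearMap.congr_fun this c
  refine linearMap_ext fun l => ?_
  have hperm : l.Perm (l.insertionSort (· ≤ ·)) := (List.perm_insertionSort _ l).symm
  have hsorted : (l.insertionSort (· ≤ ·)).Pairwise (· ≤ ·) := List.pairwise_insertionSort _ l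
  generalize l.insertionSort (· ≤ ·) = l' at hperm hsorted
  calc fan sgn b (boundary (simplex l))
      = fan sgn b (boundary (simplex l')) :=
        map_boundary_eq_of_perm (fun _ _ h => fan_simplex_eq_of_perm sgn b h) hperm
    _ = (alternation b ∘ₗ map sgn) (boundary (simplex l')) :=
        map_eq_of_mem_supported
          (fun _ h => fan_simplex_of_pairwise sgn b (List.Pairwise.sublist h hsorted))
          (boundary_simplex_mem_supported_sublist l')
    _ = alternation b (map sgn (simplex l')) + alternation (-b) (map sgn (simplex l')) := by
        rw [LinearMap.comp_apply, ← boundary_map, alternation_boundary]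
    _ = fan sgn b (simplex l) + fan sgn (-b) (simplex l) := by
        rw [fan_simplex_eq_of_perm sgn b hperm, fan_simplex_eq_of_perm sgn (-b) hperm,
          fan_simplex_of_pairwise sgn b hsorted, fan_simplex_of_pairwise sgn (-b) hsorted]

theorem fan_map_simplex (b : ℤˣ) (lab : X → L) (l : List X) :
    fan sgn b (map lab (simplex l)) =
      alternation b (simplex ((l.insertionSort (lab · ≤ lab ·)).map (sgn ∘ lab))) := by
  rw [fan, map_simplex, lift_simplex,
    ← List.map_insertionSort (lab · ≤ lab ·) (· ≤ ·) lab l (fun _ _ _ _ => Iff.rfl), List.map_map]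

variable {sgn} {lab : X → L} [Neg X] {V : SetRel X X} {n : ℕ} {c : ListChain X}

theorem fan_map_map_neg (hsgn : ∀ x, sgn (lab (-x)) = -sgn (lab x))
    (hlab : ∀ x y, (x, y) ∈ V → (lab x ≤ lab y ↔ lab (-x) ≤ lab (-y))) (b : ℤˣ)
    (hc : c ∈ small V n) :
    fan sgn b (map lab (map Neg.neg c)) = fan sgn (-b) (map lab c) := by
  refine map_eq_of_mem_supported (T := fan sgn b ∘ₗ map lab ∘ₗ map Neg.neg)
    (T' := fan sgn (-b) ∘ₗ map lab) (fun l hl => ?_) hc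
  have hsort : (l.map Neg.neg).insertionSort (lab · ≤ lab ·) =
      (l.insertionSort (lab · ≤ lab ·)).map Neg.neg :=
    (List.map_insertionSort (lab · ≤ lab ·) (lab · ≤ lab ·) Neg.neg l fun x hx y hy =>
      hlab x y (hl.2 x hx y hy)).symm
  have hcomm : (sgn ∘ lab) ∘ Neg.neg = Neg.neg ∘ sgn ∘ lab := funext hsgn
  simp only [LinearMap.comp_apply]
  rw [map_simplex Neg.neg, fan_map_simplex, fan_map_simplex, hsort, List.map_map, hcomm,
    ← List.map_map, alternation_map_neg]

theorem IsHemisphere.fan_add_fan_neg (hc : IsHemisphere V n c)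
    (hsgn : ∀ x, sgn (lab (-x)) = -sgn (lab x))
    (hlab : ∀ x y, (x, y) ∈ V → (lab x ≤ lab y ↔ lab (-x) ≤ lab (-y))) (b : ℤˣ) :
    fan sgn b (ListChain.map lab c) + fan sgn (-b) (ListChain.map lab c) = 1 := by
  rw [← fan_boundary, boundary_map]
  induction hc with
  | point => simp [boundary_simplex_cons, fan, alternation]
  | succ hc _ hboundary ih =>
    rw [hboundary, map_add, map_add, fan_map_map_neg hsgn hlab b hc.mem_small, ← fan_boundary,
      boundary_map, ih]

theorem IsHemisphere.exists_alternating_list (hc : IsHemisphere V n c)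
    (hsgn : ∀ x, sgn (lab (-x)) = -sgn (lab x))
    (hlab : ∀ x y, (x, y) ∈ V → (lab x ≤ lab y ↔ lab (-x) ≤ lab (-y))) :
    ∃ l : List X, l.length = n + 1 ∧ (∀ x ∈ l, ∀ y ∈ l, (x, y) ∈ V) ∧
      l.Pairwise (lab · ≤ lab ·) ∧ ∃ b, (b :: l.map (sgn ∘ lab)).IsChain (· ≠ ·) := by
  by_contra! hnone
  have hzero (b : ℤˣ) : fan sgn b (ListChain.map lab c) = 0 := by
    refine map_eq_of_mem_supported (T := fan sgn b ∘ₗ ListChain.map lab) (T' := 0) ?_ hc.mem_small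
    rintro l ⟨hlength, hclose⟩
    have : Std.Total (lab · ≤ lab ·) := ⟨fun x y => le_total (lab x) (lab y)⟩
    have : IsTrans X (lab · ≤ lab ·) := ⟨fun _ _ _ => le_trans⟩
    have hnot := hnone (l.insertionSort (lab · ≤ lab ·)) (by simpa using hlength)
      (by simpa using hclose) (List.pairwise_insertionSort _ l) b
    rw [LinearMap.comp_apply, fan_map_simplex, alternation, lift_simplex, if_neg hnot]
    rfl
  have hone := hc.fan_add_fan_neg hsgn hlab 1
  rw [hzero, hzero, add_zero] at hone
  exact zero_ne_one hone

end Fan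

section Covering

theorem getElem_eq_of_isChain_ne {b : ℤˣ} {l : List ℤˣ} (h : (b :: l).IsChain (· ≠ ·)) (j : ℕ)
    (hj : j < l.length) : l[j] = b * (-1) ^ (j + 1) := by
  induction l generalizing b j with
  | nil => simp at hj
  | cons s l ih =>
    obtain ⟨hbs, hl⟩ := List.isChain_cons_cons.1 h
    have hs : s = -b := Int.units_ne_iff_eq_neg.1 hbs.symm
    cases j with
    | zero => simp [hs]
    | succ j => simp [ih hl, hs, pow_succ]

variable {I : Type*} {n : ℕ}

theorem IsHemisphere.exists_strictMono_alternating [LinearOrder I] [Neg X] {V : SetRel X X}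
    {c : ListChain X} (hc : IsHemisphere V n c) {idx : X → I} {sgn : X → ℤˣ}
    (hidx : ∀ x, idx (-x) = idx x) (hsgn : ∀ x, sgn (-x) = -sgn x)
    (hV : ∀ x y, (x, y) ∈ V → idx x = idx y → sgn x = sgn y) :
    ∃ (x : Fin (n + 1) → X) (b : ℤˣ), (∀ j k, (x j, x k) ∈ V) ∧ StrictMono (idx ∘ x) ∧
      ∀ j, sgn (x j) = b * (-1) ^ ((j : ℕ) + 1) := by
  let lab (x : X) : I ×ₗ ℤˣ := toLex (idx x, sgn x)
  have hlab (x y : X) (hxy : (x, y) ∈ V) : lab x ≤ lab y ↔ idx x ≤ idx y := by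
    rw [Prod.Lex.toLex_le_toLex, le_iff_lt_or_eq (a := idx x)]
    exact or_congr_right (and_iff_left_of_imp fun h => (hV x y hxy h).le)
  have hneg (x y : X) (hxy : (x, y) ∈ V) : lab x ≤ lab y ↔ lab (-x) ≤ lab (-y) := by
    rw [hlab x y hxy, Prod.Lex.toLex_le_toLex, le_iff_lt_or_eq (a := idx x)]
    simp only [hidx, hsgn]
    exact or_congr_right (and_iff_left_of_imp fun h => (congrArg _ (hV x y hxy h)).le).symm
  obtain ⟨l, hlength, hclose, hsorted, b, halt⟩ :=
    hc.exists_alternating_list (sgn := fun i => (ofLex i).2) (lab := lab) hsgn hneg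
  let x (j : Fin (n + 1)) : X := l[j]
  have hx (j k : Fin (n + 1)) : (x j, x k) ∈ V :=
    hclose _ (List.getElem_mem _) _ (List.getElem_mem _)
  have hsgnx (j : Fin (n + 1)) : sgn (x j) = b * (-1) ^ ((j : ℕ) + 1) :=
    (List.getElem_map _).symm.trans
      (getElem_eq_of_isChain_ne halt j (by rw [List.length_map, hlength]; exact j.2))
  refine ⟨x, b, hx, Fin.strictMono_iff_lt_succ.2 fun j => ?_, hsgnx⟩
  have hle : idx (x j.castSucc) ≤ idx (x j.succ) := (hlab _ _ (hx _ _)).1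
    (List.pairwise_iff_getElem.1 hsorted _ _ _ _ (Nat.lt_succ_self j))
  refine hle.lt_of_ne fun heq => ?_
  have hsgn_eq := hV _ _ (hx _ _) heq
  rw [hsgnx, hsgnx] at hsgn_eq
  simp [pow_succ] at hsgn_eq

theorem exists_entourage_forall_nonempty_biInter [UniformSpace X] [CompactSpace X] {κ : Type*}
    [Finite κ] {C : κ → Set X} (hC : ∀ q, IsClosed (C q)) :
    ∃ V ∈ 𝓤 X, ∀ (s : Set κ) (x : X),
      (∀ q ∈ s, (UniformSpace.ball x V ∩ C q).Nonempty) → (⋂ q ∈ s, C q).Nonempty := by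
  have hlebesgue (s : Set κ) : ∃ V ∈ 𝓤 X, ∀ x : X,
      (∀ q ∈ s, (UniformSpace.ball x V ∩ C q).Nonempty) → (⋂ q ∈ s, C q).Nonempty := by
    by_cases hs : (⋂ q ∈ s, C q).Nonempty
    · exact ⟨_, Filter.univ_mem, fun _ _ => hs⟩
    have hcover : Set.univ ⊆ ⋃ q : s, (C q)ᶜ := by
      rw [← Set.compl_iInter, Set.iInter_subtype, Set.not_nonempty_iff_eq_empty.1 hs,
        Set.compl_empty]
    obtain ⟨V, hV, hball⟩ := lebesgue_number_lemma isCompact_univ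
      (fun q : s => (hC q).isOpen_compl) hcover
    refine ⟨V, hV, fun x hx => ?_⟩
    obtain ⟨q, hq⟩ := hball x (Set.mem_univ x)
    obtain ⟨y, hyV, hyC⟩ := hx q q.2
    exact absurd hyC (hq hyV)
  choose V hV hVs using hlebesgue
  refine ⟨⋂ s, V s, Filter.iInter_mem.2 hV, fun s x hx => hVs s x fun q hq => ?_⟩
  exact (hx q hq).mono (Set.inter_subset_inter_left _
    (UniformSpace.ball_mono (Set.iInter_subset V s) x))

theorem exists_equivariant_labelling [Neg X] {C : I → ℤˣ → Set X}
    (hneg : ∀ i s x, -x ∈ C i s ↔ x ∈ C i (-s)) (hdisj : ∀ i s x, x ∈ C i s → x ∉ C i (-s))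
    (hcover : ∀ x, ∃ i s, x ∈ C i s) :
    ∃ (idx : X → I) (sgn : X → ℤˣ), (∀ x, x ∈ C (idx x) (sgn x)) ∧ (∀ x, idx (-x) = idx x) ∧
      ∀ x, sgn (-x) = -sgn x := by
  have hinhabited (x : X) : Nonempty I := ⟨(hcover x).choose⟩
  -- A choice made from the set of admissible indices is the same at `x` and `-x`.
  let idx (x : X) : I := @Classical.epsilon _ (hinhabited x) fun i => ∃ s, x ∈ C i s
  have hidx (x : X) : ∃ s, x ∈ C (idx x) s := Classical.epsilon_spec (hcover x)
  have hidx_neg (x : X) : idx (-x) = idx x := by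
    have (i : I) : (∃ s, -x ∈ C i s) ↔ ∃ s, x ∈ C i s := by
      simp only [hneg]
      exact (Equiv.neg ℤˣ).exists_congr_left.trans (by simp)
    simp only [idx, this]
  choose sgn hsgn using hidx
  refine ⟨idx, sgn, hsgn, hidx_neg, fun x => ?_⟩
  have hmem : x ∈ C (idx x) (-sgn (-x)) := by
    rw [← hneg, ← hidx_neg x]
    exact hsgn (-x)
  by_contra hne
  rw [← ne_eq, Int.units_ne_iff_eq_neg, neg_neg] at hne
  exact hdisj _ _ _ (hsgn x) (hne ▸ hmem)

theorem exists_strictMono_alternating_of_isClosed_cover [UniformSpace X] [CompactSpace X]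
    [Neg X] [LinearOrder I] [Finite I] (hX : ∀ V ∈ 𝓤 X, ∃ c, IsHemisphere V n c)
    {C : I → ℤˣ → Set X} (hC : ∀ i s, IsClosed (C i s))
    (hneg : ∀ i s x, -x ∈ C i s ↔ x ∈ C i (-s)) (hdisj : ∀ i s x, x ∈ C i s → x ∉ C i (-s))
    (hcover : ∀ x, ∃ i s, x ∈ C i s) :
    ∃ (x : X) (ι : Fin (n + 1) → I) (b : ℤˣ), StrictMono ι ∧
      ∀ j, x ∈ C (ι j) (b * (-1) ^ ((j : ℕ) + 1)) := by
  obtain ⟨V, hV, hcommon⟩ :=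
    exists_entourage_forall_nonempty_biInter (C := fun q : I × ℤˣ => C q.1 q.2) fun q => hC q.1 q.2
  obtain ⟨idx, sgn, hmem, hidx, hsgn⟩ := exists_equivariant_labelling hneg hdisj hcover
  have hVsgn (x y : X) (hxy : (x, y) ∈ V) (heq : idx x = idx y) : sgn x = sgn y := by
    by_contra hne
    rw [← ne_eq, Int.units_ne_iff_eq_neg] at hne
    obtain ⟨z, hz⟩ := hcommon {(idx x, sgn x), (idx y, sgn y)} x (by
      simp only [Set.forall_mem_insert, Set.mem_singleton_iff, forall_eq]
      exact ⟨⟨x, refl_mem_uniformity hV, hmem x⟩, y, hxy, hmem y⟩)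
    simp only [Set.biInter_insert, Set.biInter_singleton] at hz
    exact hdisj _ _ z hz.2 (by simpa only [← hne, ← heq] using hz.1)
  obtain ⟨c, hc⟩ := hX V hV
  obtain ⟨x, b, hclose, hmono, hsgnx⟩ := hc.exists_strictMono_alternating hidx hsgn hVsgn
  obtain ⟨z, hz⟩ := hcommon (Set.range fun j => (idx (x j), sgn (x j))) (x 0) (by
    rintro _ ⟨j, rfl⟩
    exact ⟨x j, hclose 0 j, hmem (x j)⟩)
  refine ⟨z, idx ∘ x, b, hmono, fun j => ?_⟩
  rw [← hsgnx]
  exact Set.mem_iInter₂.1 hz _ ⟨j, rfl⟩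

end Covering

end ListChain

section Dominance

variable {X I : Type*}

/-- The points where `f i` has the sign `s` and the largest absolute value among all `f k`. -/
def dominanceSet (f : I → X → ℝ) (i : I) (s : ℤˣ) : Set X := {x | ∀ k, |f k x| ≤ (s : ℤ) * f i x}

theorem isClosed_dominanceSet [TopologicalSpace X] {f : I → X → ℝ} (hf : ∀ i, Continuous (f i))
    (i : I) (s : ℤˣ) : IsClosed (dominanceSet f i s) := by
  simp only [dominanceSet, Set.ofPred_forall]
  exact isClosed_iInter fun k => isClosed_le (hf k).abs (continuous_const.mul (hf i))

theorem neg_mem_dominanceSet [Neg X] {f : I → X → ℝ} (hf : ∀ i x, f i (-x) = -f i x) (i : I)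
    (s : ℤˣ) (x : X) : -x ∈ dominanceSet f i s ↔ x ∈ dominanceSet f i (-s) := by
  simp [dominanceSet, hf]

variable {f : I → X → ℝ} {x : X}

theorem notMem_dominanceSet_neg (hx : ∃ i, f i x ≠ 0) {i : I} {s : ℤˣ}
    (hs : x ∈ dominanceSet f i s) : x ∉ dominanceSet f i (-s) := by
  intro hneg
  obtain ⟨k, hk⟩ := hx
  have hle := hs k
  have hle_neg := hneg k
  push_cast at hle_neg
  linarith [abs_pos.2 hk]

theorem exists_mem_dominanceSet [Finite I] [Nonempty I] (f : I → X → ℝ) (x : X) :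
    ∃ i s, x ∈ dominanceSet f i s := by
  obtain ⟨i, hi⟩ := Finite.exists_max fun i => |f i x|
  rcases abs_choice (f i x) with habs | habs
  · exact ⟨i, 1, by simpa [dominanceSet, habs] using hi⟩
  · exact ⟨i, -1, by simpa [dominanceSet, habs] using hi⟩

theorem eq_mul_of_mem_dominanceSet {i j : I} {s t : ℤˣ} (hi : x ∈ dominanceSet f i s)
    (hj : x ∈ dominanceSet f j t) : f i x = (s : ℤ) * ((t : ℤ) * f j x) := by
  have hle_abs (u : ℤˣ) (a : ℝ) : (u : ℤ) * a ≤ |a| := by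
    rcases Int.units_eq_one_or u with rfl | rfl
    · simpa using le_abs_self a
    · simpa using neg_le_abs a
  have heq : (t : ℤ) * f j x = (s : ℤ) * f i x :=
    le_antisymm ((hle_abs t _).trans (hi j)) ((hle_abs s _).trans (hj i))
  have hss : ((s : ℤ) : ℝ) * (s : ℤ) = 1 := by exact_mod_cast Int.units_coe_mul_self s
  rw [heq, ← mul_assoc, hss, one_mul]

end Dominance

theorem stmt8_general {E I : Type*} [NormedAddCommGroup E] [InnerProductSpace ℝ E] [LinearOrder I]
    [Finite I] {d : ℕ} (hE : Module.finrank ℝ E = d + 1) {f : I → Metric.sphere (0 : E) 1 → ℝ}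
    (hcont : ∀ i, Continuous (f i)) (hodd : ∀ i x, f i (-x) = -f i x)
    (hnz : ∀ x, ∃ i, f i x ≠ 0) :
    ∃ x₀, ∃ ι : Fin (d + 1) → I, StrictMono ι ∧
      ∃ ε M : ℝ, (ε = 1 ∨ ε = -1) ∧ (∀ k, |f k x₀| ≤ M) ∧
        ∀ j : Fin (d + 1), f (ι j) x₀ = ε * (-1) ^ ((j : ℕ) + 1) * M := by
  have : FiniteDimensional ℝ E := Module.finite_of_finrank_eq_succ hE
  have hcover (x) : ∃ i s, x ∈ dominanceSet f i s :=
    have : Nonempty I := ⟨(hnz x).choose⟩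
    exists_mem_dominanceSet f x
  obtain ⟨x₀, ι, b, hι, hx₀⟩ := ListChain.exists_strictMono_alternating_of_isClosed_cover
    (ListChain.exists_isHemisphere_sphere hE) (isClosed_dominanceSet hcont)
    (neg_mem_dominanceSet hodd) (fun i s x => notMem_dominanceSet_neg (hnz x)) hcover
  have hb : ((b : ℤ) : ℝ) = 1 ∨ ((b : ℤ) : ℝ) = -1 := by exact_mod_cast Int.isUnit_iff.1 b.isUnit
  refine ⟨x₀, ι, hι, (b : ℤ), _, hb, hx₀ 0, fun j => ?_⟩
  simpa using eq_mul_of_mem_dominanceSet (hx₀ j) (hx₀ 0)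

/-- Fan's corollary on odd maps: if continuous odd maps `f₁,…,f_m : S^d → ℝ` have no common
zero, then there are `x₀ ∈ S^d` and indices `i₁ < ⋯ < i_{d+1}` such that each `f_{i_j}(x₀)`
has maximal absolute value among the `|f_k(x₀)|` and the signs alternate, i.e.
`f_{i_j}(x₀) = ε · (-1)^j · max_k |f_k(x₀)|` for some fixed `ε ∈ {±1}`. -/
theorem stmt8 (d m : ℕ)
    (f : Fin m → EuclideanSpace ℝ (Fin (d + 1)) → ℝ)
    (hcont : ∀ i, Continuous (f i))
    (hodd : ∀ i y, f i (-y) = - f i y)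
    (hnz : ∀ y ∈ Metric.sphere (0 : EuclideanSpace ℝ (Fin (d + 1))) 1, ∃ i, f i y ≠ 0) :
    ∃ x₀ ∈ Metric.sphere (0 : EuclideanSpace ℝ (Fin (d + 1))) 1,
      ∃ ι : Fin (d + 1) → Fin m, StrictMono ι ∧
      ∃ ε M : ℝ, (ε = 1 ∨ ε = -1) ∧ (∀ k, |f k x₀| ≤ M) ∧
        ∀ j : Fin (d + 1), f (ι j) x₀ = ε * (-1) ^ ((j : ℕ) + 1) * M := by
  obtain ⟨x₀, h⟩ := stmt8_general finrank_euclideanSpace_fin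
    (fun i => (hcont i).comp continuous_subtype_val) (fun i x => hodd i x) fun x => hnz x x.2
  exact ⟨x₀, x₀.2, h⟩
end

section
/- Let Σ be a flag simplicial complex, and let k ≥ 2 be an integer such that every set of 2k-2 vertices of Σ has a common neighbor (a vertex adjacent in Σ to all of them). Then the geometric realization of Σ is (k-2)-connected. -/
/-- The geometric realization of an abstract simplicial complex `K` on a finite vertex set
`V`, realized inside `V → ℝ` via barycentric coordinates. -/
def realization {V : Type*} [Fintype V] (K : Set (Finset V)) : Set (V → ℝ) :=
  {w | (∀ v, 0 ≤ w v) ∧ (∑ v, w v) = 1 ∧ ∃ σ ∈ K, ∀ v, w v ≠ 0 → v ∈ σ}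

/-- A space is `n`-connected (for `n : ℤ`): nonempty if `n ≥ -1`, path-connected if
`n ≥ 0`, and its homotopy groups `π_j` are trivial for `1 ≤ j ≤ n`. -/
def IsNConnected (n : ℤ) (X : Type*) [TopologicalSpace X] : Prop :=
  ((-1 : ℤ) ≤ n → Nonempty X) ∧ ((0 : ℤ) ≤ n → PathConnectedSpace X) ∧
    ∀ j : ℕ, 1 ≤ j → (j : ℤ) ≤ n → ∀ x : X, Subsingleton (HomotopyGroup (Fin j) X x)

/-!
Call a space `m`-cube-connected if it is `(m - 1)`-connected. By induction on `m`, the subcomplex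
induced on a vertex set `S` is `m`-cube-connected as soon as any `2 * m` vertices of `S` have a
common neighbour in `S`. For `v ∈ S` let `U v` be the open set of points whose largest barycentric
coordinates are all attained in the closed neighbourhood `N v`. These sets cover the realization,
and the intersection of the `U v` for `v ∈ A` deforms, by conditioning, onto the subcomplex induced
on `S ∩ ⋂ v ∈ A, N v`. The latter is a cone if `A` is a single vertex; otherwise it satisfies the
induction hypothesis for `m + 1 - #A`, because a common neighbour of `W ∪ A` is a common neighbour
of `W` lying in that intersection. So the cover satisfies the hypotheses of the nerve theorem.

For the gluing of two open sets `A` and `B`, subdivide the domain sphere of a map to `A ∪ B` into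
cubes so fine that each is mapped into `A` or into `B`. On the cubes not mapped into `A`, the map
is pushed through `B` into `A ∩ B` by filling the prisms over them, one dimension at a time:
the top faces use that `A ∩ B` is `(m - 2)`-connected, the prisms that `B` is `(m - 1)`-connected.
-/

section Connectivity

open Set Metric

variable {X Y ι : Type*} [TopologicalSpace X] [TopologicalSpace Y]

theorem exists_continuousOn_union {s t : Set Y} (hs : IsClosed s) (ht : IsClosed t) {f g : Y → X}
    (hf : ContinuousOn f s) (hg : ContinuousOn g t) (hfg : EqOn f g (s ∩ t)) :
    ∃ h, ContinuousOn h (s ∪ t) ∧ EqOn h f s ∧ EqOn h g t := by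
  classical
  have hs_eq : EqOn (s.piecewise f g) f s := piecewise_eqOn s f g
  have ht_eq : EqOn (s.piecewise f g) g t := fun x hx => by
    by_cases hxs : x ∈ s
    · rw [hs_eq hxs, hfg ⟨hxs, hx⟩]
    · exact piecewise_eq_of_notMem s f g hxs
  exact ⟨_, (hf.congr hs_eq).union_of_isClosed (hg.congr ht_eq) hs ht, hs_eq, ht_eq⟩

/-- The restriction of `f` to the boundary of the cube `[-1, 1]^ι` (a ball for the sup norm)
extends to a continuous map from the whole cube to `Z`. -/
def ExtendsToCube [Fintype ι] (f : (ι → ℝ) → X) (Z : Set X) : Prop :=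
  ∃ g, ContinuousOn g (closedBall 0 1) ∧ MapsTo g (closedBall 0 1) Z ∧ EqOn g f (sphere 0 1)

/-- `Z` is nonempty and every map into `Z` from the boundary of a cube of dimension at most `m`
extends over the cube. This says that `Z` is `(m - 1)`-connected; it is the form of connectivity
used here because it involves no base point. -/
def CubeConnected (m : ℕ) (Z : Set X) : Prop :=
  Z.Nonempty ∧ ∀ (ι : Type) [Fintype ι], Fintype.card ι ≤ m → ∀ f : (ι → ℝ) → X,
    ContinuousOn f (sphere 0 1) → MapsTo f (sphere 0 1) Z → ExtendsToCube f Z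

theorem CubeConnected.mono {m n : ℕ} {Z : Set X} (h : CubeConnected m Z) (hn : n ≤ m) :
    CubeConnected n Z :=
  ⟨h.1, fun ι _ hι => h.2 ι (hι.trans hn)⟩

theorem CubeConnected.singleton (m : ℕ) (x : X) : CubeConnected m {x} :=
  ⟨singleton_nonempty x, fun _ _ _ _ _ hf =>
    ⟨fun _ => x, continuousOn_const, fun _ _ => rfl, fun _ hy => (hf hy).symm⟩⟩

theorem CubeConnected.exists_extension {ι : Type} [Fintype ι] {m : ℕ} {Z : Set X}
    (hZ : CubeConnected m Z) (hι : Fintype.card ι ≤ m) {B C : Set Y} {u : (ι → ℝ) → Y}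
    {v : Y → ι → ℝ} (hu : ContinuousOn u (sphere 0 1)) (huB : MapsTo u (sphere 0 1) B)
    (hv : ContinuousOn v C) (hvC : MapsTo v C (closedBall 0 1)) (hvB : MapsTo v B (sphere 0 1))
    (huv : LeftInvOn u v B) {f : Y → X} (hf : ContinuousOn f B) (hfZ : MapsTo f B Z) :
    ∃ g, ContinuousOn g C ∧ MapsTo g C Z ∧ EqOn g f B := by
  obtain ⟨g, hg, hgZ, hgf⟩ := hZ.2 ι hι (f ∘ u) (hf.comp hu huB) (hfZ.comp huB)
  refine ⟨g ∘ v, hg.comp hv hvC, hgZ.comp hvC, fun x hx => ?_⟩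
  rw [Function.comp_apply, hgf (hvB hx), Function.comp_apply, huv hx]

theorem ExtendsToCube.of_homotopy [Fintype ι] {Z : Set X} {H : ℝ × (ι → ℝ) → X}
    (hH : ContinuousOn H (Icc 0 1 ×ˢ sphere 0 1)) (hHZ : MapsTo H (Icc 0 1 ×ˢ sphere 0 1) Z)
    (h : ExtendsToCube (fun x => H (1, x)) Z) : ExtendsToCube (fun x => H (0, x)) Z := by
  obtain ⟨g, hg, hgZ, hgH⟩ := h
  let wall : Set (ℝ × (ι → ℝ)) := Icc 0 1 ×ˢ sphere 0 1
  let lid : Set (ℝ × (ι → ℝ)) := {1} ×ˢ closedBall 0 1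
  obtain ⟨F, hF, hF_wall, hF_lid⟩ := exists_continuousOn_union (s := wall) (t := lid)
    (isClosed_Icc.prod isClosed_sphere) (isClosed_singleton.prod isClosed_closedBall) hH
    (hg.comp continuousOn_snd fun q hq => hq.2) <| by
      rintro ⟨t, x⟩ ⟨⟨-, hx⟩, ⟨rfl : t = 1, -⟩⟩
      exact (hgH hx).symm
  let c : (ι → ℝ) → ℝ × (ι → ℝ) := fun x => (min 1 (2 - 2 * ‖x‖), (max ‖x‖ (1 / 2))⁻¹ • x)
  have hpos : ∀ x : ι → ℝ, 0 < max ‖x‖ (1 / 2) := fun x => by positivity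
  have hc : Continuous c :=
    (continuous_const.min (by fun_prop)).prodMk <|
      ((continuous_norm.max continuous_const).inv₀ fun x => (hpos x).ne').smul continuous_id
  have hc_wall : ∀ x, 1 / 2 ≤ ‖x‖ → ‖x‖ ≤ 1 → c x ∈ wall := fun x h h' => by
    have : ‖x‖ ≠ 0 := by linarith
    refine ⟨⟨le_min zero_le_one (by linarith), min_le_left _ _⟩, ?_⟩
    rw [mem_sphere_zero_iff_norm, norm_smul, max_eq_left h, norm_inv, norm_norm,
      inv_mul_cancel₀ this]
  have hc_lid : ∀ x, ‖x‖ ≤ 1 / 2 → c x ∈ lid := fun x h =>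
    ⟨min_eq_left (by linarith), by
      rw [mem_closedBall_zero_iff, norm_smul, norm_inv, Real.norm_of_nonneg (hpos x).le,
        inv_mul_le_one₀ (hpos x)]
      exact le_max_left _ _⟩
  have hc_mem : ∀ x ∈ closedBall 0 1, c x ∈ wall ∪ lid := fun x hx =>
    (le_total (1 / 2) ‖x‖).imp (hc_wall x · (mem_closedBall_zero_iff.1 hx)) (hc_lid x)
  refine ⟨F ∘ c, hF.comp hc.continuousOn hc_mem, fun x hx => ?_, fun x hx => ?_⟩
  · rcases hc_mem x hx with h | h
    · exact hHZ.congr hF_wall.symm h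
    · exact (hgZ.comp fun q hq => hq.2).congr hF_lid.symm h
  · have hx1 : ‖x‖ = 1 := mem_sphere_zero_iff_norm.1 hx
    have hcx : c x = (0, x) := by norm_num [c, hx1]
    rw [Function.comp_apply, hcx, hF_wall ⟨left_mem_Icc.2 zero_le_one, hx⟩]

theorem CubeConnected.of_segment {E : Type*} [AddCommGroup E] [Module ℝ E] [TopologicalSpace E]
    [IsTopologicalAddGroup E] [ContinuousSMul ℝ E] {m : ℕ} {Y Z : Set E} (hY : CubeConnected m Y)
    (hYZ : Y ⊆ Z) {r : E → E} (hr : ContinuousOn r Z) (hrY : MapsTo r Z Y)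
    (hseg : ∀ z ∈ Z, segment ℝ z (r z) ⊆ Z) : CubeConnected m Z := by
  refine ⟨hY.1.mono hYZ, fun ι _ hι f hf hfZ => ?_⟩
  let H : ℝ × (ι → ℝ) → E := fun q => AffineMap.lineMap (f q.2) (r (f q.2)) q.1
  have snd_maps : MapsTo Prod.snd (Icc (0 : ℝ) 1 ×ˢ sphere (0 : ι → ℝ) 1) (sphere 0 1) :=
    fun q hq => hq.2
  have hH : ContinuousOn H (Icc 0 1 ×ˢ sphere 0 1) :=
    (hf.comp continuousOn_snd snd_maps).lineMap
      ((hr.comp hf hfZ).comp continuousOn_snd snd_maps) continuousOn_fst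
  have hHZ : MapsTo H (Icc 0 1 ×ˢ sphere 0 1) Z := fun q hq =>
    hseg _ (hfZ hq.2) (segment_eq_image_lineMap ℝ (f q.2) (r (f q.2)) ▸ mem_image_of_mem _ hq.1)
  have hend : ExtendsToCube (fun x => H (1, x)) Z := by
    obtain ⟨g, hg, hgY, hgf⟩ := hY.2 ι hι (r ∘ f) (hr.comp hf hfZ) (hrY.comp hfZ)
    exact ⟨g, hg, hgY.mono_right hYZ, fun x hx => by simp [H, hgf hx]⟩
  simpa [H] using hend.of_homotopy hH hHZ

end Connectivity

section HomotopyGroups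

open Set Metric unitInterval

variable {X : Type*} [TopologicalSpace X]

theorem mem_sphere_zero_pi_iff {ι : Type*} [Fintype ι] {x : ι → ℝ} {r : ℝ} (hr : 0 < r) :
    x ∈ sphere 0 r ↔ (∀ i, |x i| ≤ r) ∧ ∃ i, |x i| = r := by
  simp only [mem_sphere_zero_iff_norm, ← Real.norm_eq_abs, ← pi_norm_le_iff_of_nonneg hr.le]
  refine ⟨fun h => ⟨h.le, ?_⟩, fun ⟨hle, i, hi⟩ => hle.antisymm (hi ▸ norm_le_pi_norm x i)⟩
  by_contra! hne
  exact ((pi_norm_lt_iff hr).2 fun i => lt_of_le_of_ne (h ▸ norm_le_pi_norm x i) (hne i)).ne h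

theorem CubeConnected.exists_extension_unitInterval {N : Type} [Fintype N] {m : ℕ} {T : Set X}
    (hT : CubeConnected m T) (hN : Fintype.card N ≤ m) {f : (N → I) → X}
    (hf : ContinuousOn f (Cube.boundary N)) (hfT : MapsTo f (Cube.boundary N) T) :
    ∃ g, Continuous g ∧ (∀ y, g y ∈ T) ∧ EqOn g f (Cube.boundary N) := by
  let u : (N → ℝ) → N → I := fun x i => projIcc 0 1 zero_le_one ((x i + 1) / 2)
  let v : (N → I) → N → ℝ := fun y i => 2 * (y i : ℝ) - 1
  have hu : Continuous u := continuous_pi fun i => continuous_projIcc.comp (by fun_prop)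
  have hv : Continuous v := by fun_prop
  have abs_v : ∀ y i, |v y i| ≤ 1 := fun y i =>
    abs_le.2 ⟨by linarith [(y i).2.1], by linarith [(y i).2.2]⟩
  have u_boundary : MapsTo u (sphere 0 1) (Cube.boundary N) := fun x hx => by
    obtain ⟨-, i, hi⟩ := (mem_sphere_zero_pi_iff one_pos).1 hx
    refine ⟨i, ?_⟩
    rcases eq_or_eq_neg_of_abs_eq hi with h | h
    · exact .inr (by simp [u, h])
    · exact .inl (by simp [u, h])
  have v_boundary : MapsTo v (Cube.boundary N) (sphere 0 1) := by
    rintro y ⟨i, hi⟩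
    refine (mem_sphere_zero_pi_iff one_pos).2 ⟨abs_v y, i, ?_⟩
    rcases hi with h | h <;> norm_num [v, h]
  have v_ball : MapsTo v univ (closedBall 0 1) := fun y _ =>
    mem_closedBall_zero_iff.2 ((pi_norm_le_iff_of_nonneg zero_le_one).2 (abs_v y))
  have huv : LeftInvOn u v (Cube.boundary N) := fun y _ => funext fun i => by simp [u, v]
  obtain ⟨g, hg, hgT, hgf⟩ := hT.exists_extension hN hu.continuousOn u_boundary hv.continuousOn
    v_ball v_boundary huv hf hfT
  exact ⟨g, continuousOn_univ.1 hg, fun y => hgT (mem_univ y), hgf⟩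

theorem CubeConnected.genLoop_homotopic_const {N : Type} [Fintype N] {m : ℕ} {T : Set X}
    (hT : CubeConnected m T) (hN : Fintype.card N < m) {x : T} (p : GenLoop N T x) :
    GenLoop.Homotopic p GenLoop.const := by
  let bottom : Set (Option N → I) := {y | y none = 0}
  let rest : Set (Option N → I) := {y | y none = 1} ∪ ⋃ i : N, {y | y (some i) = 0 ∨ y (some i) = 1}
  have closed_eq : ∀ i (c : I), IsClosed {y : Option N → I | y i = c} := fun i c =>
    isClosed_eq (continuous_apply i) continuous_const
  have rest_closed : IsClosed rest := (closed_eq none 1).union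
    (isClosed_iUnion_of_finite fun i => (closed_eq (some i) 0).union (closed_eq (some i) 1))
  have boundary_eq : Cube.boundary (Option N) = bottom ∪ rest := by
    ext y
    simp [Cube.boundary, bottom, rest, Option.exists, or_assoc]
  obtain ⟨f, hf, f_bottom, f_rest⟩ := exists_continuousOn_union (closed_eq none 0) rest_closed
    (f := fun y => (p fun i => y (some i) : X)) (g := fun _ => (x : X))
    (by fun_prop) continuousOn_const <| by
      rintro y ⟨h0 : y none = 0, h1 | hy⟩
      · exact absurd (h0.symm.trans h1) zero_ne_one
      · exact congrArg Subtype.val (GenLoop.boundary p _ (mem_iUnion.1 hy))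
  have hfT : MapsTo f (Cube.boundary (Option N)) T := fun y hy => by
    rcases boundary_eq ▸ hy with h | h
    · exact f_bottom h ▸ Subtype.property _
    · exact f_rest h ▸ x.2
  obtain ⟨g, hg, hgT, hgf⟩ := hT.exists_extension_unitInterval (Fintype.card_option.trans_le hN)
    (boundary_eq ▸ hf) hfT
  rw [boundary_eq] at hgf
  let e : I × (N → I) → Option N → I := fun q i => i.elim q.1 q.2
  have e_cont : Continuous e := continuous_pi fun i => by
    cases i <;> simp only [e, Option.elim] <;> fun_prop
  have g_rest : ∀ q, e q ∈ rest → g (e q) = x := fun q h => (hgf (.inr h)).trans (f_rest h)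
  refine ⟨⟨⟨⟨fun q => ⟨g (e q), hgT _⟩, (hg.comp e_cont).subtype_mk _⟩, fun y => ?_, fun y => ?_⟩,
    fun t y hy => ?_⟩⟩
  · exact Subtype.ext ((hgf (.inl rfl)).trans (f_bottom rfl))
  · exact Subtype.ext (g_rest _ (.inl rfl))
  · exact (Subtype.ext (g_rest (t, y) (.inr (mem_iUnion.2 hy)))).trans
      (GenLoop.boundary p y hy).symm

theorem CubeConnected.subsingleton_homotopyGroup {N : Type} [Fintype N] {m : ℕ} {T : Set X}
    (hT : CubeConnected m T) (hN : Fintype.card N < m) (x : T) :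
    Subsingleton (HomotopyGroup N T x) :=
  ⟨Quotient.ind₂ fun p q =>
    Quotient.sound ((hT.genLoop_homotopic_const hN p).trans (hT.genLoop_homotopic_const hN q).symm)⟩

theorem CubeConnected.pathConnectedSpace {m : ℕ} {T : Set X} (hT : CubeConnected m T)
    (hm : 0 < m) : PathConnectedSpace T := by
  obtain ⟨x, hx⟩ := hT.1
  have := hT.subsingleton_homotopyGroup (N := Fin 0) hm ⟨x, hx⟩
  exact pathConnectedSpace_iff_zerothHomotopy.2
    ⟨⟨.mk ⟨x, hx⟩⟩, (HomotopyGroup.pi0EquivZerothHomotopy (x := ⟨x, hx⟩)).symm.subsingleton⟩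

theorem CubeConnected.isNConnected {m : ℕ} {T : Set X} (hT : CubeConnected m T) :
    IsNConnected ((m : ℤ) - 1) T :=
  ⟨fun _ => hT.1.to_subtype, fun hm => hT.pathConnectedSpace (by omega),
    fun j _ hjm => hT.subsingleton_homotopyGroup (by rw [Fintype.card_fin]; omega)⟩

end HomotopyGroups

section CubicalGrid

open Set Metric
open scoped Finset

variable {J : Type*}

/-- A cell of the cubical subdivision of `J → ℝ` into unit cubes. The index `p` is twice the
barycentre: the cell is the interval `[(p i - 1) / 2, (p i + 1) / 2]` in the directions where `p i`
is odd, and the point `p i / 2` in the others. -/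
def gridCell (p : J → ℤ) : Set (J → ℝ) :=
  Icc (fun i => ((p i / 2 : ℤ) : ℝ)) fun i => (((p i + 1) / 2 : ℤ) : ℝ)

/-- The index of the smallest grid cell that contains `x`, that is, of the only cell having `x` in
its relative interior. -/
noncomputable def gridCarrier (x : J → ℝ) : J → ℤ := fun i => ⌊x i⌋ + ⌈x i⌉

/-- The points of a grid cell that lie on one of its proper faces. -/
def gridCellBoundary (p : J → ℤ) : Set (J → ℝ) := {x ∈ gridCell p | gridCarrier x ≠ p}

/-- The dimension of a grid cell. -/
def gridDim [Fintype J] (p : J → ℤ) : ℕ := #{i | Odd (p i)}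

theorem isClosed_gridCell (p : J → ℤ) : IsClosed (gridCell p) := isClosed_Icc

theorem mem_gridCell {p : J → ℤ} {x : J → ℝ} :
    x ∈ gridCell p ↔ ∀ i, p i / 2 ≤ ⌊x i⌋ ∧ ⌈x i⌉ ≤ (p i + 1) / 2 := by
  simp only [gridCell, mem_Icc, Pi.le_def, Int.le_floor, Int.ceil_le, forall_and]

theorem mem_gridCell_iff_abs {p : J → ℤ} {x : J → ℝ} :
    x ∈ gridCell p ↔ ∀ i, (Even (p i) → 2 * x i = p i) ∧ (Odd (p i) → |2 * x i - p i| ≤ 1) := by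
  simp only [gridCell, mem_Icc, Pi.le_def, ← forall_and]
  refine forall_congr' fun i => ?_
  rcases Int.even_or_odd (p i) with h | h
  · have lower : p i / 2 * 2 = p i := Int.ediv_two_mul_two_of_even h
    have upper : (p i + 1) / 2 = p i / 2 := by grind
    rify at lower
    simp only [h, upper, Int.not_odd_iff_even.2 h, forall_const, IsEmpty.forall_iff, and_true]
    constructor
    · rintro ⟨h1, h2⟩; linarith
    · intro h1; constructor <;> linarith
  · have lower : p i / 2 * 2 + 1 = p i := Int.ediv_two_mul_two_add_one_of_odd h
    have upper : (p i + 1) / 2 * 2 = p i + 1 := Int.ediv_two_mul_two_of_even h.add_one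
    rify at lower upper
    simp only [h, Int.not_even_iff_odd.2 h, forall_const, IsEmpty.forall_iff, true_and, abs_le]
    constructor <;> rintro ⟨h1, h2⟩ <;> constructor <;> linarith

theorem mem_gridCell_gridCarrier (x : J → ℝ) : x ∈ gridCell (gridCarrier x) :=
  mem_gridCell.2 fun i => by
    have := Int.floor_le_ceil (x i)
    have := Int.ceil_le_floor_add_one (x i)
    simp only [gridCarrier]
    omega

theorem gridCell_gridCarrier_subset {p : J → ℤ} {x : J → ℝ} (hx : x ∈ gridCell p) :
    gridCell (gridCarrier x) ⊆ gridCell p := fun y hy =>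
  mem_gridCell.2 fun i => by
    have := Int.floor_le_ceil (x i)
    have := Int.ceil_le_floor_add_one (x i)
    have := mem_gridCell.1 hx i
    have := mem_gridCell.1 hy i
    simp only [gridCarrier] at this
    omega

theorem gridCarrier_apply_eq_or {p : J → ℤ} {x : J → ℝ} (hx : x ∈ gridCell p) (i : J) :
    gridCarrier x i = p i ∨ Odd (p i) ∧ Even (gridCarrier x i) := by
  have := Int.floor_le_ceil (x i)
  have := Int.ceil_le_floor_add_one (x i)
  have := mem_gridCell.1 hx i
  rw [Int.odd_iff, Int.even_iff]
  simp only [gridCarrier]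
  omega

theorem gridDim_gridCarrier_lt [Fintype J] {p : J → ℤ} {x : J → ℝ} (hx : x ∈ gridCellBoundary p) :
    gridDim (gridCarrier x) < gridDim p := by
  have hor := gridCarrier_apply_eq_or hx.1
  obtain ⟨i, hi⟩ := Function.ne_iff.1 hx.2
  obtain ⟨hodd, heven⟩ := (hor i).resolve_left hi
  have hsub : ({j | Odd (gridCarrier x j)} : Finset J) ⊆ ({j | Odd (p j)} : Finset J) :=
    Finset.monotone_filter_right _ fun j _ hj => (hor j).elim (fun h => h ▸ hj) And.left
  exact Finset.card_lt_card ((Finset.ssubset_iff_of_subset hsub).2 ⟨i, by simpa, by simpa⟩)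

theorem mem_gridCellBoundary_iff {p : J → ℤ} {x : J → ℝ} :
    x ∈ gridCellBoundary p ↔ x ∈ gridCell p ∧ ∃ i, Odd (p i) ∧ |2 * x i - p i| = 1 := by
  refine and_congr_right fun hx => Function.ne_iff.trans (exists_congr fun i => ?_)
  constructor
  · intro hi
    obtain ⟨hodd, c, hc⟩ := (gridCarrier_apply_eq_or hx i).resolve_left hi
    have hcell := mem_gridCell.1 hx i
    have := Int.floor_le_ceil (x i)
    have := Int.ceil_le_floor_add_one (x i)
    have hfloor : ⌊x i⌋ = c := by unfold gridCarrier at hc; omega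
    have hceil : ⌈x i⌉ = c := by unfold gridCarrier at hc; omega
    have hxc : x i = c := le_antisymm (hceil ▸ Int.le_ceil (x i)) (hfloor ▸ Int.floor_le (x i))
    refine ⟨hodd, ?_⟩
    rw [hxc]
    have : |2 * c - p i| = 1 := by grind
    exact_mod_cast this
  · rintro ⟨hodd, habs⟩ hi
    obtain ⟨c, hc⟩ : ∃ c : ℤ, x i = c := by
      obtain ⟨a, ha⟩ := hodd
      rify at ha
      rcases eq_or_eq_neg_of_abs_eq habs with h | h
      · exact ⟨a + 1, by push_cast; linarith⟩
      · exact ⟨a, by linarith⟩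
    rw [gridCarrier, hc, Int.floor_intCast, Int.ceil_intCast] at hi
    grind

theorem gridDim_option [Fintype J] (p : Option J → ℤ) :
    gridDim p = (if Odd (p none) then 1 else 0) + gridDim (p ∘ some) := by
  simp only [gridDim, Finset.card_filter, Fintype.sum_option, Function.comp_apply]

theorem finite_image_gridCarrier [Finite J] {s : Set (J → ℝ)}
    (hs : Bornology.IsBounded s) : (gridCarrier '' s).Finite := by
  classical
  cases nonempty_fintype J
  obtain ⟨R, hR⟩ := hs.exists_norm_le
  refine (Set.finite_Icc (fun _ => 2 * ⌊-R⌋) fun _ : J => 2 * ⌈R⌉).subset ?_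
  rintro _ ⟨x, hx, rfl⟩
  have habs : ∀ i, -R ≤ x i ∧ x i ≤ R := fun i =>
    abs_le.1 ((norm_le_pi_norm x i).trans (hR x hx))
  refine ⟨fun i => ?_, fun i => ?_⟩
  · have := Int.floor_mono (habs i).1
    have := Int.floor_le_ceil (x i)
    simp only [gridCarrier]
    omega
  · have := Int.ceil_mono (habs i).2
    have := Int.floor_le_ceil (x i)
    simp only [gridCarrier]
    omega

variable {X : Type*} [TopologicalSpace X]

theorem CubeConnected.exists_extension_gridCell {J : Type} [Fintype J] {p : J → ℤ} {Z : Set X}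
    (hZ : CubeConnected (gridDim p) Z) {f : (J → ℝ) → X} (hf : ContinuousOn f (gridCellBoundary p))
    (hfZ : MapsTo f (gridCellBoundary p) Z) :
    ∃ g, ContinuousOn g (gridCell p) ∧ MapsTo g (gridCell p) Z ∧ EqOn g f (gridCellBoundary p) := by
  let ι := {i // Odd (p i)}
  let u : (ι → ℝ) → J → ℝ := fun y i => (p i + if h : Odd (p i) then y ⟨i, h⟩ else 0) / 2
  let v : (J → ℝ) → ι → ℝ := fun x i => 2 * x i - p i
  have hu : Continuous u := continuous_pi fun i => by
    by_cases h : Odd (p i) <;> simp only [u, h, dite_true, dite_false] <;> fun_prop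
  have hv : Continuous v := by fun_prop
  have u_boundary : MapsTo u (sphere 0 1) (gridCellBoundary p) := fun y hy => by
    obtain ⟨hle, i, hi⟩ := (mem_sphere_zero_pi_iff one_pos).1 hy
    have hodd : ∀ j : ι, 2 * u y j - p j = y j := fun j => by
      simp only [u, j.2, dite_true]
      ring
    have heven : ∀ j, Even (p j) → 2 * u y j = p j := fun j hj => by
      simp only [u, Int.not_odd_iff_even.2 hj, dite_false]
      ring
    exact mem_gridCellBoundary_iff.2 ⟨mem_gridCell_iff_abs.2 fun j =>
      ⟨heven j, fun hj => hodd ⟨j, hj⟩ ▸ hle ⟨j, hj⟩⟩, i, i.2, hodd i ▸ hi⟩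
  have v_ball : MapsTo v (gridCell p) (closedBall 0 1) := fun x hx =>
    mem_closedBall_zero_iff.2 <| (pi_norm_le_iff_of_nonneg zero_le_one).2 fun i =>
      (mem_gridCell_iff_abs.1 hx i).2 i.2
  have v_boundary : MapsTo v (gridCellBoundary p) (sphere 0 1) := fun x hx => by
    obtain ⟨hcell, i, hodd, habs⟩ := mem_gridCellBoundary_iff.1 hx
    exact (mem_sphere_zero_pi_iff one_pos).2
      ⟨fun j => (mem_gridCell_iff_abs.1 hcell j).2 j.2, ⟨i, hodd⟩, habs⟩
  have huv : LeftInvOn u v (gridCellBoundary p) := fun x hx => funext fun i => by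
    by_cases h : Odd (p i)
    · simp [u, v, h]
    · simp [u, h, ← (mem_gridCell_iff_abs.1 hx.1 i).1 (Int.not_odd_iff_even.1 h)]
  exact hZ.exists_extension (Fintype.card_subtype _).le hu.continuousOn u_boundary
    hv.continuousOn v_ball v_boundary huv hf hfZ

/-- A set of points that contains, with each point, the whole smallest grid cell around it: a union
of grid cells that is closed under passing to faces. -/
def IsCubical (Q : Set (J → ℝ)) : Prop := ∀ x ∈ Q, gridCell (gridCarrier x) ⊆ Q

theorem IsCubical.isClosed [Finite J] {Q : Set (J → ℝ)} (hQ : IsCubical Q)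
    (hbdd : Bornology.IsBounded Q) : IsClosed Q := by
  have : Q = ⋃ p ∈ gridCarrier '' Q, gridCell p := by
    refine Subset.antisymm (fun x hx => ?_) (iUnion₂_subset ?_)
    · exact mem_biUnion (mem_image_of_mem _ hx) (mem_gridCell_gridCarrier x)
    · rintro _ ⟨x, hx, rfl⟩
      exact hQ x hx
  rw [this]
  exact (finite_image_gridCarrier hbdd).isClosed_biUnion fun p _ => isClosed_gridCell p

theorem isCubical_sphere [Fintype J] {N : ℕ} (hN : 0 < N) :
    IsCubical (sphere (0 : J → ℝ) N) := fun x hx y hy => by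
  rw [mem_sphere_zero_pi_iff (by positivity)] at hx ⊢
  obtain ⟨hle, i, hi⟩ := hx
  have hcell : ∀ j, ⌊x j⌋ ≤ y j ∧ y j ≤ ⌈x j⌉ := fun j => by
    have := Int.floor_le_ceil (x j)
    have := Int.ceil_le_floor_add_one (x j)
    have := mem_gridCell.1 hy j
    simp only [gridCarrier] at this
    exact ⟨Int.le_floor.1 (by omega), Int.ceil_le.1 (by omega)⟩
  refine ⟨fun j => abs_le.2 ⟨?_, ?_⟩, i, ?_⟩
  · have : -(N : ℤ) ≤ ⌊x j⌋ := Int.le_floor.2 (by simpa using (abs_le.1 (hle j)).1)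
    exact le_trans (by exact_mod_cast this) (hcell j).1
  · have : ⌈x j⌉ ≤ (N : ℤ) := Int.ceil_le.2 (by simpa using (abs_le.1 (hle j)).2)
    exact (hcell j).2.trans (by exact_mod_cast this)
  · obtain ⟨c, hc⟩ : ∃ c : ℤ, x i = c := (eq_or_eq_neg_of_abs_eq hi).elim
      (fun h => ⟨N, by simpa⟩) (fun h => ⟨-N, by simpa⟩)
    have := hcell i
    rw [hc, Int.floor_intCast, Int.ceil_intCast] at this
    rwa [le_antisymm this.2 this.1, ← hc]

theorem gridDim_gridCarrier_lt_card [Fintype J] {N : ℕ} (hN : 0 < N) {x : J → ℝ}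
    (hx : x ∈ sphere 0 (N : ℝ)) : gridDim (gridCarrier x) < Fintype.card J := by
  obtain ⟨-, i, hi⟩ := (mem_sphere_zero_pi_iff (by positivity)).1 hx
  have heven : Even (gridCarrier x i) := by
    rcases eq_or_eq_neg_of_abs_eq hi with h | h <;>
      simp [gridCarrier, h, Int.floor_neg, Int.ceil_neg]
  exact Finset.card_lt_univ_of_notMem (x := i) (by simpa)

end CubicalGrid

section Gluing

open Set Metric

variable {X : Type*} [TopologicalSpace X] {J : Type}

/-- The part of the prism `[0, 1] × Q` on which a homotopy rel `Q'` of a map on `Q` is prescribed: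
the bottom face and the walls over `Q'`. The coordinate `none` is the time. -/
def prismBase (Q Q' : Set (J → ℝ)) : Set (Option J → ℝ) :=
  {z | z none = 0 ∧ z ∘ some ∈ Q} ∪ {z | z none ∈ Icc 0 1 ∧ z ∘ some ∈ Q'}

/-- The grid cells of the prism `[0, 1] × Q` outside `prismBase Q Q'`: the open prisms (time index
`1`) and their top faces (time index `2`) over the cells of `Q` outside `Q'`. -/
def prismCells (Q Q' : Set (J → ℝ)) : Set (Option J → ℤ) :=
  {p | (p none = 1 ∨ p none = 2) ∧ p ∘ some ∈ gridCarrier '' (Q \ Q')}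

theorem isClosed_prismBase {Q Q' : Set (J → ℝ)} (hQ : IsClosed Q) (hQ' : IsClosed Q') :
    IsClosed (prismBase Q Q') := by
  have time : Continuous fun z : Option J → ℝ => z none := continuous_apply none
  have space : Continuous fun z : Option J → ℝ => z ∘ some := by fun_prop
  exact ((isClosed_eq time continuous_const).inter (hQ.preimage space)).union
    ((isClosed_Icc.preimage time).inter (hQ'.preimage space))

theorem finite_prismCells [Finite J] {Q : Set (J → ℝ)} (hQ : Bornology.IsBounded Q)
    (Q' : Set (J → ℝ)) : (prismCells Q Q').Finite := by
  let e : (Option J → ℤ) → ℤ × (J → ℤ) := fun p => (p none, p ∘ some)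
  have he : e.Injective := fun p q hpq => by
    obtain ⟨h, h'⟩ := Prod.mk.inj hpq
    exact funext fun i => i.casesOn h (congrFun h')
  exact (((finite_singleton (2 : ℤ)).insert 1).prod
    (finite_image_gridCarrier (hQ.subset sdiff_subset))).preimage he.injOn

theorem gridCarrier_notMem_prismCells {Q Q' : Set (J → ℝ)} (hQ' : IsCubical Q')
    {z : Option J → ℝ} (hz : z ∈ prismBase Q Q') : gridCarrier z ∉ prismCells Q Q' := by
  rintro ⟨h, x, hx, hxz⟩
  rcases hz with ⟨h0, -⟩ | ⟨-, hzQ'⟩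
  · simp [gridCarrier, h0] at h
  · have : gridCarrier x = gridCarrier (z ∘ some) := hxz
    exact hx.2 (hQ' _ hzQ' (this ▸ mem_gridCell_gridCarrier x))

theorem mem_prismBase_or_gridCarrier_mem_prismCells {Q Q' : Set (J → ℝ)} {z : Option J → ℝ}
    (ht : z none ∈ Icc 0 1) (hz : z ∘ some ∈ Q) :
    z ∈ prismBase Q Q' ∨ gridCarrier z ∈ prismCells Q Q' := by
  by_cases hzQ' : z ∘ some ∈ Q'
  · exact .inl (.inr ⟨ht, hzQ'⟩)
  rcases ht.1.eq_or_lt with h0 | hpos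
  · exact .inl (.inl ⟨h0.symm, hz⟩)
  · refine .inr ⟨?_, z ∘ some, ⟨hz, hzQ'⟩, rfl⟩
    have := Int.ceil_pos.2 hpos
    have : ⌈z none⌉ ≤ 1 := Int.ceil_le.2 (by simpa using ht.2)
    have := Int.floor_le_ceil (z none)
    have := Int.ceil_le_floor_add_one (z none)
    simp only [gridCarrier]
    omega

theorem mem_prismBase_or_gridCarrier_mem_of_mem_gridCell {Q Q' : Set (J → ℝ)} (hQ : IsCubical Q)
    {p : Option J → ℤ} (hp : p ∈ prismCells Q Q') {z : Option J → ℝ} (hz : z ∈ gridCell p) :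
    z ∈ prismBase Q Q' ∧ (p none = 2 → z ∘ some ∈ Q') ∨
      gridCarrier z ∈ prismCells Q Q' ∧ (p none = 2 → gridCarrier z none = 2) := by
  obtain ⟨h12, x, hx, hxp⟩ := hp
  have hzQ : z ∘ some ∈ Q :=
    hQ x hx.1 (hxp ▸ ⟨fun i => hz.1 (some i), fun i => hz.2 (some i)⟩)
  obtain ⟨ht, top⟩ : z none ∈ Icc 0 1 ∧ (p none = 2 → z none = 1) := by
    have lower := hz.1 none
    have upper := hz.2 none
    rcases h12 with h | h <;> norm_num [h] at lower upper ⊢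
    · exact ⟨lower, upper⟩
    · simp [le_antisymm upper lower]
  refine (mem_prismBase_or_gridCarrier_mem_prismCells ht hzQ).imp
    (fun hzD => ⟨hzD, fun h => ?_⟩) fun hzP => ⟨hzP, fun h => ?_⟩
  · exact (hzD.resolve_left fun h0 => by simp [top h] at h0).2
  · simp [gridCarrier, top h]

variable [Fintype J]

theorem CubeConnected.exists_extension_union_gridCell {C : Set (J → ℝ)} (hC : IsClosed C)
    {F : (J → ℝ) → X} (hF : ContinuousOn F C) {p : J → ℤ}
    (hCp : C ∩ gridCell p = gridCellBoundary p) {Z : Set X} (hZ : CubeConnected (gridDim p) Z)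
    (hFZ : MapsTo F (gridCellBoundary p) Z) :
    ∃ F', ContinuousOn F' (C ∪ gridCell p) ∧ EqOn F' F C ∧ MapsTo F' (gridCell p) Z := by
  obtain ⟨g, hg, hgZ, hgF⟩ :=
    hZ.exists_extension_gridCell (hF.mono (hCp ▸ inter_subset_left)) hFZ
  obtain ⟨F', hF', hF'F, hF'g⟩ :=
    exists_continuousOn_union hC (isClosed_gridCell p) hF hg (hCp ▸ hgF.symm)
  exact ⟨F', hF', hF'F, hgZ.congr hF'g.symm⟩

theorem exists_extension_iUnion_gridCell {D : Set (J → ℝ)} (hD : IsClosed D) {F : (J → ℝ) → X}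
    (hF : ContinuousOn F D) {Φ : (J → ℤ) → Set X} (P : Finset (J → ℤ))
    (hΦ : ∀ p ∈ P, CubeConnected (gridDim p) (Φ p)) (hDP : ∀ x ∈ D, gridCarrier x ∉ P)
    (hface : ∀ p ∈ P, ∀ x ∈ gridCellBoundary p,
      x ∈ D ∧ F x ∈ Φ p ∨ gridCarrier x ∈ P ∧ Φ (gridCarrier x) ⊆ Φ p) :
    ∃ F', ContinuousOn F' (D ∪ ⋃ p ∈ P, gridCell p) ∧ EqOn F' F D ∧
      ∀ p ∈ P, MapsTo F' (gridCell p) (Φ p) := by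
  classical
  induction P using Finset.induction_on_max_value (gridDim (J := J)) with
  | empty => exact ⟨F, by simpa using hF, eqOn_refl F D, by simp⟩
  | insert p P hp hmax ih =>
    rw [Finset.forall_mem_insert] at hΦ hface
    have hDP' : ∀ x ∈ D, gridCarrier x ≠ p ∧ gridCarrier x ∉ P := fun x hx => by
      simpa using hDP x hx
    have mem_P : ∀ x, gridCarrier x ∈ insert p P → gridCarrier x ≠ p → gridCarrier x ∈ P :=
      fun x hx hne => (Finset.mem_insert.1 hx).resolve_left hne
    have carrier_ne : ∀ q ∈ P, ∀ x ∈ gridCell q, gridCarrier x ≠ p := by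
      rintro q hq x hx rfl
      have hne : gridCarrier x ≠ q := fun h => hp (h ▸ hq)
      exact (hmax q hq).not_gt (gridDim_gridCarrier_lt ⟨hx, hne⟩)
    obtain ⟨F₁, hF₁, hF₁D, hF₁Φ⟩ := ih hΦ.2 (fun x hx => (hDP' x hx).2) fun q hq x hx =>
      (hface.2 q hq x hx).imp_right fun h => ⟨mem_P x h.1 (carrier_ne q hq x hx.1), h.2⟩
    let C := D ∪ ⋃ q ∈ P, gridCell q
    have boundary_p : ∀ x ∈ gridCellBoundary p, x ∈ C ∧ F₁ x ∈ Φ p := by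
      intro x hx
      rcases hface.1 x hx with ⟨hxD, hFx⟩ | ⟨hxP, hsub⟩
      · exact ⟨.inl hxD, hF₁D hxD ▸ hFx⟩
      · have hxP := mem_P x hxP hx.2
        exact ⟨.inr (mem_biUnion hxP (mem_gridCell_gridCarrier x)),
          hsub (hF₁Φ _ hxP (mem_gridCell_gridCarrier x))⟩
    have hCp : C ∩ gridCell p = gridCellBoundary p := by
      refine Subset.antisymm ?_ fun x hx => ⟨(boundary_p x hx).1, hx.1⟩
      rintro x ⟨hxD | hxP, hxp⟩
      · exact ⟨hxp, (hDP' x hxD).1⟩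
      · obtain ⟨q, hq, hxq⟩ := mem_iUnion₂.1 hxP
        exact ⟨hxp, carrier_ne q hq x hxq⟩
    obtain ⟨F', hF', hF'F₁, hF'Φ⟩ := CubeConnected.exists_extension_union_gridCell
      (hD.union (P.finite_toSet.isClosed_biUnion fun q _ => isClosed_gridCell q)) hF₁ hCp hΦ.1
      fun x hx => (boundary_p x hx).2
    refine ⟨F', ?_, (hF'F₁.mono subset_union_left).trans hF₁D, ?_⟩
    · rwa [Finset.set_biUnion_insert, union_comm (gridCell p), ← union_assoc]
    · exact (Finset.forall_mem_insert _ _ _).2 ⟨hF'Φ, fun q hq =>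
        (hF₁Φ q hq).congr fun x hx => (hF'F₁ (.inr (mem_biUnion hq hx))).symm⟩

theorem exists_extension_prism {Q Q' : Set (J → ℝ)} (hQ : IsCubical Q)
    (hbdd : Bornology.IsBounded Q) (hQ' : IsCubical Q') (hQ'Q : Q' ⊆ Q) {m : ℕ}
    (hdim : ∀ x ∈ Q, gridDim (gridCarrier x) < m) {A B : Set X} (hB : CubeConnected m B)
    (hAB : ∀ j < m, CubeConnected j (A ∩ B)) {g : (J → ℝ) → X} (hg : ContinuousOn g Q)
    (hgA : MapsTo g Q' A) (hgB : ∀ x ∈ Q \ Q', MapsTo g (gridCell (gridCarrier x)) B) :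
    ∃ F, ContinuousOn F (prismBase Q Q' ∪ ⋃ p ∈ prismCells Q Q', gridCell p) ∧
      EqOn F (fun z => g (z ∘ some)) (prismBase Q Q') ∧
      ∀ p ∈ prismCells Q Q', MapsTo F (gridCell p) (if p none = 1 then B else A ∩ B) := by
  let Φ : (Option J → ℤ) → Set X := fun p => if p none = 1 then B else A ∩ B
  have hP := finite_prismCells hbdd Q'
  have hΦ : ∀ p ∈ hP.toFinset, CubeConnected (gridDim p) (Φ p) := by
    intro p hp
    obtain ⟨h12, x, hx, hxp⟩ := hP.mem_toFinset.1 hp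
    have hlt : gridDim (p ∘ some) < m := hxp ▸ hdim x hx.1
    rcases h12 with h | h
    · simpa [Φ, h] using hB.mono (by rw [gridDim_option, h, if_pos odd_one]; omega)
    · have : gridDim p < m := by simpa [gridDim_option, h, Int.odd_iff]
      simpa [Φ, h] using hAB _ this
  have hface : ∀ p ∈ hP.toFinset, ∀ z ∈ gridCellBoundary p,
      z ∈ prismBase Q Q' ∧ g (z ∘ some) ∈ Φ p ∨
        gridCarrier z ∈ hP.toFinset ∧ Φ (gridCarrier z) ⊆ Φ p := by
    intro p hp z hz
    obtain ⟨h12, x, hx, hxp⟩ := hP.mem_toFinset.1 hp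
    have hzx : z ∘ some ∈ gridCell (gridCarrier x) :=
      hxp ▸ ⟨fun i => hz.1.1 (some i), fun i => hz.1.2 (some i)⟩
    rcases mem_prismBase_or_gridCarrier_mem_of_mem_gridCell hQ (hP.mem_toFinset.1 hp) hz.1 with
      ⟨hzD, top⟩ | ⟨hzP, top⟩
    · refine .inl ⟨hzD, ?_⟩
      rcases h12 with h | h
      · simpa [Φ, h] using hgB x hx hzx
      · simpa [Φ, h] using ⟨hgA (top h), hgB x hx hzx⟩
    · refine .inr ⟨hP.mem_toFinset.2 hzP, ?_⟩
      rcases h12 with h | h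
      · simp only [Φ, h, if_true]
        split_ifs
        exacts [subset_rfl, inter_subset_right]
      · simp [Φ, h, top h]
  have base_maps : MapsTo (fun z : Option J → ℝ => z ∘ some) (prismBase Q Q') Q :=
    fun z hz => hz.elim And.right fun h => hQ'Q h.2
  simpa [Φ, Function.comp_def] using exists_extension_iUnion_gridCell
    (isClosed_prismBase (hQ.isClosed hbdd) (hQ'.isClosed (hbdd.subset hQ'Q)))
    (hg.comp (by fun_prop) base_maps) hP.toFinset hΦ
    (fun z hz => hP.mem_toFinset.not.2 (gridCarrier_notMem_prismCells hQ' hz)) hface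

theorem exists_homotopy_of_isCubical {Q Q' : Set (J → ℝ)} (hQ : IsCubical Q)
    (hbdd : Bornology.IsBounded Q) (hQ' : IsCubical Q') (hQ'Q : Q' ⊆ Q) {m : ℕ}
    (hdim : ∀ x ∈ Q, gridDim (gridCarrier x) < m) {A B : Set X} (hB : CubeConnected m B)
    (hAB : ∀ j < m, CubeConnected j (A ∩ B)) {g : (J → ℝ) → X} (hg : ContinuousOn g Q)
    (hgA : MapsTo g Q' A) (hgB : ∀ x ∈ Q \ Q', MapsTo g (gridCell (gridCarrier x)) B) :
    ∃ H : ℝ × (J → ℝ) → X, ContinuousOn H (Icc 0 1 ×ˢ Q) ∧ MapsTo H (Icc 0 1 ×ˢ Q) (A ∪ B) ∧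
      ∀ x ∈ Q, H (0, x) = g x ∧ H (1, x) ∈ A := by
  obtain ⟨F, hF, hF_base, hF_cells⟩ :=
    exists_extension_prism hQ hbdd hQ' hQ'Q hdim hB hAB hg hgA hgB
  let cyl : ℝ × (J → ℝ) → Option J → ℝ := fun q i => i.elim q.1 q.2
  have hcyl : Continuous cyl := continuous_pi fun i => by
    cases i <;> simp only [cyl, Option.elim] <;> fun_prop
  have cyl_mem : ∀ q ∈ Icc (0 : ℝ) 1 ×ˢ Q,
      cyl q ∈ prismBase Q Q' ∨ gridCarrier (cyl q) ∈ prismCells Q Q' :=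
    fun q hq => mem_prismBase_or_gridCarrier_mem_prismCells hq.1 hq.2
  have F_cell : ∀ z : Option J → ℝ, gridCarrier z ∈ prismCells Q Q' →
      F z ∈ if gridCarrier z none = 1 then B else A ∩ B :=
    fun z hz => hF_cells _ hz (mem_gridCell_gridCarrier z)
  refine ⟨F ∘ cyl, hF.comp hcyl.continuousOn fun q hq => (cyl_mem q hq).imp_right fun h =>
    mem_biUnion h (mem_gridCell_gridCarrier _), fun q hq => ?_, fun x hx =>
    ⟨hF_base (.inl ⟨rfl, hx⟩), ?_⟩⟩
  · rcases cyl_mem q hq with h | h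
    · rw [Function.comp_apply, hF_base h]
      by_cases hQ' : q.2 ∈ Q'
      · exact .inl (hgA hQ')
      · exact .inr (hgB q.2 ⟨hq.2, hQ'⟩ (mem_gridCell_gridCarrier _))
    · have := F_cell _ h
      split_ifs at this
      exacts [.inr this, .inr this.2]
  · rcases cyl_mem (1, x) ⟨right_mem_Icc.2 zero_le_one, hx⟩ with h | h
    · have hxQ' : x ∈ Q' := (h.resolve_left fun h0 => one_ne_zero h0.1).2
      rw [Function.comp_apply, hF_base h]
      exact hgA hxQ'
    · have hcar : gridCarrier (cyl (1, x)) none ≠ 1 := by simp [gridCarrier, cyl]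
      have := F_cell _ h
      rw [if_neg hcar] at this
      exact this.1

end Gluing

section Nerve

open Set Metric
open scoped Finset

variable {X : Type*} [TopologicalSpace X]

theorem dist_le_one_of_mem_gridCell {J : Type*} [Fintype J] {p : J → ℤ} {x y : J → ℝ}
    (hx : x ∈ gridCell p) (hy : y ∈ gridCell p) : dist x y ≤ 1 :=
  (dist_pi_le_iff zero_le_one).2 fun i => by
    refine (Real.dist_le_of_mem_Icc ⟨hx.1 i, hx.2 i⟩ ⟨hy.1 i, hy.2 i⟩).trans ?_
    have : (p i + 1) / 2 - p i / 2 ≤ 1 := by omega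
    dsimp only
    exact_mod_cast this

theorem exists_grid_subordinate {J κ : Type*} [Finite J] {s : Set (J → ℝ)} (hs : IsCompact s)
    {f : (J → ℝ) → X} (hf : ContinuousOn f s) {U : κ → Set X} (hU : ∀ k, IsOpen (U k))
    (hfU : MapsTo f s (⋃ k, U k)) : ∃ N : ℕ, 0 < N ∧ ∀ x, (N : ℝ)⁻¹ • x ∈ s →
      ∃ k, ∀ y ∈ gridCell (gridCarrier x), (N : ℝ)⁻¹ • y ∈ s → f ((N : ℝ)⁻¹ • y) ∈ U k := by
  cases nonempty_fintype J
  choose O hO hOU using fun k => continuousOn_iff'.1 hf (U k) (hU k)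
  have hcover : s ⊆ ⋃ k, O k := fun x hx => by
    obtain ⟨k, hk⟩ := mem_iUnion.1 (hfU hx)
    exact mem_iUnion.2 ⟨k, ((hOU k).le ⟨hk, hx⟩).1⟩
  obtain ⟨δ, hδ, hball⟩ := lebesgue_number_lemma_of_metric hs hO hcover
  obtain ⟨N, hN⟩ := exists_nat_gt δ⁻¹
  have hN0 : (0 : ℝ) < N := (inv_pos.2 hδ).trans hN
  refine ⟨N, by exact_mod_cast hN0, fun x hx => ?_⟩
  obtain ⟨k, hk⟩ := hball _ hx
  refine ⟨k, fun y hy hys => ((hOU k).ge ⟨hk ?_, hys⟩).1⟩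
  calc dist ((N : ℝ)⁻¹ • y) ((N : ℝ)⁻¹ • x)
      = (N : ℝ)⁻¹ * dist y x := by rw [dist_smul₀, Real.norm_of_nonneg (inv_pos.2 hN0).le]
    _ ≤ (N : ℝ)⁻¹ * 1 := by
      gcongr
      exact dist_le_one_of_mem_gridCell hy (mem_gridCell_gridCarrier x)
    _ < δ := by rw [mul_one]; exact inv_lt_of_inv_lt₀ hδ hN

theorem exists_homotopy_of_mapsTo_gridCell {J : Type} [Fintype J] {Q : Set (J → ℝ)}
    (hQ : IsCubical Q) (hbdd : Bornology.IsBounded Q) {m : ℕ}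
    (hdim : ∀ x ∈ Q, gridDim (gridCarrier x) < m) {A B : Set X} (hB : CubeConnected m B)
    (hAB : ∀ j < m, CubeConnected j (A ∩ B)) {g : (J → ℝ) → X} (hg : ContinuousOn g Q)
    (hgAB : ∀ x ∈ Q, MapsTo g (gridCell (gridCarrier x)) A ∨
      MapsTo g (gridCell (gridCarrier x)) B) :
    ∃ H : ℝ × (J → ℝ) → X, ContinuousOn H (Icc 0 1 ×ˢ Q) ∧ MapsTo H (Icc 0 1 ×ˢ Q) (A ∪ B) ∧
      ∀ x ∈ Q, H (0, x) = g x ∧ H (1, x) ∈ A := by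
  let Q' : Set (J → ℝ) := {x ∈ Q | MapsTo g (gridCell (gridCarrier x)) A}
  have hQ' : IsCubical Q' := fun x hx y hy =>
    ⟨hQ x hx.1 hy, hx.2.mono_left (gridCell_gridCarrier_subset hy)⟩
  exact exists_homotopy_of_isCubical hQ hbdd hQ' (sep_subset _ _) hdim hB hAB hg
    (fun x hx => hx.2 (mem_gridCell_gridCarrier x))
    fun x hx => (hgAB x hx.1).resolve_left fun h => hx.2 ⟨hx.1, h⟩

theorem mapsTo_smul_sphere {E : Type*} [SeminormedAddCommGroup E] [NormedSpace ℝ E] {c : ℝ}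
    (hc : 0 ≤ c) (r : ℝ) : MapsTo (fun x : E => c • x) (sphere 0 r) (sphere 0 (c * r)) :=
  fun x hx => by
    rw [mem_sphere_zero_iff_norm, norm_smul, mem_sphere_zero_iff_norm.1 hx, Real.norm_of_nonneg hc]

theorem exists_homotopy_sphere_of_isOpen {J : Type} [Fintype J] {m : ℕ} (hJ : Fintype.card J ≤ m)
    {T A B : Set X} (hA : IsOpen A) (hB : IsOpen B) (hTB : CubeConnected m (T ∩ B))
    (hTAB : ∀ j < m, CubeConnected j (T ∩ (A ∩ B))) {f : (J → ℝ) → X}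
    (hf : ContinuousOn f (sphere 0 1)) (hfT : MapsTo f (sphere 0 1) (T ∩ (A ∪ B))) :
    ∃ H : ℝ × (J → ℝ) → X, ContinuousOn H (Icc 0 1 ×ˢ sphere 0 1) ∧
      MapsTo H (Icc 0 1 ×ˢ sphere 0 1) (T ∩ (A ∪ B)) ∧
      ∀ x ∈ sphere 0 1, H (0, x) = f x ∧ H (1, x) ∈ T ∩ A := by
  obtain ⟨N, hN, hsub⟩ := exists_grid_subordinate (isCompact_sphere 0 1) hf
    (Bool.forall_bool.2 ⟨hB, hA⟩)
    (show MapsTo f _ (⋃ b, cond b A B) from fun x hx => union_eq_iUnion ▸ (hfT hx).2)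
  have hN0 : (0 : ℝ) < N := by exact_mod_cast hN
  let Q : Set (J → ℝ) := sphere 0 N
  have hQ : IsCubical Q := isCubical_sphere hN
  have shrink : MapsTo (fun x : J → ℝ => (N : ℝ)⁻¹ • x) Q (sphere 0 1) := by
    simpa [Q, hN0.ne'] using mapsTo_smul_sphere (E := J → ℝ) (inv_nonneg.2 hN0.le) N
  have expand : MapsTo (fun x : J → ℝ => (N : ℝ) • x) (sphere 0 1) Q := by
    simpa [Q] using mapsTo_smul_sphere (E := J → ℝ) hN0.le 1
  have hcells : ∀ x ∈ Q, MapsTo (fun x => f ((N : ℝ)⁻¹ • x)) (gridCell (gridCarrier x)) (T ∩ A) ∨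
      MapsTo (fun x => f ((N : ℝ)⁻¹ • x)) (gridCell (gridCarrier x)) (T ∩ B) := fun x hx => by
    obtain ⟨b, hb⟩ := hsub x (shrink hx)
    have hmem : ∀ y ∈ gridCell (gridCarrier x), f ((N : ℝ)⁻¹ • y) ∈ T ∩ cond b A B :=
      fun y hy => have := shrink (hQ x hx hy); ⟨(hfT this).1, hb y hy this⟩
    cases b
    exacts [.inr hmem, .inl hmem]
  obtain ⟨H, hH, hHT, hends⟩ := exists_homotopy_of_mapsTo_gridCell hQ isBounded_sphere
    (fun x hx => (gridDim_gridCarrier_lt_card hN hx).trans_le hJ) hTB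
    (fun j hj => inter_inter_distrib_left T A B ▸ hTAB j hj) (hf.comp (by fun_prop) shrink) hcells
  have expand_prod : MapsTo (fun q : ℝ × (J → ℝ) => (q.1, (N : ℝ) • q.2))
      (Icc 0 1 ×ˢ sphere 0 1) (Icc 0 1 ×ˢ Q) := fun q hq => ⟨hq.1, expand hq.2⟩
  refine ⟨fun q => H (q.1, (N : ℝ) • q.2), hH.comp (by fun_prop) expand_prod,
    inter_union_distrib_left T A B ▸ hHT.comp expand_prod, fun x hx => ⟨?_, ?_⟩⟩
  · simp [(hends _ (expand hx)).1, smul_smul, hN0.ne']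
  · exact (hends _ (expand hx)).2

theorem CubeConnected.inter_union {m : ℕ} {T A B : Set X} (hA : IsOpen A) (hB : IsOpen B)
    (hTA : CubeConnected m (T ∩ A)) (hTB : CubeConnected m (T ∩ B))
    (hTAB : ∀ j < m, CubeConnected j (T ∩ (A ∩ B))) : CubeConnected m (T ∩ (A ∪ B)) := by
  have hsub : T ∩ A ⊆ T ∩ (A ∪ B) := inter_subset_inter_right T subset_union_left
  refine ⟨hTA.1.mono hsub, fun J _ hJ f hf hfT => ?_⟩
  obtain ⟨H, hH, hHT, hends⟩ := exists_homotopy_sphere_of_isOpen hJ hA hB hTB hTAB hf hfT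
  obtain ⟨g, hg, hgT, hgH⟩ := hTA.2 J hJ (fun x => H (1, x))
    (hH.comp (by fun_prop) fun x hx => ⟨right_mem_Icc.2 zero_le_one, hx⟩)
    fun x hx => (hends x hx).2
  have hend : ExtendsToCube (fun x => H (1, x)) (T ∩ (A ∪ B)) := ⟨g, hg, hgT.mono_right hsub, hgH⟩
  obtain ⟨e, he, heT, heH⟩ := hend.of_homotopy hH hHT
  exact ⟨e, he, heT, heH.trans fun x hx => (hends x hx).1⟩

theorem CubeConnected.inter_biUnion {I : Type*} {T : Set X} {U : I → Set X}
    (hU : ∀ i, IsOpen (U i)) {s : Finset I} (hs : s.Nonempty) {m : ℕ}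
    (h : ∀ A ⊆ s, A.Nonempty → ∀ j, j + #A ≤ m + 1 → CubeConnected j (T ∩ ⋂ i ∈ A, U i)) :
    CubeConnected m (T ∩ ⋃ i ∈ s, U i) := by
  classical
  induction hs using Finset.Nonempty.cons_induction generalizing T m with
  | singleton i => simpa using h {i} subset_rfl (by simp) m (by simp)
  | cons i s hi _ ih =>
    rw [Finset.cons_eq_insert] at h ⊢
    rw [Finset.set_biUnion_insert]
    refine CubeConnected.inter_union (hU i) (isOpen_biUnion fun j _ => hU j) ?_
      (ih fun A hA => h A (hA.trans (Finset.subset_insert i s))) fun j hj => ?_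
    · simpa using h {i} (by simp) (by simp) m (by simp)
    · rw [← inter_assoc]
      refine ih fun A hA _ j' hj' => ?_
      have hiA : #(insert i A) = #A + 1 := Finset.card_insert_of_notMem fun hmem => hi (hA hmem)
      simpa [inter_assoc] using
        h (insert i A) (Finset.insert_subset_insert i hA) (by simp) j' (by omega)

end Nerve

section CliqueComplex

open Set
open scoped Finset

variable {V : Type*} {G : SimpleGraph V} {S C : Set V}

/-- The full subcomplex on the vertex set `S` of the clique complex of `G`. -/
def cliquesIn (G : SimpleGraph V) (S : Set V) : Set (Finset V) := {σ | ↑σ ⊆ S ∧ G.IsClique σ}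

/-- The graph of edges of a simplicial complex. -/
def oneSkeleton [DecidableEq V] (K : Set (Finset V)) : SimpleGraph V where
  Adj v w := v ≠ w ∧ {v, w} ∈ K
  symm := ⟨fun v w h => ⟨h.1.symm, Finset.pair_comm v w ▸ h.2⟩⟩
  loopless := ⟨fun _ h => h.1 rfl⟩

theorem mem_insert_neighborSet_oneSkeleton [DecidableEq V] {K : Set (Finset V)}
    (hvert : ∀ v, {v} ∈ K) {v w : V} :
    w ∈ insert v ((oneSkeleton K).neighborSet v) ↔ {v, w} ∈ K := by
  by_cases h : w = v
  · simpa [h] using hvert v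
  · simp [oneSkeleton, h, Ne.symm h]

theorem cliquesIn_oneSkeleton_univ [DecidableEq V] {K : Set (Finset V)}
    (hdown : ∀ σ ∈ K, ∀ τ ⊆ σ, τ ∈ K)
    (hflag : ∀ σ : Finset V, (∀ v ∈ σ, ∀ w ∈ σ, {v, w} ∈ K) → σ ∈ K)
    (hvert : ∀ v, {v} ∈ K) : cliquesIn (oneSkeleton K) univ = K := by
  ext σ
  refine ⟨fun hσ => hflag σ fun v hv w hw => ?_, fun hσ => ⟨subset_univ _, fun v hv w hw hvw =>
    ⟨hvw, hdown σ hσ _ (Finset.insert_subset hv (Finset.singleton_subset_iff.2 hw))⟩⟩⟩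
  rw [← mem_insert_neighborSet_oneSkeleton hvert]
  exact or_iff_not_imp_left.2 fun hne => hσ.2 hv hw (Ne.symm hne)

/-- The set of functions all of whose maxima lie in `C`. For `C` the closed neighbourhood of a
vertex `v`, it meets the realization of a clique complex in a thickening of the star of `v`. -/
def argmaxIn (C : Set V) : Set (V → ℝ) := {w | ∀ u, (∀ u', w u' ≤ w u) → u ∈ C}

theorem isOpen_argmaxIn [Finite V] (C : Set V) : IsOpen (argmaxIn C) := by
  have : argmaxIn C = ⋂ u ∈ Cᶜ, ⋃ u', {w | w u < w u'} := by
    ext w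
    simp only [argmaxIn, mem_ofPred_eq, mem_iInter, mem_iUnion, mem_compl_iff]
    exact forall_congr' fun u => by rw [← not_imp_not]; push Not; rfl
  rw [this]
  exact (Set.toFinite _).isOpen_biInter fun u _ =>
    isOpen_iUnion fun u' => isOpen_lt (continuous_apply u) (continuous_apply u')

theorem biInter_argmaxIn {I : Type*} (A : Finset I) (N : I → Set V) :
    ⋂ i ∈ A, argmaxIn (N i) = argmaxIn (⋂ i ∈ A, N i) := by
  ext w
  simp only [argmaxIn, mem_iInter, mem_ofPred_eq]
  exact ⟨fun h u hu i hi => h i hi u hu, fun h i hi u hu => h u hu i hi⟩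

variable [Fintype V]

theorem mem_realization_cliquesIn {w : V → ℝ} : w ∈ realization (cliquesIn G S) ↔
    w ∈ stdSimplex ℝ V ∧ w.support ⊆ S ∧ G.IsClique w.support := by
  classical
  constructor
  · rintro ⟨h0, h1, σ, ⟨hσS, hσ⟩, hw⟩
    exact ⟨⟨h0, h1⟩, fun v hv => hσS (hw v hv), hσ.subset hw⟩
  · rintro ⟨⟨h0, h1⟩, hS, hG⟩
    exact ⟨h0, h1, w.support.toFinset, by simpa [cliquesIn] using ⟨hS, hG⟩, by simp⟩

theorem exists_forall_le_and_pos {w : V → ℝ} (hw : w ∈ stdSimplex ℝ V) :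
    ∃ u, (∀ v, w v ≤ w u) ∧ 0 < w u := by
  obtain ⟨v, hv⟩ : ∃ v, 0 < w v := by
    by_contra! h
    linarith [hw.2, Finset.sum_nonpos fun v (_ : v ∈ Finset.univ) => h v]
  have : Nonempty V := ⟨v⟩
  obtain ⟨u, hu⟩ := Finite.exists_max w
  exact ⟨u, hu, hv.trans_le (hu v)⟩

theorem segment_subset_realization_cliquesIn {x y : V → ℝ} (hx : x ∈ stdSimplex ℝ V)
    (hy : y ∈ stdSimplex ℝ V) (hS : x.support ∪ y.support ⊆ S)
    (hG : G.IsClique (x.support ∪ y.support)) :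
    segment ℝ x y ⊆ realization (cliquesIn G S) := by
  intro z hz
  have hsupp : z.support ⊆ x.support ∪ y.support := by
    obtain ⟨a, b, -, -, -, rfl⟩ := hz
    exact (Function.support_add _ _).trans (union_subset_union
      (Function.support_const_smul_subset a x) (Function.support_const_smul_subset b y))
  exact mem_realization_cliquesIn.2
    ⟨(convex_stdSimplex ℝ V).segment_subset hx hy hz, hsupp.trans hS, hG.subset hsupp⟩

/-- The conditional distribution on `C` of a point `w` of the standard simplex, seen as a
probability distribution on the vertices. -/
noncomputable def conditionOn (C : Set V) (w : V → ℝ) : V → ℝ :=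
  (∑ u, C.indicator w u)⁻¹ • C.indicator w

theorem sum_indicator_pos {w : V → ℝ} (hw : w ∈ stdSimplex ℝ V) (hwC : w ∈ argmaxIn C) :
    0 < ∑ u, C.indicator w u := by
  obtain ⟨u, hu, hpos⟩ := exists_forall_le_and_pos hw
  refine Finset.sum_pos' (fun v _ => indicator_nonneg (fun v _ => hw.1 v) v)
    ⟨u, Finset.mem_univ u, ?_⟩
  rwa [indicator_of_mem (hwC u hu)]

theorem support_conditionOn_subset (w : V → ℝ) : (conditionOn C w).support ⊆ w.support ∩ C :=
  (Function.support_const_smul_subset _ _).trans (inter_comm C _ ▸ support_indicator.le)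

theorem conditionOn_mem_stdSimplex {w : V → ℝ} (hw : w ∈ stdSimplex ℝ V) (hwC : w ∈ argmaxIn C) :
    conditionOn C w ∈ stdSimplex ℝ V := by
  have hpos := sum_indicator_pos hw hwC
  refine ⟨fun u => mul_nonneg (inv_nonneg.2 hpos.le) (indicator_nonneg (fun v _ => hw.1 v) u), ?_⟩
  simp only [conditionOn, Pi.smul_apply, smul_eq_mul, ← Finset.mul_sum]
  exact inv_mul_cancel₀ hpos.ne'

theorem continuousOn_conditionOn :
    ContinuousOn (conditionOn C) (stdSimplex ℝ V ∩ argmaxIn C) := by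
  classical
  have hind : Continuous (C.indicator : (V → ℝ) → V → ℝ) := continuous_pi fun u => by
    by_cases hu : u ∈ C <;> simp only [indicator, hu, if_true, if_false] <;> fun_prop
  have hsum : Continuous fun w : V → ℝ => ∑ u, C.indicator w u :=
    continuous_finsetSum _ fun u _ => (continuous_apply u).comp hind
  exact (hsum.continuousOn.inv₀ fun w hw => (sum_indicator_pos hw.1 hw.2).ne').smul
    hind.continuousOn

theorem segment_conditionOn_subset_argmaxIn {w : V → ℝ} (hw : w ∈ stdSimplex ℝ V)
    (hwC : w ∈ argmaxIn C) : segment ℝ w (conditionOn C w) ⊆ argmaxIn C := by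
  rintro _ ⟨a, b, ha, hb, hab, rfl⟩ u hmax
  by_contra hu
  obtain ⟨u₀, hu₀, hpos⟩ := exists_forall_le_and_pos hw
  have cond_u : conditionOn C w u = 0 := by simp [conditionOn, hu]
  have cond_u₀ : 0 < conditionOn C w u₀ := by
    have := inv_pos.2 (sum_indicator_pos hw hwC)
    simp only [conditionOn, Pi.smul_apply, indicator_of_mem (hwC u₀ hu₀), smul_eq_mul]
    positivity
  have hlt : w u < w u₀ := lt_of_not_ge fun hle => hu (hwC u fun v => (hu₀ v).trans hle)
  have hle := hmax u₀
  simp only [Pi.add_apply, Pi.smul_apply, smul_eq_mul, cond_u, mul_zero, add_zero] at hle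
  rcases ha.eq_or_lt with rfl | ha
  · rw [zero_add] at hab
    subst hab
    linarith
  · nlinarith [mul_lt_mul_of_pos_left hlt ha, mul_nonneg hb cond_u₀.le]

theorem CubeConnected.realization_inter_argmaxIn {m : ℕ}
    (h : CubeConnected m (realization (cliquesIn G (S ∩ C)))) :
    CubeConnected m (realization (cliquesIn G S) ∩ argmaxIn C) := by
  refine h.of_segment (fun w hw => ?_)
    (continuousOn_conditionOn.mono fun w hw => ⟨(mem_realization_cliquesIn.1 hw.1).1, hw.2⟩)
    (fun w ⟨hw, hwC⟩ => ?_) fun w ⟨hw, hwC⟩ =>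
    subset_inter ?_ (segment_conditionOn_subset_argmaxIn (mem_realization_cliquesIn.1 hw).1 hwC)
  · obtain ⟨hw, hS, hG⟩ := mem_realization_cliquesIn.1 hw
    obtain ⟨u₀, -, hu₀⟩ := exists_forall_le_and_pos hw
    exact ⟨mem_realization_cliquesIn.2 ⟨hw, hS.trans inter_subset_left, hG⟩,
      fun u hu => (hS (hu₀.trans_le (hu u₀)).ne').2⟩
  · obtain ⟨hw, hS, hG⟩ := mem_realization_cliquesIn.1 hw
    have hsupp := support_conditionOn_subset (C := C) w
    exact mem_realization_cliquesIn.2 ⟨conditionOn_mem_stdSimplex hw hwC,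
      hsupp.trans (inter_subset_inter_left C hS), hG.subset (hsupp.trans inter_subset_left)⟩
  · obtain ⟨hw, hS, hG⟩ := mem_realization_cliquesIn.1 hw
    have hsupp : w.support ∪ (conditionOn C w).support = w.support :=
      union_eq_left.2 ((support_conditionOn_subset w).trans inter_subset_left)
    exact segment_subset_realization_cliquesIn hw (conditionOn_mem_stdSimplex hw hwC)
      (hsupp.symm ▸ hS) (hsupp.symm ▸ hG)

theorem CubeConnected.realization_of_star {v : V} (hv : v ∈ S)
    (hS : ∀ u ∈ S, u ∈ insert v (G.neighborSet v)) (m : ℕ) :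
    CubeConnected m (realization (cliquesIn G S)) := by
  classical
  have hcone : ∀ w ∈ realization (cliquesIn G S),
      segment ℝ w (Pi.single v 1) ⊆ realization (cliquesIn G S) := fun w hw => by
    obtain ⟨hw, hwS, hG⟩ := mem_realization_cliquesIn.1 hw
    have hsupp : Function.support (Pi.single v 1 : V → ℝ) = {v} := by simp
    refine segment_subset_realization_cliquesIn hw (single_mem_stdSimplex ℝ v) ?_ ?_ <;>
      rw [hsupp, union_singleton]
    · exact insert_subset hv hwS
    · exact hG.insert fun u hu hne => (hS u (hwS hu)).resolve_left hne.symm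
  have hmem : Pi.single v 1 ∈ realization (cliquesIn G S) := mem_realization_cliquesIn.2
    ⟨single_mem_stdSimplex ℝ v, by simpa, by simp⟩
  exact (CubeConnected.singleton m _).of_segment (singleton_subset_iff.2 hmem)
    continuousOn_const (fun _ _ => rfl) hcone

theorem CubeConnected.realization_of_common_neighbor {m : ℕ}
    (h : ∀ W : Finset V, ↑W ⊆ S → #W ≤ 2 * m → ∃ v ∈ S, ∀ w ∈ W, w ∈ insert v (G.neighborSet v)) :
    CubeConnected m (realization (cliquesIn G S)) := by
  classical
  induction m using Nat.strong_induction_on generalizing S with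
  | _ m ih =>
  let N : V → Set V := fun v => insert v (G.neighborSet v)
  have N_comm : ∀ {u v}, u ∈ N v → v ∈ N u := fun {u v} hu =>
    hu.imp Eq.symm fun hadj => hadj.symm
  obtain ⟨v₀, hv₀, -⟩ := h ∅ (by simp) (by simp)
  have hcover : realization (cliquesIn G S) ⊆ ⋃ v ∈ S.toFinset, argmaxIn (N v) := fun w hw => by
    obtain ⟨hw, hS, hG⟩ := mem_realization_cliquesIn.1 hw
    obtain ⟨v, -, hpos⟩ := exists_forall_le_and_pos hw
    refine mem_biUnion (x := v) (by simpa using hS hpos.ne') fun u hu => ?_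
    refine or_iff_not_imp_left.2 fun hne => hG hpos.ne' ?_ (Ne.symm hne)
    exact (hpos.trans_le (hu v)).ne'
  rw [← inter_eq_left.2 hcover]
  refine CubeConnected.inter_biUnion (fun v => isOpen_argmaxIn (N v)) ⟨v₀, by simpa⟩ ?_
  intro A hAS hA j hj
  have hAS : ↑A ⊆ S := by simpa using hAS
  rw [biInter_argmaxIn]
  refine CubeConnected.realization_inter_argmaxIn ?_
  rcases Nat.eq_or_lt_of_le hA.card_pos with hA1 | hA2
  · obtain ⟨v, rfl⟩ := Finset.card_eq_one.1 hA1.symm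
    have hv : v ∈ S ∩ ⋂ i ∈ ({v} : Finset V), N i := ⟨hAS (by simp), by simp [N]⟩
    exact CubeConnected.realization_of_star hv
      (fun u hu => by simpa [N] using hu.2) j
  · refine ih j (by omega) fun W hW hWj => ?_
    obtain ⟨v, hv, hvW⟩ := h (W ∪ A)
      (by rw [Finset.coe_union]; exact union_subset (hW.trans inter_subset_left) hAS)
      ((Finset.card_union_le W A).trans (by omega))
    exact ⟨v, ⟨hv, mem_iInter₂.2 fun a ha => N_comm (hvW a (Finset.mem_union_right W ha))⟩,
      fun w hw => hvW w (Finset.mem_union_left A hw)⟩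

end CliqueComplex

/-- If `Σ` is a flag simplicial complex (every clique of the 1-skeleton is a face) in which
every set of at most `2k-2` vertices has a common neighbor, then `|Σ|` is
`(k-2)`-connected. -/
theorem stmt18 {V : Type} [Fintype V] [DecidableEq V] (k : ℕ) (hk : 2 ≤ k)
    (K : Set (Finset V)) (hdown : ∀ σ ∈ K, ∀ τ ⊆ σ, τ ∈ K)
    (hflag : ∀ σ : Finset V, (∀ v ∈ σ, ∀ w ∈ σ, ({v, w} : Finset V) ∈ K) → σ ∈ K)
    (hnbr : ∀ W : Finset V, W.card ≤ 2 * k - 2 →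
      ∃ v, ∀ w ∈ W, ({v, w} : Finset V) ∈ K) :
    IsNConnected ((k : ℤ) - 2) ↥(realization K) := by
  have hvert : ∀ v, {v} ∈ K := fun v => by
    obtain ⟨u, hu⟩ := hnbr {v} (by rw [Finset.card_singleton]; omega)
    exact hdown _ (hu v (by simp)) _ (by simp)
  have hconn : CubeConnected (k - 1) (realization (cliquesIn (oneSkeleton K) Set.univ)) := by
    refine CubeConnected.realization_of_common_neighbor fun W _ hW => ?_
    obtain ⟨v, hv⟩ := hnbr W (by omega)
    exact ⟨v, Set.mem_univ v, fun w hw => (mem_insert_neighborSet_oneSkeleton hvert).2 (hv w hw)⟩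
  rw [cliquesIn_oneSkeleton_univ hdown hflag hvert] at hconn
  have hdim : (k : ℤ) - 2 = (k - 1 : ℕ) - 1 := by omega
  exact hdim ▸ hconn.isNConnected
end
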